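/- Suppose 0 < 1/n < 1/q ≪ ε ≪ ε' ≪ 1/t, 1/k and k ∈ ℕ∖{1}. Suppose P = P(k−1, a) is an (ε, a, d_{a,k})-equitable partition of a k-graph H on a vertex set V with |V| = n and a ∈ [t]^{k−1}. Then, for a set Q chosen uniformly at random from the q-element subsets of V, with probability at least 1 − e^{−ε³q} there exists an (ε', a, d_{a,k})-equitable family of partitions of the induced k-graph H[Q]. -/

import Mathlib

namespace HypReg

open Finset

attribute [local instance 10] Classical.propDecidable

noncomputable section

variable {V : Type*} [DecidableEq V]

/-- Representation of a 1-graph: the set of singletons of `U`. -/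
def sing (U : Finset V) : Finset (Finset V) :=
  U.image fun v => ({v} : Finset V)

/-- `Kset W j i B`: the i-element subsets of `W` all of whose j-element subsets lie in `B`. -/
def Kset (W : Finset V) (j i : ℕ) (B : Finset (Finset V)) : Finset (Finset V) :=
  (W.powersetCard i).filter fun S => ∀ T ∈ S.powersetCard j, T ∈ B

/-- Clique operator which, at level 1, uses the ambient family `cr` of crossing i-sets. -/
def KsetC (W : Finset V) (cr : Finset (Finset V)) (j i : ℕ) (B : Finset (Finset V)) :
    Finset (Finset V) :=
  if j = 1 then cr.filter fun S => ∀ v ∈ S, ({v} : Finset V) ∈ B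
  else Kset W j i B

/-- `A` (a (j+1)-graph) is (ε,d)-regular with respect to the j-graph `B` (plain clique sets). -/
def RegPair (W : Finset V) (j : ℕ) (ε d : ℝ) (A B : Finset (Finset V)) : Prop :=
  ∀ Q ⊆ B, ε * ((Kset W j (j+1) B).card : ℝ) ≤ ((Kset W j (j+1) Q).card : ℝ) →
    |((A ∩ Kset W j (j+1) Q).card : ℝ) - d * ((Kset W j (j+1) Q).card : ℝ)|
      ≤ ε * ((Kset W j (j+1) Q).card : ℝ)

/-- (ε,d)-regularity with crossing-aware clique sets. -/
def RegPairC (W : Finset V) (cr : Finset (Finset V)) (j : ℕ) (ε d : ℝ)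
    (A B : Finset (Finset V)) : Prop :=
  ∀ Q ⊆ B, ε * ((KsetC W cr j (j+1) B).card : ℝ) ≤ ((KsetC W cr j (j+1) Q).card : ℝ) →
    |((A ∩ KsetC W cr j (j+1) Q).card : ℝ) - d * ((KsetC W cr j (j+1) Q).card : ℝ)|
      ≤ ε * ((KsetC W cr j (j+1) Q).card : ℝ)

/-- Relative density `d(A | B)` of the (j+1)-graph `A` w.r.t. the j-graph `B`. -/
def dens (W : Finset V) (cr : Finset (Finset V)) (j : ℕ) (A B : Finset (Finset V)) : ℝ :=
  if (KsetC W cr j (j+1) B).card = 0 then 0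
  else ((A ∩ KsetC W cr j (j+1) B).card : ℝ) / ((KsetC W cr j (j+1) B).card : ℝ)

/-- `H` is a k-graph on the vertex set `W`. -/
def IsKGraph (W : Finset V) (k : ℕ) (H : Finset (Finset V)) : Prop :=
  ∀ e ∈ H, e ⊆ W ∧ e.card = k

/-- symmetric difference of two hypergraphs -/
def sd (A B : Finset (Finset V)) : Finset (Finset V) := (A \ B) ∪ (B \ A)

/-- A (candidate) family of partitions: the ground set, the class of each vertex and,
for each level `j ≥ 2`, the class of each crossing j-set. -/
structure PartFam (V : Type*) [DecidableEq V] where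
  gnd : Finset V
  vClass : V → Finset V
  cls : ℕ → Finset V → Finset (Finset V)

namespace PartFam

variable (F : PartFam V)

/-- crossing i-sets -/
def cross (i : ℕ) : Finset (Finset V) :=
  (F.gnd.powersetCard i).filter fun S =>
    ∀ u ∈ S, ∀ v ∈ S, u ≠ v → F.vClass u ≠ F.vClass v

/-- the level-j polyad of a vertex set `J` -/
def polyad (j : ℕ) (J : Finset V) : Finset (Finset V) :=
  if j = 1 then sing (J.sup F.vClass) else (J.powersetCard j).sup (F.cls j)

/-- the clique set `K_j(P̂^{(j-1)}(J))` of the (j−1)-polyad of a crossing j-set `J` -/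
def polyCliques (j : ℕ) (J : Finset V) : Finset (Finset V) :=
  KsetC F.gnd (F.cross j) (j-1) j (F.polyad (j-1) J)

/-- `F` is a family of partitions `P(k−1, a)`. -/
def IsFamily (k : ℕ) (a : ℕ → ℕ) : Prop :=
  (∀ v ∈ F.gnd, v ∈ F.vClass v) ∧
  (∀ v ∈ F.gnd, F.vClass v ⊆ F.gnd) ∧
  (∀ u ∈ F.gnd, ∀ v ∈ F.gnd, u ∈ F.vClass v → F.vClass u = F.vClass v) ∧
  (F.gnd.image F.vClass).card = a 1 ∧ k ≤ a 1 ∧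
  ∀ j, 2 ≤ j → j ≤ k - 1 →
    (∀ J ∈ F.cross j, J ∈ F.cls j J) ∧
    (∀ J ∈ F.cross j, ∀ I ∈ F.cls j J, F.cls j I = F.cls j J) ∧
    (∀ J ∈ F.cross j, F.cls j J ⊆ F.polyCliques j J) ∧
    (∀ J ∈ F.cross j, F.polyCliques j J ⊆ F.cross j) ∧
    (∀ J ∈ F.cross j, ((F.polyCliques j J).image (F.cls j)).card = a j)

/-- the regularity condition in the definition of an equitable family of partitions:
all polyad complexes of crossing k-sets are (ε, (1/a_2, …, 1/a_{k−1}))-regular. -/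
def PolyadReg (k : ℕ) (a : ℕ → ℕ) (ε : ℝ) : Prop :=
  ∀ K ∈ F.cross k, ∀ j, 2 ≤ j → j ≤ k - 1 → ∀ J ∈ K.powersetCard j,
    RegPairC F.gnd (F.cross j) (j-1) ε (1 / (a j : ℝ)) (F.polyad j K) (F.polyad (j-1) J)

/-- `(η, ε, a, λ)`-equitable family of partitions -/
def IsEquitable (k : ℕ) (a : ℕ → ℕ) (η ε lam : ℝ) : Prop :=
  1 ≤ η * (a 1 : ℝ) ∧
  (∀ v ∈ F.gnd, |((F.vClass v).card : ℝ) - (F.gnd.card : ℝ) / (a 1 : ℝ)|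
      ≤ lam * (F.gnd.card : ℝ) / (a 1 : ℝ)) ∧
  F.PolyadReg k a ε

/-- `(η, ε, a)`-equitable family of partitions (classes of size ⌊n/a₁⌋ or ⌊n/a₁⌋+1) -/
def IsEquitableE (k : ℕ) (a : ℕ → ℕ) (η ε : ℝ) : Prop :=
  1 ≤ η * (a 1 : ℝ) ∧
  (∀ v ∈ F.gnd, (F.vClass v).card = F.gnd.card / a 1 ∨
      (F.vClass v).card = F.gnd.card / a 1 + 1) ∧
  F.PolyadReg k a ε

/-- `G` is perfectly ε-regular with respect to `F`. -/
def PerfectlyRegular (k : ℕ) (ε : ℝ) (G : Finset (Finset V)) : Prop :=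
  ∀ K ∈ F.cross k, ∃ d : ℝ, 0 ≤ d ∧
    RegPairC F.gnd (F.cross k) (k-1) ε d G (F.polyad (k-1) K)

end PartFam

/-- `a` is a T-bounded vector of length k−1. -/
def BoundedVec (k T : ℕ) (a : ℕ → ℕ) : Prop := ∀ j, 1 ≤ j → j ≤ k - 1 → a j ≤ T

/-- level-j refinement `F^{(j)} ≺ P^{(j)}` between two families of partitions -/
def RefinesAt (F P : PartFam V) (j : ℕ) : Prop :=
  if j = 1 then ∀ v ∈ F.gnd, F.vClass v ⊆ P.vClass v
  else ∀ I ∈ F.cross j,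
    (∃ J ∈ P.cross j, F.cls j I ⊆ P.cls j J) ∨ ∀ S ∈ F.cls j I, S ∉ P.cross j

/-- level-j approximate refinement `F^{(j)} ≺_ν P^{(j)}` -/
def RefinesApproxAt (F P : PartFam V) (j : ℕ) (ν : ℝ) : Prop :=
  if j = 1 then
    ∃ f : Finset V → Finset V,
      (∀ v ∈ F.gnd, f (F.vClass v) ∈ F.gnd.image P.vClass) ∧
      ∑ C ∈ F.gnd.image F.vClass, ((C \ f C).card : ℝ) ≤ ν * (F.gnd.card : ℝ)
  else
    ∃ f : Finset (Finset V) → Finset (Finset V),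
      (∀ I ∈ F.cross j,
        f (F.cls j I) ∈ ((P.cross j).image (P.cls j)) ∪ {F.cross j \ P.cross j}) ∧
      ∑ C ∈ (F.cross j).image (F.cls j), ((C \ f C).card : ℝ) ≤ ν * ((F.cross j).card : ℝ)

/-- The address space: a base set (of class indices) together with a labelling of its subsets. -/
abbrev Addr := Finset ℕ × (Finset ℕ → ℕ)

/-- `x` is an element of the address space `Â(l, j, a)`. -/
def IsAddress (l j : ℕ) (a : ℕ → ℕ) (x : Addr) : Prop :=
  x.1.card = l ∧ (∀ i ∈ x.1, 1 ≤ i ∧ i ≤ a 1) ∧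
  (∀ L : Finset ℕ, L ⊆ x.1 → 2 ≤ L.card → L.card ≤ j → 1 ≤ x.2 L ∧ x.2 L ≤ a L.card) ∧
  (∀ L : Finset ℕ, ¬(L ⊆ x.1 ∧ 2 ≤ L.card ∧ L.card ≤ j) → x.2 L = 0)

/-- restriction `ŷ ≤ x̂` of an address to the base `B`, keeping levels up to `j`. -/
def restrictA (x : Addr) (j : ℕ) (B : Finset ℕ) : Addr :=
  (B, fun L => if L ⊆ B ∧ 2 ≤ L.card ∧ L.card ≤ j then x.2 L else 0)

/-- `d` is a density function of `Â(k, k−1, a)`. -/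
def DensityFun (k : ℕ) (a : ℕ → ℕ) (d : Addr → ℝ) : Prop :=
  ∀ x : Addr, IsAddress k (k-1) a x → 0 ≤ d x ∧ d x ≤ 1

/-- A family of partitions together with an `a`-labelling. -/
structure LabFam (V : Type*) [DecidableEq V] extends PartFam V where
  vIdx : V → ℕ
  lbl : ℕ → Finset V → ℕ

namespace LabFam

variable (F : LabFam V)

/-- `F` is a family of partitions with a legitimate `a`-labelling. -/
def IsLabeled (k : ℕ) (a : ℕ → ℕ) : Prop :=
  F.toPartFam.IsFamily k a ∧
  (∀ v ∈ F.gnd, 1 ≤ F.vIdx v ∧ F.vIdx v ≤ a 1) ∧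
  (∀ u ∈ F.gnd, ∀ v ∈ F.gnd, (F.vIdx u = F.vIdx v ↔ F.vClass u = F.vClass v)) ∧
  ∀ j, 2 ≤ j → j ≤ k - 1 →
    (∀ I ∈ F.toPartFam.cross j, 1 ≤ F.lbl j I ∧ F.lbl j I ≤ a j) ∧
    (∀ I ∈ F.toPartFam.cross j, ∀ I' ∈ F.cls j I, F.lbl j I' = F.lbl j I) ∧
    (∀ I ∈ F.toPartFam.cross j, ∀ I' ∈ F.toPartFam.cross j,
      F.toPartFam.polyad (j-1) I = F.toPartFam.polyad (j-1) I' →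
      F.lbl j I = F.lbl j I' → F.cls j I = F.cls j I')

/-- the address `x̂(L)` (up to level j) of a crossing set `L` -/
def addrOf (j : ℕ) (L : Finset V) : Addr :=
  (L.image F.vIdx,
   fun M => if M ⊆ L.image F.vIdx ∧ 2 ≤ M.card ∧ M.card ≤ j
     then F.lbl M.card (L.filter fun v => F.vIdx v ∈ M) else 0)

/-- the part `P^{(j)}(x̂, b)` -/
def partAt (j : ℕ) (x : Addr) (b : ℕ) : Finset (Finset V) :=
  if j ≤ 1 then (if x.1 = {b} then sing (F.gnd.filter fun v => F.vIdx v = b) else ∅)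
  else (F.toPartFam.cross j).filter fun I => F.addrOf (j-1) I = x ∧ F.lbl j I = b

/-- the polyad `P̂^{(j)}(x̂)` -/
def polyAt (j : ℕ) (x : Addr) : Finset (Finset V) :=
  if j = 1 then sing (F.gnd.filter fun v => F.vIdx v ∈ x.1)
  else (x.1.powersetCard j).sup fun B => F.partAt j (restrictA x (j-1) B) (x.2 B)

/-- `F` is an `(ε, d)`-partition of `H`. -/
def IsDensPartition (k : ℕ) (a : ℕ → ℕ) (ε : ℝ) (d : Addr → ℝ)
    (H : Finset (Finset V)) : Prop :=
  ∀ x : Addr, IsAddress k (k-1) a x →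
    RegPairC F.gnd (F.toPartFam.cross k) (k-1) ε (d x) H (F.polyAt (k-1) x)

/-- `F` is an `(ε, a, d)`-equitable partition of `H`. -/
def IsEquitPartition (k : ℕ) (a : ℕ → ℕ) (ε : ℝ) (d : Addr → ℝ)
    (H : Finset (Finset V)) : Prop :=
  F.IsLabeled k a ∧ F.toPartFam.IsEquitableE k a (1 / (a 1 : ℝ)) ε ∧
  F.IsDensPartition k a ε d H

end LabFam

/-- An ℓ-partite complex: vertex classes and, for each level, a partite graph. -/
structure Cx (V : Type*) [DecidableEq V] (l : ℕ) where
  C : Fin l → Finset V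
  G : ℕ → Finset (Finset V)

namespace Cx

variable {l : ℕ} (X : Cx V l)

def gnd : Finset V := Finset.univ.sup X.C

/-- crossing i-sets with respect to the classes of `X` -/
def cross (i : ℕ) : Finset (Finset V) :=
  (X.gnd.powersetCard i).filter fun S => ∀ t : Fin l, (S ∩ X.C t).card ≤ 1

/-- restriction of the level-j graph to the classes indexed by `L` -/
def restr (j : ℕ) (L : Finset (Fin l)) : Finset (Finset V) :=
  if j = 1 then sing (L.sup X.C) else (X.G j).filter fun e => e ⊆ L.sup X.C

/-- `X` is a complex with levels up to `k`. -/
def IsComplex (k : ℕ) : Prop :=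
  (∀ s t : Fin l, s ≠ t → Disjoint (X.C s) (X.C t)) ∧
  (∀ j, 2 ≤ j → j ≤ k → X.G j ⊆ X.cross j) ∧
  (∀ j, 3 ≤ j → j ≤ k → X.G j ⊆ Kset X.gnd (j-1) j (X.G (j-1)))

/-- `X` is an (ε, (d_2, …, d_k))-regular complex. -/
def IsRegular (k : ℕ) (ε : ℝ) (d : ℕ → ℝ) : Prop :=
  ∀ j, 2 ≤ j → j ≤ k → ∀ L ∈ (Finset.univ : Finset (Fin l)).powersetCard j,
    RegPairC X.gnd (X.cross j) (j-1) ε (d j) (X.G j) (X.restr (j-1) L)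

/-- The restricted complex `X[L]` is (ε, (d_2, …, d_{k−1}, p))-regular. -/
def RestrRegular (k : ℕ) (ε : ℝ) (d : ℕ → ℝ) (L : Finset (Fin l)) (p : ℝ) : Prop :=
  ∀ j, 2 ≤ j → j ≤ k → ∀ L' ∈ L.powersetCard j,
    RegPairC X.gnd (X.cross j) (j-1) ε (if j = k then p else d j)
      (X.restr j L) (X.restr (j-1) L')

/-- clique set `K_i` of the level-j graph of the complex (level 1: crossing sets). -/
def KsetLvl (j i : ℕ) : Finset (Finset V) :=
  if j ≤ 1 then X.cross i else Kset X.gnd j i (X.G j)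

end Cx

/-- `eCL`, `mCL` satisfy the counting lemma of Kohayakawa–Rödl–Skokan. -/
def CountingProp (eCL : ℝ → ℝ → ℕ → ℕ → ℝ) (mCL : ℝ → ℝ → ℕ → ℕ → ℕ) : Prop :=
  ∀ γ d₀ : ℝ, 0 < γ → 0 < d₀ → ∀ k l : ℕ, 2 ≤ k → k ≤ l →
    (0 < eCL γ d₀ k l ∧ eCL γ d₀ k l ≤ 1) ∧
    ∀ (V₀ : Type) [DecidableEq V₀], ∀ (X : Cx V₀ l) (m : ℕ) (lam ε : ℝ) (d : ℕ → ℝ),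
      0 ≤ lam → lam < 1/4 → 0 < ε → ε ≤ eCL γ d₀ k l → mCL γ d₀ k l ≤ m →
      (∀ j, 2 ≤ j → j ≤ k → d₀ ≤ d j) →
      X.IsComplex k →
      (∀ i, |((X.C i).card : ℝ) - (m : ℝ)| ≤ lam * m) →
      X.IsRegular k ε d →
      |((Kset X.gnd k l (X.G k)).card : ℝ) -
        (∏ j ∈ Finset.Icc 2 k, d j ^ (l.choose j)) * ∏ i, ((X.C i).card : ℝ)|
        ≤ γ * ((∏ j ∈ Finset.Icc 2 k, d j ^ (l.choose j)) * ∏ i, ((X.C i).card : ℝ))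

/-- `eRI` is a legitimate function for defining regularity instances. -/
def GoodERI (eRI : ℕ → ℕ → ℝ) : Prop :=
  (∀ t k : ℕ, 1 ≤ t → 2 ≤ k → 0 < eRI t k ∧ eRI t k ≤ 1) ∧
  (∀ k t t' : ℕ, 1 ≤ t → t ≤ t' → eRI t' k ≤ eRI t k) ∧
  (∀ t k k' : ℕ, 2 ≤ k → k ≤ k' → eRI t k' ≤ eRI t k) ∧
  (∀ k : ℕ, Filter.Tendsto (fun t => eRI t k) Filter.atTop (nhds 0)) ∧
  ∃ (eCL : ℝ → ℝ → ℕ → ℕ → ℝ) (mCL : ℝ → ℝ → ℕ → ℕ → ℕ),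
    CountingProp eCL mCL ∧
    ∀ t k : ℕ, 1 ≤ t → 2 ≤ k →
      eRI t k < eCL (1/(t:ℝ)) (1/(t:ℝ)) (k-1) k / (4 * (t:ℝ) ^ (4^k))

/-- `max_i a_i` over `i ∈ [k−1]` -/
def maxA (k : ℕ) (a : ℕ → ℕ) : ℕ := (Finset.Icc 1 (k-1)).sup a

/-- `(ε, a, d)` is a regularity instance. -/
def RegInstance (eRI : ℕ → ℕ → ℝ) (k : ℕ) (ε : ℝ) (a : ℕ → ℕ) (d : Addr → ℝ) : Prop :=
  2 ≤ k ∧ (∀ j, 1 ≤ j → j ≤ k - 1 → 1 ≤ a j) ∧ 0 < ε ∧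
  ε ≤ eRI (maxA k a) k ∧ DensityFun k a d

section Counting

variable {W : Type} [Fintype W] [DecidableEq W]

/-- `S` spans an induced copy of `Fg` in `H` (both k-graphs). -/
def InducedCopy (Fg : Finset (Finset W)) (H : Finset (Finset V)) (k : ℕ) (S : Finset V) :
    Prop :=
  ∃ e : W → V, Function.Injective e ∧ Finset.univ.image e = S ∧
    ∀ A : Finset W, A.card = k → (A.image e ∈ H ↔ A ∈ Fg)

/-- the size of the automorphism group of `Fg` -/
def AutCount (Fg : Finset (Finset W)) : ℕ :=
  Nat.card {π : W ≃ W // ∀ A : Finset W, A.image π ∈ Fg ↔ A ∈ Fg}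

/-- the number `IC_σ(F, H)` of σ-induced copies of `Fg` in the complex `X` -/
def ICosig {l : ℕ} (X : Cx V l) (k : ℕ) (Fg : Finset (Finset W)) (σ : W ≃ Fin l) : ℕ :=
  Set.ncard {e : W → V |
    (∀ v, e v ∈ X.C (σ v)) ∧
    Finset.univ.image e ∈ X.KsetLvl (k-1) l ∧
    ∀ A : Finset W, A.card = k → (A.image e ∈ X.G k ↔ A ∈ Fg)}

/-- `IC(F, d, x̂, σ)` -/
def ICs (Fg : Finset (Finset W)) (k l : ℕ) (a : ℕ → ℕ) (d : Addr → ℝ)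
    (x : Addr) (σ : W → ℕ) : ℝ :=
  (∏ B ∈ x.1.powersetCard k,
    if ∃ A ∈ Fg, A.image σ = B then d (restrictA x (k-1) B)
    else 1 - d (restrictA x (k-1) B)) *
  ∏ j ∈ Finset.Icc 2 (k-1), ((a j : ℝ) ^ (l.choose j))⁻¹

/-- `IC(F, d, x̂)` -/
def ICa (Fg : Finset (Finset W)) (k l : ℕ) (a : ℕ → ℕ) (d : Addr → ℝ) (x : Addr) : ℝ :=
  (AutCount Fg : ℝ)⁻¹ *
    ∑ᶠ σ ∈ {σ : W → ℕ | Set.BijOn σ Set.univ ↑x.1}, ICs Fg k l a d x σ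

/-- `IC(F, d)` -/
def IC (Fg : Finset (Finset W)) (k l : ℕ) (a : ℕ → ℕ) (d : Addr → ℝ) : ℝ :=
  (((a 1).choose l : ℝ))⁻¹ * ∑ᶠ x ∈ {x : Addr | IsAddress l (k-1) a x}, ICa Fg k l a d x

end Counting

end

end HypReg
namespace HypReg

open Finset

attribute [local instance 10] Classical.propDecidable

/-! Regularity of `H` with respect to a polyad says, up to constants, that the indicator of `H`
minus its density, restricted to the cliques of the polyad, has small cut norm. By repeated
Cauchy–Schwarz the cut norm is controlled by the box norm, an average over tuples of `2 * k`
vertices, and such an average concentrates when the vertices are sampled: a high moment of it is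
bounded through families of disjoint tuples. Hence, outside an event of exponentially small
probability, all the centred functions attached to the partition keep a small cut norm on `Q`, and
the vertex classes stay nearly balanced. Moving a few vertices of `Q` by a map `φ` makes the
classes exactly balanced; pulling the partition back along `φ` changes the functions only on tuples
that meet the few moved vertices. A counting lemma gives every polyad a positive proportion of
cliques, which turns the cut norm bounds back into regularity. -/

open scoped BigOperators

section CutNorm

variable {V ι κ : Type*} [Fintype ι] [DecidableEq ι] [Fintype κ] [DecidableEq κ]

/-- The `ι`-tuples of vertices in `U`. Averages over `tuples ι U` play the role of averages over
`|ι|`-subsets of `U`: the tuples with repeated entries are negligible. -/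
def tuples (ι : Type*) [Fintype ι] [DecidableEq ι] (U : Finset V) : Finset (ι → V) :=
  Fintype.piFinset fun _ => U

lemma mem_tuples {U : Finset V} {y : ι → V} : y ∈ tuples ι U ↔ ∀ i, y i ∈ U :=
  Fintype.mem_piFinset

lemma tuples_nonempty {U : Finset V} (h : U.Nonempty) : (tuples ι U).Nonempty :=
  Fintype.piFinset_nonempty.2 fun _ => h

lemma card_tuples (U : Finset V) : (tuples ι U).card = U.card ^ Fintype.card ι := by
  simp [tuples]

lemma expect_tuples_succ {k : ℕ} (U : Finset V) (g : (Fin (k + 1) → V) → ℝ) :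
    𝔼 y ∈ tuples (Fin (k + 1)) U, g y =
      𝔼 x ∈ U, 𝔼 y ∈ tuples (Fin k) U, g (Fin.cons x y) := by
  rw [← expect_product' U (tuples (Fin k) U) fun x y => g (Fin.cons x y)]
  refine expect_nbij' (fun y => (y 0, Fin.tail y)) (fun p => Fin.cons p.1 p.2) ?_ ?_ ?_ ?_ ?_ <;>
    simp +contextual [mem_tuples, Fin.forall_fin_succ, Fin.tail]

lemma expect_tuples_sum (U : Finset V) (g : (ι → V) → (κ → V) → ℝ) :
    𝔼 w ∈ tuples (ι ⊕ κ) U, g (w ∘ Sum.inl) (w ∘ Sum.inr) =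
      𝔼 x ∈ tuples ι U, 𝔼 z ∈ tuples κ U, g x z := by
  rw [← expect_product']
  refine expect_nbij' (fun w => (w ∘ Sum.inl, w ∘ Sum.inr)) (fun p => Sum.elim p.1 p.2)
    ?_ ?_ ?_ ?_ ?_ <;> simp +contextual [mem_tuples]

/-- Exchanging the entries of `y` at the positions `e` with `w` is an involution on pairs
`(y, w)`. -/
lemma expect_tuples_extend (U : Finset V) {e : κ → ι} (he : Function.Injective e)
    (g : (ι → V) → ℝ) :
    𝔼 y ∈ tuples ι U, g y =
      𝔼 y ∈ tuples ι U, 𝔼 w ∈ tuples κ U, g (Function.extend e w y) := by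
  set swap : (ι → V) × (κ → V) → (ι → V) × (κ → V) :=
    fun p => (Function.extend e p.2 p.1, p.1 ∘ e) with hswap
  have swap_mem : ∀ p ∈ tuples ι U ×ˢ tuples κ U, swap p ∈ tuples ι U ×ˢ tuples κ U := by
    rintro ⟨y, w⟩ hp
    simp only [mem_product, mem_tuples, hswap] at hp ⊢
    refine ⟨fun i => ?_, fun b => hp.1 _⟩
    rw [Function.extend_def]
    split_ifs
    exacts [hp.2 _, hp.1 i]
  have swap_swap : ∀ p, swap (swap p) = p := by
    rintro ⟨y, w⟩
    refine Prod.ext (funext fun i => ?_) (funext fun b => he.extend_apply _ _ b)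
    by_cases hi : ∃ b, e b = i
    · obtain ⟨b, rfl⟩ := hi
      simp [hswap, he.extend_apply]
    · simp [hswap, Function.extend_apply' _ _ _ hi]
  calc 𝔼 y ∈ tuples ι U, g y = 𝔼 y ∈ tuples ι U, 𝔼 _w ∈ tuples κ U, g y := by
        refine expect_congr rfl fun y hy => (expect_const ⟨y ∘ e, ?_⟩ _).symm
        exact mem_tuples.2 fun b => mem_tuples.1 hy _
    _ = 𝔼 p ∈ tuples ι U ×ˢ tuples κ U, g p.1 := (expect_product' _ _ fun y _ => g y).symm
    _ = 𝔼 p ∈ tuples ι U ×ˢ tuples κ U, g (swap p).1 :=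
        expect_nbij' swap swap swap_mem swap_mem (fun p _ => swap_swap p)
          (fun p _ => swap_swap p) fun p _ => by rw [swap_swap]
    _ = _ := expect_product' _ _ fun y w => g (Function.extend e w y)

lemma expect_tuples_unique [Unique κ] (U : Finset V) (g : (κ → V) → ℝ) :
    𝔼 w ∈ tuples κ U, g w = 𝔼 v ∈ U, g fun _ => v :=
  expect_nbij' (fun w => w default) (fun v _ => v) (by simp +contextual [mem_tuples])
    (by simp [mem_tuples]) (fun w _ => funext fun j => by rw [Subsingleton.elim j default])
    (by simp) (fun w _ => congrArg g (funext fun j => by rw [Subsingleton.elim j default]))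

lemma expect_tuples_update (U : Finset V) (i : ι) (g : (ι → V) → ℝ) :
    𝔼 y ∈ tuples ι U, g y = 𝔼 y ∈ tuples ι U, 𝔼 v ∈ U, g (Function.update y i v) := by
  rw [expect_tuples_extend U (Function.injective_of_subsingleton fun _ : Unit => i)]
  simp_rw [expect_tuples_unique]
  congr! 5 with y _ v
  ext j
  rcases eq_or_ne j i with rfl | hj
  · simpa using (Function.injective_of_subsingleton fun _ : Unit => j).extend_apply _ y ()
  · rw [Function.update_of_ne hj, Function.extend_apply' _ _ _ fun ⟨_, h⟩ => hj h.symm]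

/-- The cut norm of `f` on `U` is at most `η`: `f` has correlation at most `η` with every product of
`[-1, 1]`-valued functions each of which ignores one of the variables. -/
def CutNormLE (f : (ι → V) → ℝ) (U : Finset V) (η : ℝ) : Prop :=
  ∀ u : ι → (ι → V) → ℝ, (∀ i, DependsOn (u i) {i}ᶜ) → (∀ i y, |u i y| ≤ 1) →
    |𝔼 y ∈ tuples ι U, f y * ∏ i, u i y| ≤ η

/-- The variant of `CutNormLE` with `{0, 1}`-valued test functions, the form in which hypergraph
regularity provides it. -/
def SetCutNormLE (f : (ι → V) → ℝ) (U : Finset V) (η : ℝ) : Prop :=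
  ∀ u : ι → (ι → V) → ℝ, (∀ i, DependsOn (u i) {i}ᶜ) → (∀ i y, u i y = 0 ∨ u i y = 1) →
    |𝔼 y ∈ tuples ι U, f y * ∏ i, u i y| ≤ η

/-- A function ignoring the variable `i` only sees the average `C` of `g` over that variable, and
its best choice is the sign of `C`. -/
lemma exists_indicator_abs_expect_mul_le (U : Finset V) (g : (ι → V) → ℝ) {i : ι}
    {v : (ι → V) → ℝ} (hv : DependsOn v {i}ᶜ) (hv1 : ∀ y, |v y| ≤ 1) :
    ∃ s : Bool → (ι → V) → ℝ, (∀ b, DependsOn (s b) {i}ᶜ) ∧ (∀ b y, s b y = 0 ∨ s b y = 1) ∧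
      |𝔼 y ∈ tuples ι U, g y * v y| ≤
        |𝔼 y ∈ tuples ι U, g y * s true y| + |𝔼 y ∈ tuples ι U, g y * s false y| := by
  set C : (ι → V) → ℝ := fun y => 𝔼 x ∈ U, g (Function.update y i x) with hC
  have hCdep : DependsOn C {i}ᶜ := by
    intro y z hyz
    have : ∀ x, Function.update y i x = Function.update z i x := fun x =>
      funext fun j => by
        rcases eq_or_ne j i with rfl | hj
        · simp
        · simp [hj, hyz j hj]
    simp only [hC, this]
  have average : ∀ w : (ι → V) → ℝ, DependsOn w {i}ᶜ →
      𝔼 y ∈ tuples ι U, g y * w y = 𝔼 y ∈ tuples ι U, C y * w y := by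
    intro w hw
    rw [expect_tuples_update U i]
    refine expect_congr rfl fun y _ => ?_
    rw [hC, expect_mul]
    refine expect_congr rfl fun x _ => congrArg _ (hw fun j hj => ?_)
    exact Function.update_of_ne hj _ _
  set s : Bool → (ι → V) → ℝ := fun b y => if decide (0 ≤ C y) = b then 1 else 0 with hs
  have hsdep : ∀ b, DependsOn (s b) {i}ᶜ := fun b y z hyz => by simp only [hs, hCdep hyz]
  refine ⟨s, hsdep, fun b y => by simp only [hs]; split_ifs <;> simp, ?_⟩
  calc |𝔼 y ∈ tuples ι U, g y * v y| = |𝔼 y ∈ tuples ι U, C y * v y| := by rw [average v hv]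
    _ ≤ 𝔼 y ∈ tuples ι U, |C y * v y| := abs_expect_le _ _
    _ ≤ 𝔼 y ∈ tuples ι U, (C y * s true y - C y * s false y) := by
        refine expect_le_expect fun y _ => ?_
        rw [abs_mul]
        refine (mul_le_of_le_one_right (abs_nonneg _) (hv1 y)).trans_eq ?_
        rcases le_or_gt 0 (C y) with h | h
        · simp [hs, h, abs_of_nonneg]
        · simp [hs, h, h.not_ge, abs_of_neg]
    _ = 𝔼 y ∈ tuples ι U, g y * s true y - 𝔼 y ∈ tuples ι U, g y * s false y := by
        rw [expect_sub_distrib, average _ (hsdep _), average _ (hsdep _)]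
    _ ≤ _ := (le_abs_self _).trans (abs_sub _ _)

lemma SetCutNormLE.cutNormLE {f : (ι → V) → ℝ} {U : Finset V} {δ : ℝ} (h : SetCutNormLE f U δ) :
    CutNormLE f U (2 ^ Fintype.card ι * δ) := by
  suffices H : ∀ s : Finset ι, ∀ u : ι → (ι → V) → ℝ, (∀ i, DependsOn (u i) {i}ᶜ) →
      (∀ i y, |u i y| ≤ 1) → (∀ i ∉ s, ∀ y, u i y = 0 ∨ u i y = 1) →
      |𝔼 y ∈ tuples ι U, f y * ∏ i, u i y| ≤ 2 ^ s.card * δ from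
    fun u hu hu1 => H univ u hu hu1 fun i hi => absurd (mem_univ i) hi
  intro s
  induction s using Finset.induction_on with
  | empty =>
    intro u hu _ h01
    simpa using h u hu fun i y => h01 i (notMem_empty i) y
  | insert i s his ih =>
    intro u hu hu1 h01
    set g : (ι → V) → ℝ := fun y => f y * ∏ j ∈ univ.erase i, u j y with hg
    obtain ⟨w, hwdep, hw01, hw⟩ := exists_indicator_abs_expect_mul_le U g (hu i) (hu1 i)
    have split_prod : ∀ v : (ι → V) → ℝ, ∀ y,
        f y * ∏ j, Function.update u i v j y = g y * v y := by
      intro v y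
      rw [← mul_prod_erase univ _ (mem_univ i), hg,
        prod_congr rfl fun j hj => by rw [Function.update_of_ne (ne_of_mem_erase hj)]]
      simp only [Function.update_self]
      ring
    have indicator_le : ∀ b, |𝔼 y ∈ tuples ι U, g y * w b y| ≤ 2 ^ s.card * δ := by
      intro b
      simp_rw [← split_prod]
      refine ih _ ?_ ?_ ?_
      · exact (Function.forall_update_iff u fun j v => DependsOn v {j}ᶜ).2
          ⟨hwdep b, fun j _ => hu j⟩
      · refine (Function.forall_update_iff u fun _ v => ∀ y, |v y| ≤ 1).2
          ⟨fun y => ?_, fun j _ => hu1 j⟩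
        rcases hw01 b y with h0 | h0 <;> simp [h0]
      · intro j hj
        rcases eq_or_ne j i with rfl | hji
        · simpa using hw01 b
        · simpa [hji] using h01 j (by simp [hji, hj])
    calc |𝔼 y ∈ tuples ι U, f y * ∏ j, u j y| = |𝔼 y ∈ tuples ι U, g y * u i y| := by
          simp_rw [← split_prod, Function.update_eq_self]
      _ ≤ 2 ^ s.card * δ + 2 ^ s.card * δ := hw.trans (add_le_add (indicator_le _) (indicator_le _))
      _ = 2 ^ (insert i s).card * δ := by rw [card_insert_of_notMem his]; ring

end CutNorm

section BoxNorm

lemma sq_expect_le {α : Type*} (s : Finset α) (f : α → ℝ) :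
    (𝔼 i ∈ s, f i) ^ 2 ≤ 𝔼 i ∈ s, f i ^ 2 := by
  rcases s.eq_empty_or_nonempty with rfl | hs
  · simp
  · simpa [expect_const hs] using expect_mul_sq_le_sq_mul_sq s f fun _ => 1

lemma expect_pow_two_pow_le {α : Type*} (s : Finset α) (k : ℕ) (f : α → ℝ) :
    (𝔼 i ∈ s, f i) ^ (2 ^ k) ≤ 𝔼 i ∈ s, f i ^ (2 ^ k) := by
  induction k generalizing f with
  | zero => simp
  | succ k ih =>
    simp only [pow_succ' 2 k, pow_mul]
    exact (pow_le_pow_left₀ (sq_nonneg _) (sq_expect_le s f) _).trans (ih _)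

lemma sq_expect_mul_expect_le {α β : Type*} (s : Finset α) (t : Finset β) {w : β → ℝ}
    (hw : ∀ b, |w b| ≤ 1) (g : α → β → ℝ) :
    (𝔼 b ∈ t, w b * 𝔼 a ∈ s, g a b) ^ 2 ≤
      𝔼 a ∈ s, 𝔼 a' ∈ s, 𝔼 b ∈ t, g a b * g a' b := by
  calc _ ≤ 𝔼 b ∈ t, (w b * 𝔼 a ∈ s, g a b) ^ 2 := sq_expect_le _ _
    _ ≤ 𝔼 b ∈ t, (𝔼 a ∈ s, g a b) ^ 2 := by
      refine expect_le_expect fun b _ => ?_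
      rw [mul_pow]
      exact mul_le_of_le_one_left (sq_nonneg _) ((sq_le_one_iff_abs_le_one _).2 (hw b))
    _ = 𝔼 b ∈ t, 𝔼 a ∈ s, 𝔼 a' ∈ s, g a b * g a' b := by simp_rw [sq, expect_mul_expect]
    _ = _ := by
      rw [expect_comm]
      exact expect_congr rfl fun a _ => expect_comm _ _ _

lemma abs_mul_le_one {a b : ℝ} (ha : |a| ≤ 1) (hb : |b| ≤ 1) : |a * b| ≤ 1 :=
  (abs_mul a b).trans_le (mul_le_one₀ ha (abs_nonneg b) hb)

variable {V : Type*} {k : ℕ}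

/-- The product of `f` over the `2 ^ k` vertices of the box spanned by `x` and `z`. Its average
over `x` and `z` is the `2 ^ k`-th power of the Gowers box norm of `f`. -/
def boxProd : (k : ℕ) → ((Fin k → V) → ℝ) → (Fin k → V) → (Fin k → V) → ℝ
  | 0, f, x, _ => f x
  | k + 1, f, x, z =>
    boxProd k (fun y => f (Fin.cons (x 0) y) * f (Fin.cons (z 0) y)) (Fin.tail x) (Fin.tail z)

lemma abs_boxProd_le {f : (Fin k → V) → ℝ} (hf : ∀ y, |f y| ≤ 1) (x z : Fin k → V) :
    |boxProd k f x z| ≤ 1 := by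
  induction k with
  | zero => exact hf x
  | succ k ih => exact ih (fun y => abs_mul_le_one (hf _) (hf _)) _ _

lemma expect_mul_prod_eq_expect_cons (U : Finset V) (f : (Fin (k + 1) → V) → ℝ)
    {u : Fin (k + 1) → (Fin (k + 1) → V) → ℝ} (hu : DependsOn (u 0) {0}ᶜ) (x₀ : V) :
    𝔼 y ∈ tuples (Fin (k + 1)) U, f y * ∏ i, u i y =
      𝔼 y ∈ tuples (Fin k) U, u 0 (Fin.cons x₀ y) *
        𝔼 x ∈ U, f (Fin.cons x y) * ∏ i : Fin k, u i.succ (Fin.cons x y) := by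
  have u_zero : ∀ x y, u 0 (Fin.cons x y) = u 0 (Fin.cons x₀ y) := fun x y =>
    hu fun i hi => by
      obtain ⟨j, rfl⟩ := Fin.exists_succ_eq.2 (show i ≠ 0 from hi)
      simp
  rw [expect_tuples_succ, expect_comm]
  refine expect_congr rfl fun y _ => ?_
  rw [mul_expect]
  refine expect_congr rfl fun x _ => ?_
  rw [Fin.prod_univ_succ, u_zero]
  ring

lemma dependsOn_comp_cons {i : Fin k} {u : (Fin (k + 1) → V) → ℝ} (hu : DependsOn u {i.succ}ᶜ)
    (x : V) : DependsOn (fun y : Fin k → V => u (Fin.cons x y)) {i}ᶜ := by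
  intro y y' h
  refine hu fun j hj => ?_
  induction j using Fin.cases with
  | zero => rfl
  | succ j => simpa using h j fun h' => hj (congrArg Fin.succ h')

/-- The Gowers–Cauchy–Schwarz inequality: each application of Cauchy–Schwarz doubles one variable
and removes the test function that ignores it. -/
lemma expect_mul_prod_pow_le (U : Finset V) (f : (Fin k → V) → ℝ)
    {u : Fin k → (Fin k → V) → ℝ} (hu : ∀ i, DependsOn (u i) {i}ᶜ) (hu1 : ∀ i y, |u i y| ≤ 1) :
    (𝔼 y ∈ tuples (Fin k) U, f y * ∏ i, u i y) ^ (2 ^ k) ≤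
      𝔼 x ∈ tuples (Fin k) U, 𝔼 z ∈ tuples (Fin k) U, boxProd k f x z := by
  induction k with
  | zero =>
    have h : tuples (Fin 0) U = {Fin.elim0} := by
      ext y
      simp [mem_tuples, Subsingleton.elim y Fin.elim0]
    simp [boxProd, h]
  | succ k ih =>
    rcases U.eq_empty_or_nonempty with rfl | ⟨x₀, -⟩
    · simp [tuples]
    set g : V → (Fin k → V) → ℝ := fun x y =>
      f (Fin.cons x y) * ∏ i : Fin k, u i.succ (Fin.cons x y) with hg
    have ih' : ∀ x x' : V, (𝔼 y ∈ tuples (Fin k) U, g x y * g x' y) ^ 2 ^ k ≤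
        𝔼 y ∈ tuples (Fin k) U, 𝔼 z ∈ tuples (Fin k) U,
          boxProd k (fun y => f (Fin.cons x y) * f (Fin.cons x' y)) y z := by
      intro x x'
      refine (le_of_eq ?_).trans
        (ih (u := fun i y => u i.succ (Fin.cons x y) * u i.succ (Fin.cons x' y)) _
          (fun i y y' h => congrArg₂ (· * ·) (dependsOn_comp_cons (hu _) x h)
            (dependsOn_comp_cons (hu _) x' h))
          fun i y => abs_mul_le_one (hu1 _ _) (hu1 _ _))
      simp only [hg, prod_mul_distrib, mul_mul_mul_comm]
    calc (𝔼 y ∈ tuples (Fin (k + 1)) U, f y * ∏ i, u i y) ^ 2 ^ (k + 1)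
        ≤ (𝔼 x ∈ U, 𝔼 x' ∈ U, 𝔼 y ∈ tuples (Fin k) U, g x y * g x' y) ^ 2 ^ k := by
          rw [expect_mul_prod_eq_expect_cons U f (hu 0) x₀, pow_succ' 2 k, pow_mul]
          exact pow_le_pow_left₀ (sq_nonneg _)
            (sq_expect_mul_expect_le U _ (fun _ => hu1 0 _) g) _
      _ ≤ 𝔼 x ∈ U, 𝔼 x' ∈ U, (𝔼 y ∈ tuples (Fin k) U, g x y * g x' y) ^ 2 ^ k :=
          (expect_pow_two_pow_le _ _ _).trans
            (expect_le_expect fun x _ => expect_pow_two_pow_le _ _ _)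
      _ ≤ 𝔼 x ∈ U, 𝔼 x' ∈ U, 𝔼 y ∈ tuples (Fin k) U, 𝔼 z ∈ tuples (Fin k) U,
          boxProd k (fun y => f (Fin.cons x y) * f (Fin.cons x' y)) y z :=
          expect_le_expect fun x _ => expect_le_expect fun x' _ => ih' x x'
      _ = _ := by
          rw [expect_tuples_succ]
          refine expect_congr rfl fun x _ => ?_
          simp_rw [expect_tuples_succ (k := k) U (fun z => boxProd _ f _ z)]
          rw [expect_comm]
          rfl

lemma exists_boxProd_eq_mul_prod {f : (Fin k → V) → ℝ} (hf : ∀ y, |f y| ≤ 1) (z : Fin k → V) :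
    ∃ u : Fin k → (Fin k → V) → ℝ, (∀ i, DependsOn (u i) {i}ᶜ) ∧ (∀ i y, |u i y| ≤ 1) ∧
      ∀ x, boxProd k f x z = f x * ∏ i, u i x := by
  induction k with
  | zero =>
    exact ⟨fun i => i.elim0, fun i => i.elim0, fun i => i.elim0, fun x => by simp [boxProd]⟩
  | succ k ih =>
    choose w hw hw1 hwe using fun x₀ : V =>
      ih (fun y => abs_mul_le_one (hf (Fin.cons x₀ y)) (hf (Fin.cons (z 0) y))) (Fin.tail z)
    refine ⟨Fin.cons (fun x => f (Fin.cons (z 0) (Fin.tail x)))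
      (fun i x => w (x 0) i (Fin.tail x)), ?_, ?_, ?_⟩
    · refine Fin.cases (fun x y h => ?_) fun i x y h => ?_
      · have : Fin.tail x = Fin.tail y := funext fun j => h j.succ (Fin.succ_ne_zero j)
        simp [this]
      · have h0 : x 0 = y 0 := h 0 (Fin.succ_ne_zero i).symm
        simp only [Fin.cons_succ, h0]
        exact hw _ i fun j hj => h j.succ fun h' => hj (Fin.succ_injective _ h')
    · exact Fin.cases (fun x => hf _) fun i x => hw1 _ _ _
    · intro x
      rw [boxProd, hwe, Fin.prod_univ_succ]
      simp [mul_assoc]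

lemma CutNormLE.expect_boxProd_le {U : Finset V} (hU : U.Nonempty) {f : (Fin k → V) → ℝ}
    (hf : ∀ y, |f y| ≤ 1) {δ : ℝ} (h : CutNormLE f U δ) :
    𝔼 x ∈ tuples (Fin k) U, 𝔼 z ∈ tuples (Fin k) U, boxProd k f x z ≤ δ := by
  rw [expect_comm]
  refine expect_le (tuples_nonempty hU) fun z _ => ?_
  obtain ⟨u, hu, hu1, hue⟩ := exists_boxProd_eq_mul_prod hf z
  simp_rw [hue]
  exact (le_abs_self _).trans (h u hu hu1)

lemma cutNormLE_of_expect_boxProd_le {U : Finset V} {f : (Fin k → V) → ℝ} (hk : k ≠ 0) {η : ℝ}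
    (hη : 0 ≤ η)
    (h : 𝔼 x ∈ tuples (Fin k) U, 𝔼 z ∈ tuples (Fin k) U, boxProd k f x z ≤ η ^ 2 ^ k) :
    CutNormLE f U η := fun u hu hu1 => by
  refine le_of_pow_le_pow_left₀ (pow_ne_zero k two_ne_zero) hη ?_
  rw [(even_two.pow_of_ne_zero hk).pow_abs]
  exact (expect_mul_prod_pow_le U f hu hu1).trans h

end BoxNorm

section DisjointTuples

lemma choose_sub_sub_le_pow_mul_choose {n q s : ℕ} (hq : q ≤ n) (hs : s ≤ q) :
    ((n - s).choose (q - s) : ℝ) ≤ (q / n : ℝ) ^ s * n.choose q := by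
  induction s with
  | zero => simp
  | succ s ih =>
    obtain ⟨n', hn'⟩ : ∃ n', n - s = n' + 1 := ⟨n - s - 1, by omega⟩
    obtain ⟨q', hq'⟩ : ∃ q', q - s = q' + 1 := ⟨q - s - 1, by omega⟩
    have ih := ih (by omega)
    rw [hn', hq'] at ih
    rw [show n - (s + 1) = n' by omega, show q - (s + 1) = q' by omega]
    have hn : (0 : ℝ) < n := by exact_mod_cast (show 0 < n by omega)
    have absorb : (n' + 1 : ℝ) * n'.choose q' = (n' + 1).choose (q' + 1) * (q' + 1) := by
      exact_mod_cast Nat.add_one_mul_choose_eq n' q'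
    have ratio_le : (q' + 1 : ℝ) / (n' + 1) ≤ q / n := by
      rw [div_le_div_iff₀ (by positivity) hn]
      obtain rfl : n = n' + 1 + s := by omega
      obtain rfl : q = q' + 1 + s := by omega
      have : (q' : ℝ) + 1 + s ≤ n' + 1 + s := by exact_mod_cast hq
      push_cast
      nlinarith [(Nat.cast_nonneg s : (0 : ℝ) ≤ s)]
    calc (n'.choose q' : ℝ) = (n' + 1).choose (q' + 1) * ((q' + 1) / (n' + 1)) := by
          field_simp
          linarith
      _ ≤ (q / n : ℝ) ^ s * n.choose q * (q / n) := mul_le_mul ih ratio_le (by positivity)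
          (by positivity)
      _ = (q / n : ℝ) ^ (s + 1) * n.choose q := by ring

lemma card_powersetCard_filter_superset_le {V : Type*} {W A : Finset V} (hA : A ⊆ W) {q : ℕ}
    (hq : q ≤ W.card) :
    (((W.powersetCard q).filter (A ⊆ ·)).card : ℝ) ≤
      (q / W.card : ℝ) ^ A.card * W.card.choose q := by
  rcases lt_or_ge q A.card with hAq | hAq
  · rw [filter_false_of_mem, card_empty, Nat.cast_zero]
    · positivity
    · exact fun Q hQ hAQ => hAq.not_ge ((mem_powersetCard.1 hQ).2 ▸ card_le_card hAQ)
  have sub_image : (W.powersetCard q).filter (A ⊆ ·) ⊆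
      ((W \ A).powersetCard (q - A.card)).image (A ∪ ·) := by
    intro Q hQ
    simp only [mem_filter, mem_powersetCard] at hQ
    refine mem_image.2 ⟨Q \ A, mem_powersetCard.2 ⟨sdiff_subset_sdiff hQ.1.1 le_rfl, ?_⟩,
      union_sdiff_of_subset hQ.2⟩
    rw [card_sdiff_of_subset hQ.2, hQ.1.2]
  refine le_trans ?_ (choose_sub_sub_le_pow_mul_choose hq hAq)
  rw [← card_sdiff_of_subset hA, ← card_powersetCard]
  exact_mod_cast (card_le_card sub_image).trans card_image_le

variable {V ι : Type*} [Fintype ι] [DecidableEq ι]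

lemma expect_boole_mem_le (U A : Finset V) :
    𝔼 v ∈ U, (if v ∈ A then (1 : ℝ) else 0) ≤ A.card / U.card := by
  rw [expect_eq_sum_div_card, sum_boole]
  gcongr
  exact fun v hv => (mem_filter.1 hv).2

lemma expect_tuples_le_of_update {U : Finset V} {g : (ι → V) → ℝ} {c : ℝ} (hc : 0 ≤ c) (i : ι)
    (h : ∀ y, 𝔼 v ∈ U, g (Function.update y i v) ≤ c) : 𝔼 y ∈ tuples ι U, g y ≤ c := by
  rw [expect_tuples_update U i]
  rcases (tuples ι U).eq_empty_or_nonempty with h0 | h0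
  · rwa [h0, expect_empty]
  · exact expect_le h0 fun y _ => h y

lemma expect_exists_mem_le (U A : Finset V) :
    𝔼 y ∈ tuples ι U, (if ∃ i, y i ∈ A then (1 : ℝ) else 0) ≤
      Fintype.card ι * (A.card / U.card) := by
  calc _ ≤ 𝔼 y ∈ tuples ι U, ∑ i, (if y i ∈ A then (1 : ℝ) else 0) := by
        refine expect_le_expect fun y _ => ?_
        split_ifs with h
        · obtain ⟨i, hi⟩ := h
          refine (single_le_sum (f := fun i => if y i ∈ A then (1 : ℝ) else 0)
            (fun j _ => by positivity) (mem_univ i)).trans' ?_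
          simp [hi]
        · exact sum_nonneg fun j _ => by positivity
    _ = ∑ i : ι, 𝔼 y ∈ tuples ι U, (if y i ∈ A then (1 : ℝ) else 0) := expect_sum_comm _ _ _
    _ ≤ ∑ _i : ι, (A.card / U.card : ℝ) := by
        refine sum_le_sum fun i _ => expect_tuples_le_of_update (by positivity) i fun y => ?_
        simpa only [Function.update_self] using expect_boole_mem_le U A
    _ = _ := by simp

lemma expect_not_injective_le (U : Finset V) :
    𝔼 y ∈ tuples ι U, (if Function.Injective y then (0 : ℝ) else 1) ≤
      (Fintype.card ι : ℝ) ^ 2 / U.card := by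
  calc _ ≤ 𝔼 y ∈ tuples ι U, ∑ p : ι × ι, (if p.1 ≠ p.2 ∧ y p.1 = y p.2 then (1 : ℝ) else 0) := by
        refine expect_le_expect fun y _ => ?_
        split_ifs with h
        · exact sum_nonneg fun p _ => by positivity
        · obtain ⟨i, j, hij, hne⟩ : ∃ i j, y i = y j ∧ i ≠ j := by
            simpa [Function.Injective] using h
          refine (single_le_sum (f := fun p : ι × ι =>
            if p.1 ≠ p.2 ∧ y p.1 = y p.2 then (1 : ℝ) else 0)
            (fun p _ => by positivity) (mem_univ (i, j))).trans' ?_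
          simp [hij, hne]
    _ = ∑ p : ι × ι, 𝔼 y ∈ tuples ι U, (if p.1 ≠ p.2 ∧ y p.1 = y p.2 then (1 : ℝ) else 0) :=
        expect_sum_comm _ _ _
    _ ≤ ∑ _p : ι × ι, (1 / U.card : ℝ) := by
        refine sum_le_sum fun ⟨i, j⟩ _ => expect_tuples_le_of_update (by positivity) i fun y => ?_
        rcases eq_or_ne i j with hij | hij
        · simp [hij]
        · simpa [hij, Function.update_of_ne hij.symm] using expect_boole_mem_le U {y j}
    _ = _ := by simp; ring

/-- The injective tuples of vertices in `U` avoiding `A`. -/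
noncomputable def freshTuples (ι : Type*) [Fintype ι] [DecidableEq ι] (U A : Finset V) :
    Finset (ι → V) :=
  (tuples ι U).filter fun y => Function.Injective y ∧ ∀ i, y i ∉ A

lemma mem_freshTuples {U A : Finset V} {y : ι → V} :
    y ∈ freshTuples ι U A ↔ y ∈ tuples ι U ∧ Function.Injective y ∧ ∀ i, y i ∉ A :=
  mem_filter

lemma card_union_image_of_mem_freshTuples {U A : Finset V} {y : ι → V}
    (hy : y ∈ freshTuples ι U A) : (A ∪ univ.image y).card = A.card + Fintype.card ι := by
  rw [mem_freshTuples] at hy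
  rw [card_union_of_disjoint, card_image_of_injective _ hy.2.1, card_univ]
  simpa [disjoint_right] using hy.2.2

lemma expect_tuples_le_sum_freshTuples {G : (ι → V) → ℝ} (hG : ∀ y, 0 ≤ G y)
    (hG2 : ∀ y, G y ≤ 2) (U A : Finset V) :
    𝔼 y ∈ tuples ι U, G y ≤ (∑ y ∈ freshTuples ι U A, G y) / (U.card : ℝ) ^ Fintype.card ι +
      2 * (Fintype.card ι * (A.card / U.card) + (Fintype.card ι : ℝ) ^ 2 / U.card) := by
  calc _ ≤ 𝔼 y ∈ tuples ι U, ((if Function.Injective y ∧ ∀ i, y i ∉ A then G y else 0) +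
            2 * ((if ∃ i, y i ∈ A then (1 : ℝ) else 0) +
              (if Function.Injective y then (0 : ℝ) else 1))) := by
        refine expect_le_expect fun y _ => ?_
        have := hG y
        have := hG2 y
        by_cases hinj : Function.Injective y <;> by_cases hA : ∃ i, y i ∈ A <;>
          simp only [hinj, hA, ← not_exists] <;> norm_num <;> linarith
    _ ≤ _ := by
        rw [expect_add_distrib, ← mul_expect, expect_add_distrib]
        gcongr
        · rw [expect_eq_sum_div_card, ← sum_filter, card_tuples]
          push_cast
          rfl
        · exact expect_exists_mem_le U A
        · exact expect_not_injective_le U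

/-- The sum of `∏ G` over sequences of `r` pairwise disjoint injective tuples in `Q` avoiding `A`:
a variant of the `r`-th moment of `∑ y, G y` whose expectation over random `Q` is explicit. -/
noncomputable def disjSum (G : (ι → V) → ℝ) (Q : Finset V) : ℕ → Finset V → ℝ
  | 0, _ => 1
  | r + 1, A => ∑ y ∈ freshTuples ι Q A, G y * disjSum G Q r (A ∪ univ.image y)

lemma disjSum_nonneg {G : (ι → V) → ℝ} (hG : ∀ y, 0 ≤ G y) (Q : Finset V) (r : ℕ)
    (A : Finset V) : 0 ≤ disjSum G Q r A := by
  induction r generalizing A with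
  | zero => exact zero_le_one
  | succ r ih => exact sum_nonneg fun y _ => mul_nonneg (hG y) (ih _)

lemma pow_le_disjSum {G : (ι → V) → ℝ} (hG : ∀ y, 0 ≤ G y) (hG2 : ∀ y, G y ≤ 2) {Q : Finset V}
    (hQ : Q.Nonempty) {κ : ℝ} (hκ : 0 ≤ κ) {s : ℕ}
    (h : κ + 2 * (Fintype.card ι * (s / Q.card) + (Fintype.card ι : ℝ) ^ 2 / Q.card) ≤
      𝔼 y ∈ tuples ι Q, G y) {r : ℕ} {A : Finset V} (hA : A.card + r * Fintype.card ι ≤ s) :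
    (κ * (Q.card : ℝ) ^ Fintype.card ι) ^ r ≤ disjSum G Q r A := by
  induction r generalizing A with
  | zero => simp [disjSum]
  | succ r ih =>
    have : (0 : ℝ) < Q.card := by exact_mod_cast hQ.card_pos
    have le_sum_fresh : κ * (Q.card : ℝ) ^ Fintype.card ι ≤ ∑ y ∈ freshTuples ι Q A, G y := by
      rw [← le_div_iff₀ (by positivity)]
      have hAs : (Fintype.card ι * (A.card / Q.card) : ℝ) ≤ Fintype.card ι * (s / Q.card) := by
        gcongr
        exact (Nat.le_add_right _ _).trans hA
      linarith [expect_tuples_le_sum_freshTuples hG hG2 Q A]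
    rw [disjSum, pow_succ']
    refine (mul_le_mul_of_nonneg_right le_sum_fresh (by positivity)).trans ?_
    rw [sum_mul]
    refine sum_le_sum fun y hy => mul_le_mul_of_nonneg_left (ih ?_) (hG y)
    rw [card_union_image_of_mem_freshTuples hy]
    linarith

lemma sum_disjSum_le {G : (ι → V) → ℝ} (hG : ∀ y, 0 ≤ G y) {W : Finset V} {q : ℕ}
    (hq : q ≤ W.card) (r : ℕ) {A : Finset V} (hA : A ⊆ W) :
    ∑ Q ∈ (W.powersetCard q).filter (A ⊆ ·), disjSum G Q r A ≤
      (∑ y ∈ tuples ι W, G y) ^ r *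
        ((q / W.card : ℝ) ^ (A.card + r * Fintype.card ι) * W.card.choose q) := by
  induction r generalizing A with
  | zero => simpa [disjSum] using card_powersetCard_filter_superset_le hA hq
  | succ r ih =>
    set X := ∑ y ∈ tuples ι W, G y
    have hX : 0 ≤ X := sum_nonneg fun y _ => hG y
    set c : ℝ := (q / W.card : ℝ) ^ (A.card + (r + 1) * Fintype.card ι) * W.card.choose q
    calc ∑ Q ∈ (W.powersetCard q).filter (A ⊆ ·), disjSum G Q (r + 1) A
        = ∑ y ∈ freshTuples ι W A, ∑ Q ∈ (W.powersetCard q).filter (A ∪ univ.image y ⊆ ·),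
            G y * disjSum G Q r (A ∪ univ.image y) := by
          simp only [disjSum]
          refine sum_comm' fun Q y => ?_
          simp only [mem_filter, mem_powersetCard, mem_freshTuples, mem_tuples, union_subset_iff,
            image_subset_iff, mem_univ, true_imp_iff]
          exact ⟨fun h => ⟨⟨h.1.1, h.1.2, h.2.1⟩, fun i => h.1.1.1 (h.2.1 i), h.2.2⟩,
            fun h => ⟨⟨h.1.1, h.1.2.1⟩, h.1.2.2, h.2.2⟩⟩
      _ ≤ ∑ y ∈ freshTuples ι W A, G y * (X ^ r * c) := by
          refine sum_le_sum fun y hy => ?_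
          rw [← mul_sum]
          refine mul_le_mul_of_nonneg_left ((ih (union_subset hA ?_)).trans_eq ?_) (hG y)
          · simpa [image_subset_iff] using mem_tuples.1 (mem_freshTuples.1 hy).1
          · rw [card_union_image_of_mem_freshTuples hy, add_assoc, ← one_add_mul, add_comm 1 r]
      _ ≤ X * (X ^ r * c) := by
          rw [← sum_mul]
          refine mul_le_mul_of_nonneg_right ?_ (by positivity)
          exact sum_le_sum_of_subset_of_nonneg (filter_subset _ _) fun y _ _ => hG y
      _ = X ^ (r + 1) * c := by ring

lemma sum_disjSum_empty_le {G : (ι → V) → ℝ} (hG : ∀ y, 0 ≤ G y) {W : Finset V}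
    (hW : W.Nonempty) {q : ℕ} (hq : q ≤ W.card) (r : ℕ) :
    ∑ Q ∈ W.powersetCard q, disjSum G Q r ∅ ≤
      ((𝔼 y ∈ tuples ι W, G y) * (q : ℝ) ^ Fintype.card ι) ^ r * (W.powersetCard q).card := by
  have : (0 : ℝ) < W.card := by exact_mod_cast hW.card_pos
  have h := sum_disjSum_le hG hq r (empty_subset W)
  simp only [empty_subset, filter_true, card_empty, zero_add] at h
  refine h.trans_eq ?_
  rw [card_powersetCard, expect_eq_sum_div_card, card_tuples, mul_comm r, pow_mul, div_pow,
    ← mul_assoc, ← mul_pow]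
  push_cast
  field_simp

end DisjointTuples

section Concentration

variable {V ι : Type*} [Fintype ι] [DecidableEq ι]

/-- Markov's inequality for `disjSum`. -/
lemma card_filter_le_expect_mul_pow_le {G : (ι → V) → ℝ} (hG : ∀ y, 0 ≤ G y)
    (hG2 : ∀ y, G y ≤ 2) {W : Finset V} {q : ℕ} (hq0 : 0 < q) (hq : q ≤ W.card) {κ : ℝ}
    (hκ : 0 ≤ κ) (r : ℕ) :
    ((W.powersetCard q).filter fun Q =>
        κ + 2 * ((r + 1) * (Fintype.card ι : ℝ) ^ 2 / q) ≤ 𝔼 y ∈ tuples ι Q, G y).card * κ ^ r ≤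
      (𝔼 y ∈ tuples ι W, G y) ^ r * (W.powersetCard q).card := by
  set B := (W.powersetCard q).filter fun Q =>
    κ + 2 * ((r + 1) * (Fintype.card ι : ℝ) ^ 2 / q) ≤ 𝔼 y ∈ tuples ι Q, G y
  have : (0 : ℝ) < q := by exact_mod_cast hq0
  have hW : W.Nonempty := card_pos.1 (hq0.trans_le hq)
  have lower : ∀ Q ∈ B, (κ * (q : ℝ) ^ Fintype.card ι) ^ r ≤ disjSum G Q r ∅ := by
    intro Q hQ
    obtain ⟨hQW, hQ⟩ := mem_filter.1 hQ
    have hQc : Q.card = q := (mem_powersetCard.1 hQW).2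
    rw [← hQc]
    refine pow_le_disjSum (s := r * Fintype.card ι) hG hG2 (card_pos.1 (hQc ▸ hq0)) hκ
      (hQ.trans' (le_of_eq ?_)) (by simp)
    rw [hQc]
    push_cast
    ring
  refine le_of_mul_le_mul_right ?_ (by positivity : 0 < ((q : ℝ) ^ Fintype.card ι) ^ r)
  calc B.card * κ ^ r * ((q : ℝ) ^ Fintype.card ι) ^ r
      = ∑ _Q ∈ B, (κ * (q : ℝ) ^ Fintype.card ι) ^ r := by
        rw [sum_const, nsmul_eq_mul, mul_pow, mul_assoc]
    _ ≤ ∑ Q ∈ W.powersetCard q, disjSum G Q r ∅ :=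
        (sum_le_sum lower).trans (sum_le_sum_of_subset_of_nonneg (filter_subset _ _)
          fun _ _ _ => disjSum_nonneg hG _ _ _)
    _ ≤ _ := sum_disjSum_empty_le hG hW hq r
    _ = _ := by ring

/-- The exponential rate at which averages over `m`-tuples concentrate under sampling, `δ` being
the size of the deviation. -/
noncomputable def tailRate (m δ : ℝ) : ℝ :=
  δ ^ 2 / (128 * (m + 1) ^ 2)

lemma exists_moment_order {m δ q : ℝ} (hm : 0 ≤ m) (hδ : 0 < δ) (hq : 16 * (m + 1) ^ 2 / δ ≤ q) :
    ∃ r : ℕ, 2 * ((r + 1) * m ^ 2 / q) ≤ δ / 2 ∧ tailRate m δ * q ≤ δ / 8 * r := by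
  have hM : 0 < (m + 1) ^ 2 := by positivity
  have hq0 : 0 < q := hq.trans_lt' (by positivity)
  rw [div_le_iff₀ hδ] at hq
  have floor_le := Nat.floor_le (by positivity : 0 ≤ δ * q / (8 * (m + 1) ^ 2))
  have lt_floor := Nat.lt_floor_add_one (δ * q / (8 * (m + 1) ^ 2))
  set r := ⌊δ * q / (8 * (m + 1) ^ 2)⌋₊
  rw [le_div_iff₀ (by positivity)] at floor_le
  rw [div_lt_iff₀ (by positivity)] at lt_floor
  refine ⟨r, ?_, ?_⟩
  · rw [← mul_div_assoc, div_le_iff₀ hq0]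
    have : (r + 1 : ℝ) * m ^ 2 ≤ (r + 1) * (m + 1) ^ 2 := by gcongr; linarith
    nlinarith
  · rw [tailRate, div_mul_eq_mul_div, div_le_iff₀ (by positivity)]
    nlinarith

lemma one_add_pow_le_exp_mul_one_add_pow {δ : ℝ} (hδ : 0 < δ) (hδ1 : δ ≤ 1) (r : ℕ) :
    (1 + δ / 8) ^ r ≤ Real.exp (-(δ / 8 * r)) * (1 + δ / 2) ^ r := by
  rw [← neg_mul, mul_comm _ (r : ℝ), Real.exp_nat_mul, ← mul_pow]
  refine pow_le_pow_left₀ (by positivity) ?_ r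
  nlinarith [Real.add_one_le_exp (-(δ / 8))]

/-- Averages over disjoint tuples behave as if they were independent, so a moment of order
proportional to `q` yields an exponential tail. -/
lemma card_filter_lt_expect_le {W : Finset V} {q : ℕ} (hq : q ≤ W.card) {δ : ℝ} (hδ : 0 < δ)
    (hδ1 : δ ≤ 1) {F : (ι → V) → ℝ} (hF : ∀ y, |F y| ≤ 1)
    (hFW : 𝔼 y ∈ tuples ι W, F y ≤ δ / 8)
    (hq0 : 16 * ((Fintype.card ι : ℝ) + 1) ^ 2 / δ ≤ q) :
    (((W.powersetCard q).filter fun Q => δ < 𝔼 y ∈ tuples ι Q, F y).card : ℝ) ≤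
      Real.exp (-(tailRate (Fintype.card ι) δ * q)) * (W.powersetCard q).card := by
  obtain ⟨r, hr, hrate⟩ := exists_moment_order (Nat.cast_nonneg _) hδ hq0
  have hqpos : 0 < q := Nat.cast_pos (α := ℝ).1 (hq0.trans_lt' (by positivity))
  have expect_one_add : ∀ U : Finset V, U.Nonempty →
      𝔼 y ∈ tuples ι U, (1 + F y) = 1 + 𝔼 y ∈ tuples ι U, F y := fun U hU => by
    rw [expect_add_distrib, expect_const (tuples_nonempty hU)]
  have moment := card_filter_le_expect_mul_pow_le (ι := ι) (G := fun y => 1 + F y)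
    (fun y => by linarith [neg_le_of_abs_le (hF y)]) (fun y => by linarith [le_of_abs_le (hF y)])
    hqpos hq (κ := 1 + δ / 2) (by positivity) r
  rw [expect_one_add W (card_pos.1 (hqpos.trans_le hq))] at moment
  have hE : 0 ≤ 1 + 𝔼 y ∈ tuples ι W, F y := by
    rw [← expect_one_add W (card_pos.1 (hqpos.trans_le hq))]
    exact expect_nonneg fun y _ => by linarith [neg_le_of_abs_le (hF y)]
  refine le_of_mul_le_mul_right ?_ (by positivity : 0 < (1 + δ / 2) ^ r)
  calc _ ≤ (1 + 𝔼 y ∈ tuples ι W, F y) ^ r * (W.powersetCard q).card := by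
        refine moment.trans' ?_
        gcongr with Q hQ
        intro h
        rw [expect_one_add Q (card_pos.1 ((mem_powersetCard.1 hQ).2 ▸ hqpos))]
        linarith
    _ ≤ (1 + δ / 8) ^ r * (W.powersetCard q).card := by gcongr
    _ ≤ Real.exp (-(δ / 8 * r)) * (1 + δ / 2) ^ r * (W.powersetCard q).card := by
        gcongr
        exact one_add_pow_le_exp_mul_one_add_pow hδ hδ1 r
    _ ≤ Real.exp (-(tailRate (Fintype.card ι) δ * q)) * (1 + δ / 2) ^ r *
          (W.powersetCard q).card := by gcongr
    _ = _ := by ring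

end Concentration

section SamplingCutNorm

variable {V : Type*}

/-- The cut norm is controlled by the box norm, an average over `2 * j`-tuples, which
concentrates. -/
lemma card_not_cutNormLE_le {W : Finset V} {q j k : ℕ} (hj : j ≠ 0) (hjk : j ≤ k) {η ε : ℝ}
    (hη : 0 < η) (hη1 : η ≤ 1) (hq : q ≤ W.card) {f : (Fin j → V) → ℝ} (hf : ∀ y, |f y| ≤ 1)
    (hcut : SetCutNormLE f W ε) (hεη : 2 ^ k * ε ≤ η ^ 2 ^ k / 8)
    (hq0 : 16 * (2 * (k : ℝ) + 1) ^ 2 / η ^ 2 ^ k ≤ q) :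
    (((W.powersetCard q).filter fun Q => ¬ CutNormLE f Q η).card : ℝ) ≤
      Real.exp (-(tailRate (2 * k) (η ^ 2 ^ k) * q)) * (W.powersetCard q).card := by
  have hqpos : 0 < q := Nat.cast_pos (α := ℝ).1 (hq0.trans_lt' (by positivity))
  have hε : 0 ≤ ε := (abs_nonneg _).trans (hcut 0 (fun _ _ _ _ => rfl) fun _ _ => Or.inl rfl)
  have hcard : (Fintype.card (Fin j ⊕ Fin j) : ℝ) = 2 * j := by
    rw [Fintype.card_sum, Fintype.card_fin]
    push_cast
    ring
  have small_box : 𝔼 w ∈ tuples (Fin j ⊕ Fin j) W, boxProd j f (w ∘ Sum.inl) (w ∘ Sum.inr) ≤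
      η ^ 2 ^ k / 8 := by
    rw [expect_tuples_sum]
    refine (hcut.cutNormLE.expect_boxProd_le (card_pos.1 (hqpos.trans_le hq)) hf).trans
      (hεη.trans' ?_)
    rw [Fintype.card_fin]
    gcongr
    exact one_le_two
  have tail := card_filter_lt_expect_le hq (by positivity) (pow_le_one₀ hη.le hη1)
    (fun w => abs_boxProd_le hf _ _) small_box (by rw [hcard]; exact hq0.trans' (by gcongr))
  rw [hcard] at tail
  calc _ ≤ (((W.powersetCard q).filter fun Q => η ^ 2 ^ k <
        𝔼 w ∈ tuples (Fin j ⊕ Fin j) Q, boxProd j f (w ∘ Sum.inl) (w ∘ Sum.inr)).card : ℝ) := by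
        gcongr with Q
        contrapose!
        rw [expect_tuples_sum]
        exact fun h => cutNormLE_of_expect_boxProd_le hj hη.le (h.trans
          (pow_le_pow_of_le_one hη.le hη1 (Nat.pow_le_pow_right two_pos hjk)))
    _ ≤ _ := tail
    _ ≤ _ := by
        unfold tailRate
        gcongr

lemma card_filter_not_le_of_cutNormLE {T : Type*} [Fintype T] {W : Finset V} {q k : ℕ}
    {p : T → Prop} {j : T → ℕ} {f : ∀ τ, (Fin (j τ) → V) → ℝ} {R : Finset V → Prop} {η ε : ℝ}
    (hR : ∀ Q, (∀ τ, p τ → CutNormLE (f τ) Q η) → R Q) (hj : ∀ τ, p τ → j τ ≠ 0 ∧ j τ ≤ k)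
    (hf : ∀ τ, p τ → ∀ y, |f τ y| ≤ 1) (hcut : ∀ τ, p τ → SetCutNormLE (f τ) W ε)
    (hη : 0 < η) (hη1 : η ≤ 1) (hq : q ≤ W.card) (hεη : 2 ^ k * ε ≤ η ^ 2 ^ k / 8)
    (hq0 : 16 * (2 * (k : ℝ) + 1) ^ 2 / η ^ 2 ^ k ≤ q) :
    (((W.powersetCard q).filter fun Q => ¬ R Q).card : ℝ) ≤
      Fintype.card T *
        (Real.exp (-(tailRate (2 * k) (η ^ 2 ^ k) * q)) * (W.powersetCard q).card) := by
  have cover : ((W.powersetCard q).filter fun Q => ¬ R Q) ⊆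
      (univ.filter p).biUnion fun τ =>
        (W.powersetCard q).filter fun Q => ¬ CutNormLE (f τ) Q η := by
    intro Q hQ
    obtain ⟨hQ, h⟩ := mem_filter.1 hQ
    have := mt (hR Q) h
    push Not at this
    obtain ⟨τ, hτ, h⟩ := this
    exact mem_biUnion.2 ⟨τ, mem_filter.2 ⟨mem_univ τ, hτ⟩, mem_filter.2 ⟨hQ, h⟩⟩
  calc _ ≤ ∑ τ ∈ univ.filter p,
        (((W.powersetCard q).filter fun Q => ¬ CutNormLE (f τ) Q η).card : ℝ) := by
        exact_mod_cast (card_le_card cover).trans card_biUnion_le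
    _ ≤ ∑ _τ ∈ univ.filter p,
        Real.exp (-(tailRate (2 * k) (η ^ 2 ^ k) * q)) * ((W.powersetCard q).card : ℝ) := by
        refine sum_le_sum fun τ hτ => ?_
        have hτ := (mem_filter.1 hτ).2
        exact card_not_cutNormLE_le (hj τ hτ).1 (hj τ hτ).2 hη hη1 hq (hf τ hτ) (hcut τ hτ)
          hεη hq0
    _ ≤ _ := by
        rw [sum_const, nsmul_eq_mul]
        gcongr
        exact card_le_univ _

end SamplingCutNorm

section Patterns

variable {V : Type*} [DecidableEq V]

lemma card_image_le_card_image {α β γ : Type*} [DecidableEq β] [DecidableEq γ] {s : Finset α}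
    {f : α → β} {g : α → γ}
    (h : ∀ x ∈ s, ∀ y ∈ s, g x = g y → f x = f y) :
    (s.image f).card ≤ (s.image g).card := by
  refine card_le_card_of_forall_subsingleton (fun b c => ∃ x ∈ s, f x = b ∧ g x = c) ?_ ?_
  · intro b hb
    obtain ⟨x, hx, rfl⟩ := mem_image.1 hb
    exact ⟨g x, mem_image_of_mem g hx, x, hx, rfl, rfl⟩
  · rintro c - b ⟨-, x, hx, rfl, hxc⟩ b' ⟨-, y, hy, rfl, hyc⟩
    exact h x hx y hy (hxc.trans hyc.symm)

namespace LabFam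

variable (F : LabFam V)

/-- `T` is a crossing set with indices in `X`, each of whose subsets `R` with `2 ≤ |R| ≤ m` carries
the label that `ℓ` assigns to the indices of `R`. The pairs `(X, ℓ)` extend the addresses: `ℓ` is
not required to take values in the label ranges, nor to vanish on irrelevant index sets. -/
def HasPattern (m : ℕ) (X : Finset ℕ) (ℓ : Finset ℕ → ℕ) (T : Finset V) : Prop :=
  T ⊆ F.gnd ∧ Set.InjOn F.vIdx T ∧ T.image F.vIdx ⊆ X ∧
    ∀ R ⊆ T, 2 ≤ R.card → R.card ≤ m → F.lbl R.card R = ℓ (R.image F.vIdx)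

/-- The `j`-sets with a given pattern: for `m = j` these form the `j`-polyad of the pattern, for
`m = j - 1` the clique set of its `(j - 1)`-polyad. -/
noncomputable def patternSet (j m : ℕ) (X : Finset ℕ) (ℓ : Finset ℕ → ℕ) : Finset (Finset V) :=
  (F.gnd.powersetCard j).filter (F.HasPattern m X ℓ)

/-- The pattern of a crossing set `J`: the label of a subset of `J`, in terms of its index set. -/
def labelsOf (J : Finset V) (M : Finset ℕ) : ℕ := F.lbl M.card (J.filter fun v => F.vIdx v ∈ M)

/-- The clique set `K_j(S)` of a `(j - 1)`-graph `S`. -/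
def cliques (j : ℕ) (S : Finset (Finset V)) : Finset (Finset V) :=
  KsetC F.gnd (F.cross j) (j - 1) j S

/-- The vertex classes are the fibres of the index function. -/
def ClassesByIndex : Prop :=
  ∀ v ∈ F.gnd, F.vClass v = F.gnd.filter fun u => F.vIdx u = F.vIdx v

/-- The part of a crossing `j`-set consists of the `j`-sets with the same pattern. -/
def PartsByLabel (j : ℕ) : Prop :=
  ∀ J ∈ F.cross j, F.cls j J = F.patternSet j j (J.image F.vIdx) (F.labelsOf J)

variable {F} {j m : ℕ} {X : Finset ℕ} {ℓ ℓ' : Finset ℕ → ℕ} {T T' J J' R I : Finset V}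

lemma mem_patternSet : T ∈ F.patternSet j m X ℓ ↔ T.card = j ∧ F.HasPattern m X ℓ T := by
  simp only [patternSet, mem_filter, mem_powersetCard, HasPattern]
  tauto

lemma HasPattern.subset (h : F.HasPattern m X ℓ T) (hT : T' ⊆ T) : F.HasPattern m X ℓ T' :=
  ⟨hT.trans h.1, h.2.1.mono (by exact_mod_cast hT), (image_subset_image hT).trans h.2.2.1,
    fun R hR => h.2.2.2 R (hR.trans hT)⟩

lemma HasPattern.congr (h : F.HasPattern m X ℓ T)
    (hl : ∀ M ⊆ X, 2 ≤ M.card → M.card ≤ m → ℓ M = ℓ' M) : F.HasPattern m X ℓ' T := by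
  refine ⟨h.1, h.2.1, h.2.2.1, fun R hR h2 hm => ?_⟩
  have hc : (R.image F.vIdx).card = R.card :=
    card_image_of_injOn (h.2.1.mono (by exact_mod_cast hR))
  rw [h.2.2.2 R hR h2 hm, hl _ ((image_subset_image hR).trans h.2.2.1) (by omega) (by omega)]

lemma patternSet_congr (hl : ∀ M ⊆ X, 2 ≤ M.card → M.card ≤ m → ℓ M = ℓ' M) :
    F.patternSet j m X ℓ = F.patternSet j m X ℓ' := by
  ext T
  rw [mem_patternSet, mem_patternSet]
  exact and_congr_right fun _ => ⟨fun h => h.congr hl,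
    fun h => h.congr fun M hM h2 hm => (hl M hM h2 hm).symm⟩

lemma hasPattern_iff_of_card_eq (hj : 2 ≤ j) (hT : T.card = j) :
    F.HasPattern j X ℓ T ↔ F.HasPattern (j - 1) X ℓ T ∧ F.lbl j T = ℓ (T.image F.vIdx) := by
  constructor
  · intro h
    refine ⟨⟨h.1, h.2.1, h.2.2.1, fun R hR h2 hm => h.2.2.2 R hR h2 (by omega)⟩, ?_⟩
    simpa only [hT] using h.2.2.2 T subset_rfl (by omega) hT.le
  · rintro ⟨h, hl⟩
    refine ⟨h.1, h.2.1, h.2.2.1, fun R hR h2 hm => ?_⟩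
    rcases hm.eq_or_lt with hm | hm
    · rw [eq_of_subset_of_card_le hR (by omega), hT, hl]
    · exact h.2.2.2 R hR h2 (by omega)

lemma hasPattern_of_forall_powersetCard (hm : 1 ≤ m) (hmI : m ≤ I.card)
    (hI : m = 1 → Set.InjOn F.vIdx I) (h : ∀ T ∈ I.powersetCard m, F.HasPattern m X ℓ T) :
    F.HasPattern m X ℓ I := by
  have covered : ∀ R ⊆ I, R.card ≤ m → F.HasPattern m X ℓ R := by
    intro R hR hRm
    obtain ⟨T, hRT, hTI, hT⟩ := exists_subsuperset_card_eq hR hRm hmI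
    exact (h T (mem_powersetCard.2 ⟨hTI, hT⟩)).subset hRT
  have singletons : ∀ v ∈ I, F.HasPattern m X ℓ {v} := fun v hv =>
    covered {v} (singleton_subset_iff.2 hv) (by simpa using hm)
  refine ⟨fun v hv => singleton_subset_iff.1 (singletons v hv).1, ?_, ?_,
    fun R hR h2 hRm => (covered R hR hRm).2.2.2 R subset_rfl h2 hRm⟩
  · rcases hm.eq_or_lt with hm | hm
    · exact hI hm.symm
    · intro u hu v hv huv
      exact (covered {u, v} (insert_subset hu (singleton_subset_iff.2 hv))
        (card_le_two.trans hm)).2.1 (by simp) (by simp) huv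
  · intro i hi
    obtain ⟨v, hv, rfl⟩ := mem_image.1 hi
    exact (singletons v hv).2.2.1 (mem_image_of_mem _ (mem_singleton_self v))

lemma patternSet_one : F.patternSet 1 1 X ℓ = sing (F.gnd.filter fun v => F.vIdx v ∈ X) := by
  ext T
  simp only [sing, mem_image, mem_filter, mem_patternSet, HasPattern]
  constructor
  · rintro ⟨hT, hTg, -, hX, -⟩
    obtain ⟨v, rfl⟩ := card_eq_one.1 hT
    exact ⟨v, ⟨singleton_subset_iff.1 hTg, by simpa using hX⟩, rfl⟩
  · rintro ⟨v, ⟨hv, hvX⟩, rfl⟩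
    exact ⟨card_singleton v, singleton_subset_iff.2 hv, by simp, by simpa using hvX,
      fun R _ h2 h1 => by omega⟩

lemma filter_vIdx_mem_image (hJ : Set.InjOn F.vIdx J) (hR : R ⊆ J) :
    J.filter (fun v => F.vIdx v ∈ R.image F.vIdx) = R := by
  ext v
  simp only [mem_filter, mem_image]
  constructor
  · rintro ⟨hv, u, hu, huv⟩
    rwa [← hJ (hR hu) hv huv]
  · exact fun hv => ⟨hR hv, v, hv, rfl⟩

lemma image_filter_vIdx_mem {M : Finset ℕ} (hM : M ⊆ J.image F.vIdx) :
    (J.filter fun v => F.vIdx v ∈ M).image F.vIdx = M := by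
  ext i
  simp only [mem_image, mem_filter]
  constructor
  · rintro ⟨v, ⟨-, hv⟩, rfl⟩
    exact hv
  · intro hi
    obtain ⟨v, hv, rfl⟩ := mem_image.1 (hM hi)
    exact ⟨v, ⟨hv, hi⟩, rfl⟩

lemma labelsOf_image (hJ : Set.InjOn F.vIdx J) (hR : R ⊆ J) :
    F.labelsOf J (R.image F.vIdx) = F.lbl R.card R := by
  rw [labelsOf, filter_vIdx_mem_image hJ hR,
    card_image_of_injOn (hJ.mono (by exact_mod_cast hR))]

lemma hasPattern_labelsOf (hJg : J ⊆ F.gnd) (hJ : Set.InjOn F.vIdx J) (m : ℕ) :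
    F.HasPattern m (J.image F.vIdx) (F.labelsOf J) J :=
  ⟨hJg, hJ, subset_rfl, fun _ hR _ _ => (labelsOf_image hJ hR).symm⟩

lemma HasPattern.labelsOf_eq (h : F.HasPattern m X ℓ T) {M : Finset ℕ}
    (hM : M ⊆ T.image F.vIdx) (h2 : 2 ≤ M.card) (hm : M.card ≤ m) : F.labelsOf T M = ℓ M := by
  obtain ⟨R, hR, rfl⟩ : ∃ R ⊆ T, R.image F.vIdx = M :=
    ⟨_, filter_subset _ _, image_filter_vIdx_mem hM⟩
  have hc : (R.image F.vIdx).card = R.card :=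
    card_image_of_injOn (h.2.1.mono (by exact_mod_cast hR))
  rw [labelsOf_image h.2.1 hR]
  exact h.2.2.2 R hR (by omega) (by omega)

lemma HasPattern.patternSet_labelsOf (h : F.HasPattern m X ℓ T) (hX : T.image F.vIdx = X) :
    F.patternSet j m X (F.labelsOf T) = F.patternSet j m X ℓ :=
  patternSet_congr fun _ hM h2 hm => h.labelsOf_eq (hX ▸ hM) h2 hm

lemma HasPattern.image_eq (h : F.HasPattern m (J.image F.vIdx) ℓ I) (hI : I.card = J.card) :
    I.image F.vIdx = J.image F.vIdx := by
  refine eq_of_subset_of_card_le h.2.2.1 ?_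
  rw [card_image_of_injOn h.2.1, hI]
  exact card_image_le

lemma labelsOf_subset (hJ : Set.InjOn F.vIdx J) (hJ' : J' ⊆ J) {M : Finset ℕ}
    (hM : M ⊆ J'.image F.vIdx) : F.labelsOf J' M = F.labelsOf J M := by
  obtain ⟨R, hR, rfl⟩ : ∃ R ⊆ J', R.image F.vIdx = M :=
    ⟨_, filter_subset _ _, image_filter_vIdx_mem hM⟩
  rw [labelsOf_image hJ (hR.trans hJ'), labelsOf_image (hJ.mono (by exact_mod_cast hJ')) hR]

namespace ClassesByIndex

lemma vClass_eq_iff (hF : F.ClassesByIndex) {u v : V} (hu : u ∈ F.gnd) (hv : v ∈ F.gnd) :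
    F.vClass u = F.vClass v ↔ F.vIdx u = F.vIdx v := by
  rw [hF u hu, hF v hv]
  refine ⟨fun h => ?_, fun h => by rw [h]⟩
  have : u ∈ F.gnd.filter fun w => F.vIdx w = F.vIdx v := h ▸ mem_filter.2 ⟨hu, rfl⟩
  exact (mem_filter.1 this).2

lemma mem_cross (hF : F.ClassesByIndex) :
    I ∈ F.cross j ↔ I ⊆ F.gnd ∧ I.card = j ∧ Set.InjOn F.vIdx I := by
  simp only [PartFam.cross, mem_filter, mem_powersetCard, and_assoc]
  refine and_congr_right fun hI => and_congr_right fun _ => ?_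
  constructor
  · intro h u hu v hv huv
    by_contra hne
    exact h u hu v hv hne ((hF.vClass_eq_iff (hI hu) (hI hv)).2 huv)
  · intro h u hu v hv hne huv
    exact hne (h hu hv ((hF.vClass_eq_iff (hI hu) (hI hv)).1 huv))

lemma polyad_one (hF : F.ClassesByIndex) (hJ : J ⊆ F.gnd) :
    F.polyad 1 J = F.patternSet 1 1 (J.image F.vIdx) ℓ := by
  rw [patternSet_one, PartFam.polyad, if_pos rfl]
  congr 1
  ext v
  simp only [mem_sup, mem_filter, mem_image]
  constructor
  · rintro ⟨u, hu, hv⟩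
    rw [hF u (hJ hu), mem_filter] at hv
    exact ⟨hv.1, u, hu, hv.2.symm⟩
  · rintro ⟨hv, u, hu, huv⟩
    exact ⟨u, hu, by rw [hF u (hJ hu)]; exact mem_filter.2 ⟨hv, huv.symm⟩⟩

lemma polyad_eq (hF : F.ClassesByIndex) (hm : 1 ≤ m) (hparts : 2 ≤ m → F.PartsByLabel m)
    (hJ : J ∈ F.cross j) :
    F.polyad m J = F.patternSet m m (J.image F.vIdx) (F.labelsOf J) := by
  obtain ⟨hJg, -, hJi⟩ := hF.mem_cross.1 hJ
  rcases hm.eq_or_lt with rfl | hm2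
  · exact hF.polyad_one hJg
  have part_eq : ∀ R ⊆ J, R.card = m →
      F.cls m R = F.patternSet m m (R.image F.vIdx) (F.labelsOf J) := by
    intro R hR hRm
    rw [hparts hm2 R (hF.mem_cross.2 ⟨hR.trans hJg, hRm, hJi.mono (by exact_mod_cast hR)⟩)]
    exact patternSet_congr fun M hM _ _ => labelsOf_subset hJi hR hM
  ext T
  rw [PartFam.polyad, if_neg (by omega), mem_sup]
  constructor
  · rintro ⟨R, hR, hT⟩
    rw [mem_powersetCard] at hR
    rw [part_eq R hR.1 hR.2, mem_patternSet] at hT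
    exact mem_patternSet.2 ⟨hT.1, hT.2.1, hT.2.2.1,
      hT.2.2.2.1.trans (image_subset_image hR.1), hT.2.2.2.2⟩
  · intro hT
    rw [mem_patternSet] at hT
    obtain ⟨R, hR, hRT⟩ : ∃ R ⊆ J, R.image F.vIdx = T.image F.vIdx :=
      ⟨_, filter_subset _ _, image_filter_vIdx_mem hT.2.2.2.1⟩
    have hRm : R.card = m := by
      rw [← card_image_of_injOn (hJi.mono (by exact_mod_cast hR)), hRT,
        card_image_of_injOn hT.2.2.1, hT.1]
    refine ⟨R, mem_powersetCard.2 ⟨hR, hRm⟩, ?_⟩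
    rw [part_eq R hR hRm, mem_patternSet]
    exact ⟨hT.1, hT.2.1, hT.2.2.1, hRT ▸ subset_rfl, hT.2.2.2.2⟩

lemma mem_cliques (hF : F.ClassesByIndex) (hj : 2 ≤ j) {S : Finset (Finset V)}
    (hS : S ⊆ F.patternSet (j - 1) (j - 1) X ℓ) :
    I ∈ F.cliques j S ↔
      F.HasPattern (j - 1) X ℓ I ∧ I.card = j ∧ ∀ T ∈ I.powersetCard (j - 1), T ∈ S := by
  have pattern : (∀ T ∈ I.powersetCard (j - 1), T ∈ S) → I.card = j →
      (j - 1 = 1 → Set.InjOn F.vIdx I) → F.HasPattern (j - 1) X ℓ I := fun h hI hi =>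
    hasPattern_of_forall_powersetCard (by omega) (by omega) hi fun T hT =>
      (mem_patternSet.1 (hS (h T hT))).2
  rw [cliques, KsetC]
  split_ifs with h1
  · have vertices : (∀ v ∈ I, {v} ∈ S) ↔ ∀ T ∈ I.powersetCard (j - 1), T ∈ S := by
      simp [h1, powersetCard_one]
    rw [mem_filter, hF.mem_cross, vertices]
    exact ⟨fun ⟨⟨_, hc, hi⟩, h⟩ => ⟨pattern h hc fun _ => hi, hc, h⟩,
      fun ⟨hm, hc, h⟩ => ⟨⟨hm.1, hc, hm.2.1⟩, h⟩⟩
  · rw [Kset, mem_filter, mem_powersetCard (t := F.gnd)]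
    exact ⟨fun ⟨⟨_, hc⟩, h⟩ => ⟨pattern h hc fun h' => absurd h' h1, hc, h⟩,
      fun ⟨hm, hc, h⟩ => ⟨⟨hm.1, hc⟩, h⟩⟩

lemma cliques_patternSet (hF : F.ClassesByIndex) (hj : 2 ≤ j) :
    F.cliques j (F.patternSet (j - 1) (j - 1) X ℓ) = F.patternSet j (j - 1) X ℓ := by
  ext I
  rw [hF.mem_cliques hj subset_rfl, mem_patternSet]
  refine ⟨fun h => ⟨h.2.1, h.1⟩, fun h => ⟨h.2, h.1, fun T hT => ?_⟩⟩
  rw [mem_powersetCard] at hT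
  exact mem_patternSet.2 ⟨hT.2, h.2.subset hT.1⟩

lemma polyCliques_eq (hF : F.ClassesByIndex) (hj : 2 ≤ j)
    (hparts : 2 ≤ j - 1 → F.PartsByLabel (j - 1)) (hJ : J ∈ F.cross j) :
    F.polyCliques j J = F.patternSet j (j - 1) (J.image F.vIdx) (F.labelsOf J) := by
  rw [PartFam.polyCliques, hF.polyad_eq (by omega) hparts hJ]
  exact hF.cliques_patternSet hj

end ClassesByIndex

variable {k : ℕ} {a : ℕ → ℕ}

lemma IsLabeled.classesByIndex (hF : F.IsLabeled k a) : F.ClassesByIndex := by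
  obtain ⟨⟨self_mem, subset_gnd, class_eq, -⟩, -, idx_iff, -⟩ := hF
  intro v hv
  ext u
  rw [mem_filter]
  constructor
  · intro hu
    have hug := subset_gnd v hv hu
    exact ⟨hug, (idx_iff u hug v hv).2 (class_eq u hug v hv hu)⟩
  · rintro ⟨hu, huv⟩
    rw [← (idx_iff u hu v hv).1 huv]
    exact self_mem u hu

lemma IsLabeled.partsByLabel (hF : F.IsLabeled k a) (hj : 2 ≤ j) (hjk : j ≤ k - 1) :
    F.PartsByLabel j := by
  induction j using Nat.strong_induction_on with
  | _ j ih =>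
    intro J hJ
    have hV := hF.classesByIndex
    have lower : 2 ≤ j - 1 → F.PartsByLabel (j - 1) := fun h => ih _ (by omega) h (by omega)
    obtain ⟨hfam, -, -, hlab⟩ := hF
    obtain ⟨self_mem, -, subset_cliques, -, -⟩ := hfam.2.2.2.2.2 j hj hjk
    obtain ⟨-, lbl_const, lbl_inj⟩ := hlab j hj hjk
    obtain ⟨-, hJc, hJi⟩ := hV.mem_cross.1 hJ
    have hlbl : F.labelsOf J (J.image F.vIdx) = F.lbl j J := by
      rw [labelsOf_image hJi subset_rfl, hJc]
    ext I
    rw [mem_patternSet]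
    constructor
    · intro hI
      have hIc := subset_cliques J hJ hI
      rw [hV.polyCliques_eq hj lower hJ, mem_patternSet] at hIc
      refine ⟨hIc.1, (hasPattern_iff_of_card_eq hj hIc.1).2 ⟨hIc.2, ?_⟩⟩
      rw [hIc.2.image_eq (hIc.1.trans hJc.symm), hlbl, lbl_const J hJ I hI]
    · rintro ⟨hIc, hI⟩
      have hIcr : I ∈ F.cross j := hV.mem_cross.2 ⟨hI.1, hIc, hI.2.1⟩
      have himg := hI.image_eq (hIc.trans hJc.symm)
      have polyad_eq : F.polyad (j - 1) I = F.polyad (j - 1) J := by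
        rw [hV.polyad_eq (by omega) lower hIcr, hV.polyad_eq (by omega) lower hJ, himg]
        exact patternSet_congr fun M hM h2 _ => hI.labelsOf_eq (himg ▸ hM) h2 (by omega)
      have lbl_eq := ((hasPattern_iff_of_card_eq hj hIc).1 hI).2
      rw [himg, hlbl] at lbl_eq
      rw [← lbl_inj I hIcr J hJ polyad_eq lbl_eq]
      exact self_mem I hIcr

lemma addrOf_eq_restrictA_iff {x : Addr} {B : Finset ℕ} (hT : Set.InjOn F.vIdx T) :
    F.addrOf m T = restrictA x m B ↔ T.image F.vIdx = B ∧
      ∀ R ⊆ T, 2 ≤ R.card → R.card ≤ m → F.lbl R.card R = x.2 (R.image F.vIdx) := by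
  rw [Prod.ext_iff]
  refine and_congr_right fun himg => ?_
  change T.image F.vIdx = B at himg
  subst himg
  constructor
  · intro h R hR h2 hm
    have hRc : (R.image F.vIdx).card = R.card :=
      card_image_of_injOn (hT.mono (by exact_mod_cast hR))
    have hRI : R.image F.vIdx ⊆ T.image F.vIdx ∧ 2 ≤ (R.image F.vIdx).card ∧
        (R.image F.vIdx).card ≤ m := ⟨image_subset_image hR, by omega, by omega⟩
    have := congrFun h (R.image F.vIdx)
    simp only [addrOf, restrictA, if_pos hRI] at this
    rw [← this]
    exact (labelsOf_image hT hR).symm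
  · intro h
    funext M
    simp only [addrOf, restrictA]
    split_ifs with hM
    · obtain ⟨R, hR, rfl⟩ : ∃ R ⊆ T, R.image F.vIdx = M :=
        ⟨_, filter_subset _ _, image_filter_vIdx_mem hM.1⟩
      have hRc : (R.image F.vIdx).card = R.card :=
        card_image_of_injOn (hT.mono (by exact_mod_cast hR))
      rw [← h R hR (by omega) (by omega)]
      exact labelsOf_image hT hR
    · rfl

lemma ClassesByIndex.polyAt_eq (hF : F.ClassesByIndex) (hm : 1 ≤ m) (x : Addr) :
    F.polyAt m x = F.patternSet m m x.1 x.2 := by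
  rcases hm.eq_or_lt with rfl | hm2
  · rw [patternSet_one, polyAt, if_pos rfl]
  ext T
  have mem_partAt : ∀ B, T ∈ F.partAt m (restrictA x (m - 1) B) (x.2 B) ↔
      T ∈ F.cross m ∧ F.addrOf (m - 1) T = restrictA x (m - 1) B ∧ F.lbl m T = x.2 B := by
    intro B
    rw [partAt, if_neg (by omega), mem_filter]
  simp only [polyAt, if_neg (show m ≠ 1 by omega), mem_sup, mem_partAt, mem_powersetCard,
    mem_patternSet]
  constructor
  · rintro ⟨B, ⟨hB, -⟩, hT, haddr, hlbl⟩
    obtain ⟨hTg, hTc, hTi⟩ := hF.mem_cross.1 hT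
    obtain ⟨rfl, hlow⟩ := (addrOf_eq_restrictA_iff hTi).1 haddr
    exact ⟨hTc, (hasPattern_iff_of_card_eq hm2 hTc).2 ⟨⟨hTg, hTi, hB, hlow⟩, hlbl⟩⟩
  · rintro ⟨hTc, hT⟩
    obtain ⟨⟨hTg, hTi, hTX, hlow⟩, hlbl⟩ := (hasPattern_iff_of_card_eq hm2 hTc).1 hT
    exact ⟨T.image F.vIdx, ⟨hTX, by rw [card_image_of_injOn hTi, hTc]⟩,
      hF.mem_cross.2 ⟨hTg, hTc, hTi⟩, (addrOf_eq_restrictA_iff hTi).2 ⟨rfl, hlow⟩, hlbl⟩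

end LabFam

end Patterns

section Follow

variable {V : Type*} [DecidableEq V]

namespace LabFam

variable (F : LabFam V) {j : ℕ}

/-- `y` is a tuple with index pattern `c` whose sub-tuples indexed by `𝓛` have labels `ℓ`. -/
def Follows (c : Fin j → ℕ) (ℓ : Finset ℕ → ℕ) (𝓛 : Finset (Finset (Fin j)))
    (y : Fin j → V) : Prop :=
  (∀ i, y i ∈ F.gnd ∧ F.vIdx (y i) = c i) ∧
    ∀ L ∈ 𝓛, F.lbl L.card (L.image y) = ℓ (L.image c)

/-- The sets of coordinates whose sub-tuples carry a label up to level `m`. -/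
def labelledSets (j m : ℕ) : Finset (Finset (Fin j)) :=
  univ.filter fun L => 2 ≤ L.card ∧ L.card ≤ m

/-- The indicator of `A` on the ordered cliques of the `(j - 1)`-polyad with pattern `(c, ℓ)`,
centred at `d`; it vanishes on all other tuples. -/
noncomputable def centeredIndicator (c : Fin j → ℕ) (ℓ : Finset ℕ → ℕ) (A : Finset V → Prop)
    (d : ℝ) (y : Fin j → V) : ℝ :=
  if F.Follows c ℓ (labelledSets j (j - 1)) y then (if A (univ.image y) then 1 else 0) - d else 0

variable {F} {c : Fin j → ℕ} {ℓ : Finset ℕ → ℕ} {𝓛 : Finset (Finset (Fin j))} {y : Fin j → V}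
  {A B S : Finset (Finset V)} {d ε : ℝ}

lemma mem_labelledSets {m : ℕ} {L : Finset (Fin j)} :
    L ∈ labelledSets j m ↔ 2 ≤ L.card ∧ L.card ≤ m := by
  simp [labelledSets]

lemma abs_centeredIndicator_le (c : Fin j → ℕ) (ℓ : Finset ℕ → ℕ) (A : Finset V → Prop)
    (hd : 0 ≤ d) (hd1 : d ≤ 1) (y : Fin j → V) : |F.centeredIndicator c ℓ A d y| ≤ 1 := by
  rw [centeredIndicator]
  split_ifs <;> rw [abs_le] <;> constructor <;> linarith

lemma Follows.injective (hc : Function.Injective c) (h : F.Follows c ℓ 𝓛 y) :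
    Function.Injective y := by
  intro i i' hii
  exact hc (by rw [← (h.1 i).2, ← (h.1 i').2, hii])

lemma Follows.injOn (hc : Function.Injective c) (h : F.Follows c ℓ 𝓛 y) :
    Set.InjOn F.vIdx (univ.image y : Finset V) := by
  intro u hu v hv huv
  simp only [coe_image, coe_univ, Set.image_univ, Set.mem_range] at hu hv
  obtain ⟨i, rfl⟩ := hu
  obtain ⟨i', rfl⟩ := hv
  rw [(h.1 i).2, (h.1 i').2] at huv
  rw [hc huv]

lemma image_vIdx_image (hy : ∀ i, F.vIdx (y i) = c i) (L : Finset (Fin j)) :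
    (L.image y).image F.vIdx = L.image c := by
  rw [Finset.image_image]
  exact image_congr fun i _ => hy i

lemma Follows.image_image (h : F.Follows c ℓ 𝓛 y) (L : Finset (Fin j)) :
    (L.image y).image F.vIdx = L.image c :=
  image_vIdx_image (fun i => (h.1 i).2) L

lemma Follows.hasPattern {m : ℕ} (hc : Function.Injective c)
    (h : F.Follows c ℓ (labelledSets j m) y) :
    F.HasPattern m (univ.image c) ℓ (univ.image y) := by
  refine ⟨?_, h.injOn hc, (h.image_image univ).subset, fun R hR h2 hm => ?_⟩
  · intro v hv
    obtain ⟨i, -, rfl⟩ := mem_image.1 hv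
    exact (h.1 i).1
  · obtain ⟨L, -, rfl⟩ := subset_image_iff.1 hR
    have hLc : (L.image y).card = L.card := card_image_of_injective _ (h.injective hc)
    rw [h.image_image L, hLc]
    exact h.2 L (mem_labelledSets.2 (by omega))

lemma Follows.image_erase_mem_patternSet (hc : Function.Injective c) {m : ℕ}
    (h : F.Follows c ℓ (labelledSets j m) y) (i : Fin j) :
    (univ.erase i).image y ∈ F.patternSet (j - 1) m (univ.image c) ℓ := by
  refine mem_patternSet.2 ⟨?_, (h.hasPattern hc).subset (image_subset_image (subset_univ _))⟩
  rw [card_image_of_injective _ (h.injective hc)]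
  simp

lemma exists_follows {m : ℕ} (hc : Function.Injective c) {I : Finset V}
    (h : F.HasPattern m (univ.image c) ℓ I) (hI : I.card = j) :
    ∃ y, F.Follows c ℓ (labelledSets j m) y ∧ univ.image y = I := by
  have himg : I.image F.vIdx = univ.image c := by
    refine eq_of_subset_of_card_le h.2.2.1 ?_
    rw [card_image_of_injOn h.2.1, hI]
    exact card_image_le.trans (by simp)
  have hex : ∀ i, ∃ v ∈ I, F.vIdx v = c i := fun i =>
    mem_image.1 (himg ▸ mem_image_of_mem c (mem_univ i))
  choose y hy hyc using hex
  have hinj : Function.Injective y := fun i i' hii => hc (by rw [← hyc, ← hyc, hii])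
  have hyI : univ.image y = I := by
    refine eq_of_subset_of_card_le ?_ ?_
    · intro v hv
      obtain ⟨i, -, rfl⟩ := mem_image.1 hv
      exact hy i
    · rw [card_image_of_injective _ hinj, hI]; simp
  refine ⟨y, ⟨fun i => ⟨h.1 (hy i), hyc i⟩, fun L hL => ?_⟩, hyI⟩
  rw [mem_labelledSets] at hL
  have hLc : (L.image y).card = L.card := card_image_of_injective _ hinj
  have hsub : L.image y ⊆ I := hyI ▸ image_subset_image (subset_univ L)
  have := h.2.2.2 (L.image y) hsub (by omega) (by omega)
  rwa [hLc, image_vIdx_image hyc] at this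

section Cliques

lemma image_erase_mem_of_powersetCard {T : Finset V} (hy : Function.Injective y)
    (h : ∀ i, (univ.erase i).image y ∈ S) (hT : T ∈ (univ.image y).powersetCard (j - 1))
    (hj : 1 ≤ j) : T ∈ S := by
  rw [mem_powersetCard] at hT
  obtain ⟨L, -, rfl⟩ := subset_image_iff.1 hT.1
  rw [card_image_of_injective _ hy] at hT
  have : (Lᶜ).card = 1 := by rw [card_compl, hT.2]; simp; omega
  obtain ⟨i, hi⟩ := card_eq_one.1 this
  have : L = univ.erase i := by rw [← compl_compl L, hi]; ext; simp
  rw [this]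
  exact h i

lemma sum_cliques_eq (hF : F.ClassesByIndex) (hj : 2 ≤ j) (hc : Function.Injective c)
    (hS : S ⊆ F.patternSet (j - 1) (j - 1) (univ.image c) ℓ) (g : Finset V → ℝ) :
    ∑ I ∈ F.cliques j S, g I =
      ∑ y ∈ (tuples (Fin j) F.gnd).filter fun y => F.Follows c ℓ (labelledSets j (j - 1)) y ∧
        ∀ i, (univ.erase i).image y ∈ S, g (univ.image y) := by
  symm
  refine sum_bij (fun y _ => univ.image y) ?_ ?_ ?_ (fun _ _ => rfl)
  · intro y hy
    obtain ⟨-, hy, hyS⟩ := mem_filter.1 hy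
    have hinj := hy.injective hc
    have hcard : (univ.image y).card = j := by rw [card_image_of_injective _ hinj]; simp
    exact (hF.mem_cliques hj hS).2 ⟨hy.hasPattern hc, hcard,
      fun T hT => image_erase_mem_of_powersetCard hinj hyS hT (by omega)⟩
  · intro y hy y' hy' hyy
    rw [mem_filter] at hy hy'
    funext i
    have : y i ∈ univ.image y' := hyy ▸ mem_image_of_mem y (mem_univ i)
    obtain ⟨i', -, hi'⟩ := mem_image.1 this
    have : i' = i := hc (by rw [← (hy.2.1.1 i).2, ← (hy'.2.1.1 i').2, hi'])
    rw [← hi', this]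
  · intro I hI
    rw [hF.mem_cliques hj hS] at hI
    obtain ⟨y, hy, rfl⟩ := exists_follows hc hI.1 hI.2.1
    refine ⟨y, mem_filter.2 ⟨mem_tuples.2 fun i => (hy.1 i).1, hy, fun i => hI.2.2 _ ?_⟩, rfl⟩
    rw [mem_powersetCard, card_image_of_injective _ (hy.injective hc)]
    exact ⟨image_subset_image (subset_univ _), by simp⟩

lemma card_cliques_eq (hF : F.ClassesByIndex) (hj : 2 ≤ j) (hc : Function.Injective c) :
    (F.cliques j (F.patternSet (j - 1) (j - 1) (univ.image c) ℓ)).card =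
      ((tuples (Fin j) F.gnd).filter (F.Follows c ℓ (labelledSets j (j - 1)))).card := by
  have h := sum_cliques_eq (ℓ := ℓ) hF hj hc subset_rfl fun _ => 1
  simp only [sum_const, nsmul_eq_mul, mul_one, Nat.cast_inj] at h
  rw [h]
  congr 1
  exact filter_congr fun y _ =>
    ⟨fun h => h.1, fun h => ⟨h, h.image_erase_mem_patternSet hc⟩⟩

lemma card_inter_cliques_sub (hF : F.ClassesByIndex) (hj : 2 ≤ j) (hc : Function.Injective c)
    (hS : S ⊆ F.patternSet (j - 1) (j - 1) (univ.image c) ℓ) (A : Finset (Finset V)) (d : ℝ) :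
    ((A ∩ F.cliques j S).card : ℝ) - d * ((F.cliques j S).card : ℝ) =
      ∑ y ∈ tuples (Fin j) F.gnd, F.centeredIndicator c ℓ (· ∈ A) d y *
        ∏ i, (if (univ.erase i).image y ∈ S then (1 : ℝ) else 0) := by
  have h := sum_cliques_eq hF hj hc hS (fun I => (if I ∈ A then (1 : ℝ) else 0) - d)
  rw [sum_sub_distrib, sum_const, sum_boole, nsmul_eq_mul, mul_comm _ d, filter_mem_eq_inter,
    inter_comm] at h
  rw [h, sum_filter]
  refine sum_congr rfl fun y _ => ?_
  rw [prod_boole, centeredIndicator]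
  by_cases h1 : F.Follows c ℓ (labelledSets j (j - 1)) y <;>
    by_cases h2 : ∀ i, (univ.erase i).image y ∈ S <;> simp [h1, h2]

lemma cliques_subset (hS : S ⊆ B) : F.cliques j S ⊆ F.cliques j B := by
  unfold cliques KsetC Kset
  split_ifs
  · exact monotone_filter_right _ fun I _ hI v hv => hS (hI v hv)
  · exact monotone_filter_right _ fun I _ hI T hT => hS (hI T hT)

lemma regPairC_iff (hj : 1 ≤ j) :
    RegPairC F.gnd (F.cross j) (j - 1) ε d A B ↔ ∀ S ⊆ B,
      ε * ((F.cliques j B).card : ℝ) ≤ (F.cliques j S).card →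
        |((A ∩ F.cliques j S).card : ℝ) - d * (F.cliques j S).card| ≤
          ε * (F.cliques j S).card := by
  rw [RegPairC, Nat.sub_add_cancel hj]
  rfl

/-- A small subgraph is harmless, as both terms are at most the number of its cliques. -/
lemma abs_card_inter_cliques_sub_le (hj : 1 ≤ j) (hε : 0 ≤ ε) (hd : 0 ≤ d) (hd1 : d ≤ 1)
    (h : RegPairC F.gnd (F.cross j) (j - 1) ε d A B) (hS : S ⊆ B) :
    |((A ∩ F.cliques j S).card : ℝ) - d * (F.cliques j S).card| ≤
      ε * (F.cliques j B).card := by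
  rcases le_or_gt (ε * ((F.cliques j B).card : ℝ)) ((F.cliques j S).card : ℝ) with hlarge | hsmall
  · refine ((regPairC_iff hj).1 h S hS hlarge).trans (mul_le_mul_of_nonneg_left ?_ hε)
    exact_mod_cast card_le_card (cliques_subset hS)
  · exact (abs_sub_le_of_nonneg_of_le (by positivity)
      (by exact_mod_cast card_le_card inter_subset_right) (by positivity)
      (mul_le_of_le_one_left (by positivity) hd1)).trans hsmall.le

end Cliques

section CutNorm

/-- On a tuple following `c`, the test function `u i` is the indicator of a `(j - 1)`-graph that
does not depend on `i`: the indices of its edges reveal which coordinate is omitted. -/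
lemma exists_subset_patternSet_eq_boole {m : ℕ} (hc : Function.Injective c)
    {u : Fin j → (Fin j → V) → ℝ} (hu : ∀ i, DependsOn (u i) {i}ᶜ)
    (hu1 : ∀ i y, u i y = 0 ∨ u i y = 1) :
    ∃ S ⊆ F.patternSet (j - 1) m (univ.image c) ℓ, ∀ y, F.Follows c ℓ (labelledSets j m) y →
      ∀ i, u i y = if (univ.erase i).image y ∈ S then (1 : ℝ) else 0 := by
  refine ⟨(F.patternSet (j - 1) m (univ.image c) ℓ).filter fun T =>
    ∃ i y, (∀ b, F.vIdx (y b) = c b) ∧ T = (univ.erase i).image y ∧ u i y = 1,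
    filter_subset _ _, fun y hy i => ?_⟩
  split_ifs with h
  · obtain ⟨i', y', hy', hT, hu'⟩ := (mem_filter.1 h).2
    obtain rfl : i = i' := by
      have h1 := hy.image_image (univ.erase i)
      rw [hT, image_vIdx_image hy'] at h1
      have h2 := image_injective hc h1
      by_contra hne
      have : i ∈ univ.erase i' := by simp [hne]
      rw [h2] at this
      simp at this
    rw [← hu']
    refine hu i fun b hb => ?_
    have : y b ∈ (univ.erase i).image y' := hT ▸ mem_image_of_mem y (by simpa using hb)
    obtain ⟨b', -, hb'⟩ := mem_image.1 this
    have : b' = b := hc (by rw [← hy', hb', (hy.1 b).2])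
    rw [← hb', this]
  · refine (hu1 i y).resolve_right fun h1 => h (mem_filter.2 ⟨?_, i, y, ?_, rfl, h1⟩)
    · exact hy.image_erase_mem_patternSet hc i
    · exact fun b => (hy.1 b).2

lemma setCutNormLE_centeredIndicator (hF : F.ClassesByIndex) (hj : 2 ≤ j)
    (hc : Function.Injective c) (hε : 0 ≤ ε) (hd : 0 ≤ d) (hd1 : d ≤ 1)
    (hreg : RegPairC F.gnd (F.cross j) (j - 1) ε d A
      (F.patternSet (j - 1) (j - 1) (univ.image c) ℓ)) :
    SetCutNormLE (F.centeredIndicator c ℓ (· ∈ A) d) F.gnd ε := by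
  intro u hu hu1
  obtain ⟨S, hS, hSu⟩ :=
    exists_subset_patternSet_eq_boole (F := F) (ℓ := ℓ) (m := j - 1) hc hu hu1
  have hsum : ∑ y ∈ tuples (Fin j) F.gnd, F.centeredIndicator c ℓ (· ∈ A) d y * ∏ i, u i y =
      ∑ y ∈ tuples (Fin j) F.gnd, F.centeredIndicator c ℓ (· ∈ A) d y *
        ∏ i, (if (univ.erase i).image y ∈ S then (1 : ℝ) else 0) := by
    refine sum_congr rfl fun y _ => ?_
    by_cases hy : F.Follows c ℓ (labelledSets j (j - 1)) y
    · rw [prod_congr rfl fun i _ => hSu y hy i]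
    · simp [centeredIndicator, hy]
  rw [expect_eq_sum_div_card, hsum, ← card_inter_cliques_sub hF hj hc hS, abs_div, Nat.abs_cast]
  refine div_le_of_le_mul₀ (by positivity) hε
    ((abs_card_inter_cliques_sub_le (by omega) hε hd hd1 hreg hS).trans ?_)
  rw [card_cliques_eq hF hj hc]
  gcongr
  exact filter_subset _ _

/-- If the polyad has few cliques, then being small on average over all tuples says nothing about
its own cliques; hence the lower bound `γ`. -/
lemma regPairC_of_cutNormLE (hF : F.ClassesByIndex) (hj : 2 ≤ j) (hc : Function.Injective c)
    {η γ : ℝ} (hε : 0 < ε) (hη : η ≤ ε ^ 2 * γ)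
    (hγ : γ ≤ 𝔼 y ∈ tuples (Fin j) F.gnd,
      (if F.Follows c ℓ (labelledSets j (j - 1)) y then (1 : ℝ) else 0))
    (h : CutNormLE (F.centeredIndicator c ℓ (· ∈ A) d) F.gnd η) :
    RegPairC F.gnd (F.cross j) (j - 1) ε d A
      (F.patternSet (j - 1) (j - 1) (univ.image c) ℓ) := by
  rw [regPairC_iff (by omega)]
  intro S hS hSc
  have hcut := h (fun i y => if (univ.erase i).image y ∈ S then (1 : ℝ) else 0) ?_ ?_
  · have hcliques : γ * (tuples (Fin j) F.gnd).card ≤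
        (F.cliques j (F.patternSet (j - 1) (j - 1) (univ.image c) ℓ)).card := by
      rw [card_cliques_eq hF hj hc, ← sum_boole, ← card_mul_expect, mul_comm]
      gcongr
    rw [card_inter_cliques_sub hF hj hc hS, ← card_mul_expect, abs_mul, Nat.abs_cast]
    calc _ ≤ (tuples (Fin j) F.gnd).card * (ε ^ 2 * γ) := by gcongr; exact hcut.trans hη
      _ = ε * (ε * (γ * (tuples (Fin j) F.gnd).card)) := by ring
      _ ≤ ε * (ε * ((F.cliques j
        (F.patternSet (j - 1) (j - 1) (univ.image c) ℓ)).card : ℝ)) := by gcongr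
      _ ≤ _ := by gcongr
  · intro i y z hyz
    have : (univ.erase i).image y = (univ.erase i).image z :=
      image_congr fun b hb => hyz b (by simpa using hb)
    simp only [this]
  · intro i y
    split_ifs <;> simp

end CutNorm

end LabFam

end Follow

section Labels

variable {V : Type*} [DecidableEq V]

namespace LabFam

variable (F : LabFam V)

/-- The `j`-sets with label `b`. -/
noncomputable def labelSet (j b : ℕ) : Finset (Finset V) :=
  (F.gnd.powersetCard j).filter fun I => F.lbl j I = b

variable {F} {j k : ℕ} {a : ℕ → ℕ} {c : Fin j → ℕ} {ℓ : Finset ℕ → ℕ} {b : ℕ} {d ε : ℝ}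
  {y : Fin j → V} {I J K : Finset V}

lemma centeredIndicator_congr {A A' : Finset V → Prop}
    (h : F.Follows c ℓ (labelledSets j (j - 1)) y → (A (univ.image y) ↔ A' (univ.image y))) :
    F.centeredIndicator c ℓ A d y = F.centeredIndicator c ℓ A' d y := by
  by_cases h1 : F.Follows c ℓ (labelledSets j (j - 1)) y
  · simp only [centeredIndicator, if_pos h1, h h1]
  · rw [centeredIndicator, centeredIndicator, if_neg h1, if_neg h1]

lemma centeredIndicator_labelSet (hc : Function.Injective c) :
    F.centeredIndicator c ℓ (· ∈ F.labelSet j b) d =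
      F.centeredIndicator c ℓ (fun I => F.lbl j I = b) d := by
  funext y
  refine centeredIndicator_congr fun h => ?_
  simp only [labelSet, mem_filter, mem_powersetCard]
  refine ⟨fun h => h.2, fun h' => ⟨⟨(h.hasPattern hc).1, ?_⟩, h'⟩⟩
  rw [card_image_of_injective _ (h.injective hc)]; simp

lemma ClassesByIndex.regPairC_congr (hF : F.ClassesByIndex) (hj : 2 ≤ j) {X : Finset ℕ}
    {A A' : Finset (Finset V)} (h : ∀ I ∈ F.patternSet j (j - 1) X ℓ, I ∈ A ↔ I ∈ A') :
    RegPairC F.gnd (F.cross j) (j - 1) ε d A (F.patternSet (j - 1) (j - 1) X ℓ) ↔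
      RegPairC F.gnd (F.cross j) (j - 1) ε d A' (F.patternSet (j - 1) (j - 1) X ℓ) := by
  rw [regPairC_iff (by omega), regPairC_iff (by omega)]
  refine forall_congr' fun S => forall_congr' fun hS => ?_
  have hinter : A ∩ F.cliques j S = A' ∩ F.cliques j S := by
    ext I
    rw [mem_inter, mem_inter]
    refine and_congr_left fun hI => h I ?_
    rw [hF.mem_cliques hj hS] at hI
    exact mem_patternSet.2 ⟨hI.2.1, hI.1⟩
  rw [hinter]

lemma ClassesByIndex.mem_polyad_iff (hF : F.ClassesByIndex) (hj : 2 ≤ j)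
    (hparts : F.PartsByLabel j) (hK : K ∈ F.cross k) (hJK : J ⊆ K) (hJ : J.card = j)
    (hI : I ∈ F.patternSet j (j - 1) (J.image F.vIdx) (F.labelsOf J)) :
    I ∈ F.polyad j K ↔ I ∈ F.labelSet j (F.lbl j J) := by
  obtain ⟨-, -, hKi⟩ := hF.mem_cross.1 hK
  obtain ⟨hIc, hI⟩ := mem_patternSet.1 hI
  have hIK : F.HasPattern (j - 1) (K.image F.vIdx) (F.labelsOf K) I := by
    obtain ⟨h1, h2, h3, h4⟩ :=
      hI.congr fun M hM _ _ => labelsOf_subset hKi hJK hM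
    exact ⟨h1, h2, h3.trans (image_subset_image hJK), h4⟩
  have hlabel : F.labelsOf K (I.image F.vIdx) = F.lbl j J := by
    rw [hI.image_eq (hIc.trans hJ.symm), labelsOf_image hKi hJK, hJ]
  rw [hF.polyad_eq (by omega) (fun _ => hparts) hK, mem_patternSet,
    hasPattern_iff_of_card_eq hj hIc, hlabel, labelSet, mem_filter, mem_powersetCard]
  exact ⟨fun h => ⟨⟨hI.1, hIc⟩, h.2.2⟩, fun h => ⟨hIc, hIK, h.2⟩⟩

lemma ClassesByIndex.regPairC_polyad_iff (hF : F.ClassesByIndex)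
    (hparts : ∀ i, 2 ≤ i → i ≤ j → F.PartsByLabel i) (hK : K ∈ F.cross k) (hj : 2 ≤ j)
    (hJK : J ⊆ K) (hJ : J.card = j) :
    RegPairC F.gnd (F.cross j) (j - 1) ε d (F.polyad j K) (F.polyad (j - 1) J) ↔
      RegPairC F.gnd (F.cross j) (j - 1) ε d (F.labelSet j (F.lbl j J))
        (F.patternSet (j - 1) (j - 1) (J.image F.vIdx) (F.labelsOf J)) := by
  obtain ⟨hKg, -, hKi⟩ := hF.mem_cross.1 hK
  have hJcr : J ∈ F.cross j :=
    hF.mem_cross.2 ⟨hJK.trans hKg, hJ, hKi.mono (by exact_mod_cast hJK)⟩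
  rw [hF.polyad_eq (by omega) (fun h2 => hparts _ h2 (by omega)) hJcr]
  exact hF.regPairC_congr hj fun I => hF.mem_polyad_iff hj (hparts j hj le_rfl) hK hJK hJ

namespace IsLabeled

lemma image_vIdx (hF : F.IsLabeled k a) : F.gnd.image F.vIdx = Icc 1 (a 1) := by
  have hV := hF.classesByIndex
  obtain ⟨hfam, hr, -, -⟩ := hF
  refine eq_of_subset_of_card_le ?_ ?_
  · intro i hi
    obtain ⟨v, hv, rfl⟩ := mem_image.1 hi
    exact mem_Icc.2 (hr v hv)
  · rw [Nat.card_Icc, Nat.add_sub_cancel, ← hfam.2.2.2.1]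
    exact card_image_le_card_image fun u hu v hv h => (hV.vClass_eq_iff hu hv).2 h

/-- The `a_j` parts inside a polyad have pairwise distinct labels in `{1, …, a_j}`. -/
lemma image_lbl_polyCliques (hF : F.IsLabeled k a) (hj : 2 ≤ j) (hjk : j ≤ k - 1)
    (hI : I ∈ F.cross j) : (F.polyCliques j I).image (F.lbl j) = Icc 1 (a j) := by
  have hV := hF.classesByIndex
  have lower : 2 ≤ j - 1 → F.PartsByLabel (j - 1) := fun h => hF.partsByLabel h (by omega)
  have hcliques := hV.polyCliques_eq hj lower hI
  obtain ⟨hfam, -, -, hlab⟩ := hF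
  obtain ⟨-, -, -, subset_cross, card_parts⟩ := hfam.2.2.2.2.2 j hj hjk
  obtain ⟨lbl_mem, -, lbl_inj⟩ := hlab j hj hjk
  have hcr := subset_cross I hI
  have polyad_eq : ∀ J ∈ F.polyCliques j I, F.polyad (j - 1) J =
      F.patternSet (j - 1) (j - 1) (I.image F.vIdx) (F.labelsOf I) := by
    intro J hJ
    obtain ⟨hJc, hJp⟩ := mem_patternSet.1 (hcliques ▸ hJ)
    have himg := hJp.image_eq (hJc.trans (hV.mem_cross.1 hI).2.1.symm)
    rw [hV.polyad_eq (by omega) lower (hcr hJ), himg, hJp.patternSet_labelsOf himg]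
  refine eq_of_subset_of_card_le ?_ ?_
  · intro i hi
    obtain ⟨J, hJ, rfl⟩ := mem_image.1 hi
    exact mem_Icc.2 (lbl_mem J (hcr hJ))
  · rw [Nat.card_Icc, Nat.add_sub_cancel, ← card_parts I hI]
    exact card_image_le_card_image fun J hJ J' hJ' => lbl_inj J (hcr hJ) J' (hcr hJ')
      ((polyad_eq J hJ).trans (polyad_eq J' hJ').symm)

lemma exists_lbl_eq (hF : F.IsLabeled k a) (hj : 2 ≤ j) (hjk : j ≤ k - 1) (hI : I ∈ F.cross j)
    (hb : 1 ≤ b) (hba : b ≤ a j) :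
    ∃ J ∈ F.patternSet j (j - 1) (I.image F.vIdx) (F.labelsOf I), F.lbl j J = b := by
  rw [← hF.classesByIndex.polyCliques_eq hj (fun h => hF.partsByLabel h (by omega)) hI,
    ← mem_image, hF.image_lbl_polyCliques hj hjk hI]
  exact mem_Icc.2 ⟨hb, hba⟩

lemma exists_cross_superset (hF : F.IsLabeled k a) (hjk : j ≤ k) (hJ : J ∈ F.cross j) :
    ∃ K ∈ F.cross k, J ⊆ K := by
  have hV := hF.classesByIndex
  have hka : k ≤ a 1 := hF.1.2.2.2.2.1
  obtain ⟨hJg, hJc, hJi⟩ := hV.mem_cross.1 hJ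
  obtain ⟨U, hJU, hUg, hU, hUi⟩ := hJi.exists_subset_injOn_subset_range_eq
    (show (J : Set V) ⊆ F.gnd by exact_mod_cast hJg)
  lift U to Finset V using F.gnd.finite_toSet.subset hUg
  have hUc : U.card = a 1 := by
    rw [← coe_image, ← coe_image, coe_inj, hF.image_vIdx] at hU
    rw [← card_image_of_injOn hUi, hU, Nat.card_Icc, Nat.add_sub_cancel]
  obtain ⟨K, hJK, hKU, hK⟩ := exists_subsuperset_card_eq (n := k)
    (show J ⊆ U by exact_mod_cast hJU) (by omega) (by omega)
  exact ⟨K, hV.mem_cross.2 ⟨hKU.trans (by exact_mod_cast hUg), hK,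
    hUi.mono (by exact_mod_cast hKU)⟩, hJK⟩

lemma regPairC_labelSet (hF : F.IsLabeled k a) (hreg : F.PolyadReg k a ε) (hj : 2 ≤ j)
    (hjk : j ≤ k - 1) (hI : I ∈ F.cross j) (hb : 1 ≤ b) (hba : b ≤ a j) :
    RegPairC F.gnd (F.cross j) (j - 1) ε (1 / (a j : ℝ)) (F.labelSet j b)
      (F.patternSet (j - 1) (j - 1) (I.image F.vIdx) (F.labelsOf I)) := by
  have hV := hF.classesByIndex
  obtain ⟨J, hJ, rfl⟩ := hF.exists_lbl_eq hj hjk hI hb hba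
  obtain ⟨hJc, hJp⟩ := mem_patternSet.1 hJ
  have himg := hJp.image_eq (hJc.trans (hV.mem_cross.1 hI).2.1.symm)
  obtain ⟨K, hK, hJK⟩ :=
    hF.exists_cross_superset (by omega) (hV.mem_cross.2 ⟨hJp.1, hJc, hJp.2.1⟩)
  have h := (hV.regPairC_polyad_iff (fun i hi hij => hF.partsByLabel hi (hij.trans hjk))
    hK hj hJK hJc).1 (hreg K hK j hj hjk J (mem_powersetCard.2 ⟨hJK, hJc⟩))
  rwa [himg, hJp.patternSet_labelsOf himg] at h

lemma setCutNormLE_labelSet (hF : F.IsLabeled k a) (hε : 0 ≤ ε) (hreg : F.PolyadReg k a ε)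
    (hj : 2 ≤ j) (hjk : j ≤ k - 1) (hc : Function.Injective c) (hb : 1 ≤ b) (hba : b ≤ a j) :
    SetCutNormLE (F.centeredIndicator c ℓ (· ∈ F.labelSet j b) (1 / (a j : ℝ))) F.gnd ε := by
  have hV := hF.classesByIndex
  by_cases hne : ∃ y, F.Follows c ℓ (labelledSets j (j - 1)) y
  · obtain ⟨y, hy⟩ := hne
    have hI := hy.hasPattern hc
    have hIc : (univ.image y).card = j := by
      rw [card_image_of_injective _ (hy.injective hc)]; simp
    have himg := hy.image_image univ
    have ha : (1 : ℝ) ≤ a j := by exact_mod_cast hb.trans hba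
    refine setCutNormLE_centeredIndicator hV hj hc hε (by positivity)
      ((div_le_one (by linarith)).2 ha) ?_
    have h := hF.regPairC_labelSet hreg hj hjk (hV.mem_cross.2 ⟨hI.1, hIc, hI.2.1⟩) hb hba
    rwa [himg, hI.patternSet_labelsOf himg] at h
  · intro u _ _
    have : ∀ y, F.centeredIndicator c ℓ (· ∈ F.labelSet j b) (1 / (a j : ℝ)) y = 0 := fun y => by
      rw [centeredIndicator, if_neg fun h => hne ⟨y, h⟩]
    simp only [this, zero_mul, expect_const_zero, abs_zero, hε]

end IsLabeled

end LabFam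

end Labels

section CountingPatterns

/-- The pattern `(c, ℓ)` is an ordered address: `c` lists distinct class indices, and `ℓ` assigns
an admissible label to every set of `2, …, m` of these indices. -/
structure IsOrderedAddress (a : ℕ → ℕ) (m : ℕ) {j : ℕ} (c : Fin j → ℕ) (ℓ : Finset ℕ → ℕ) :
    Prop where
  injective : Function.Injective c
  one_le_idx : ∀ i, 1 ≤ c i
  idx_le : ∀ i, c i ≤ a 1
  one_le_lbl : ∀ M ⊆ univ.image c, 2 ≤ M.card → M.card ≤ m → 1 ≤ ℓ M
  lbl_le : ∀ M ⊆ univ.image c, 2 ≤ M.card → M.card ≤ m → ℓ M ≤ a M.card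

variable {a : ℕ → ℕ} {m m' j s : ℕ} {c : Fin j → ℕ} {ℓ : Finset ℕ → ℕ}

namespace IsOrderedAddress

lemma mono (h : IsOrderedAddress a m c ℓ) (hm : m' ≤ m) : IsOrderedAddress a m' c ℓ where
  injective := h.injective
  one_le_idx := h.one_le_idx
  idx_le := h.idx_le
  one_le_lbl M hM h2 hMm := h.one_le_lbl M hM h2 (hMm.trans hm)
  lbl_le M hM h2 hMm := h.lbl_le M hM h2 (hMm.trans hm)

lemma comp (h : IsOrderedAddress a m c ℓ) {e : Fin s → Fin j} (he : Function.Injective e) :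
    IsOrderedAddress a m (c ∘ e) ℓ := by
  have hsub : univ.image (c ∘ e) ⊆ univ.image c := by
    rw [← Finset.image_image]
    exact image_subset_image (subset_univ _)
  exact ⟨h.injective.comp he, fun i => h.one_le_idx _, fun i => h.idx_le _,
    fun M hM => h.one_le_lbl M (hM.trans hsub), fun M hM => h.lbl_le M (hM.trans hsub)⟩

end IsOrderedAddress

variable {V : Type*} [DecidableEq V]

lemma image_image_extend {e : Fin s → Fin j} (he : Function.Injective e) (w : Fin s → V)
    (y : Fin j → V) (N : Finset (Fin s)) :
    (N.image e).image (Function.extend e w y) = N.image w := by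
  rw [Finset.image_image]
  exact image_congr fun i _ => he.extend_apply w y i

lemma exists_injective_image_univ_eq {α : Type*} [LinearOrder α] {L : Finset α} (hL : L.card = j) :
    ∃ e : Fin j → α, Function.Injective e ∧ univ.image e = L :=
  ⟨L.orderEmbOfFin hL, (L.orderEmbOfFin hL).injective, by simp⟩

namespace LabFam

/-- Inside every polyad of level at most `k - 1`, every label has density `1 / a_s` up to an error
whose cut norm on `U` is at most `η`. -/
def LabelsCutNormLE (F : LabFam V) (U : Finset V) (k : ℕ) (a : ℕ → ℕ) (η : ℝ) : Prop :=
  ∀ s, 2 ≤ s → s ≤ k - 1 → ∀ (c : Fin s → ℕ) (ℓ : Finset ℕ → ℕ), IsOrderedAddress a (s - 1) c ℓ →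
    ∀ b, 1 ≤ b → b ≤ a s →
      CutNormLE (F.centeredIndicator c ℓ (fun I => F.lbl s I = b) (1 / (a s : ℝ))) U η

/-- Inside every polyad of level `k - 1`, the `k`-graph `H` has the density prescribed by `d` up to
an error whose cut norm on `U` is at most `η`. -/
def DensityCutNormLE (F : LabFam V) (U : Finset V) (k : ℕ) (a : ℕ → ℕ) (d : Addr → ℝ)
    (H : Finset (Finset V)) (η : ℝ) : Prop :=
  ∀ x, IsAddress k (k - 1) a x → ∀ c : Fin k → ℕ, Function.Injective c → univ.image c = x.1 →
    CutNormLE (F.centeredIndicator c x.2 (· ∈ H) (d x)) U η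

/-- The conditions of `Follows c ℓ 𝓛` on `Function.extend e w y` that do not involve `w i`. -/
def FollowsOff (F : LabFam V) (c : Fin j → ℕ) (ℓ : Finset ℕ → ℕ) (𝓛 : Finset (Finset (Fin j)))
    (e : Fin s → Fin j) (y : Fin j → V) (i : Fin s) (w : Fin s → V) : Prop :=
  (∀ p ∉ Set.range e, y p ∈ F.gnd ∧ F.vIdx (y p) = c p) ∧
    ∀ L ∈ 𝓛, e i ∉ L → F.lbl L.card (L.image (Function.extend e w y)) = ℓ (L.image c)

variable {F : LabFam V} {k t : ℕ} {η β : ℝ} {𝓛 : Finset (Finset (Fin j))} {e : Fin s → Fin j}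
  {L : Finset (Fin j)}

lemma dependsOn_followsOff (he : Function.Injective e) (y : Fin j → V) (i : Fin s) :
    DependsOn (F.FollowsOff c ℓ 𝓛 e y i) {i}ᶜ := by
  intro w w' hww
  have himg : ∀ L : Finset (Fin j), e i ∉ L →
      L.image (Function.extend e w y) = L.image (Function.extend e w' y) := by
    refine fun L hL => image_congr fun p hp => ?_
    by_cases hpe : ∃ i', e i' = p
    · obtain ⟨i', rfl⟩ := hpe
      rw [he.extend_apply, he.extend_apply]
      exact hww i' fun h => hL (h ▸ hp)
    · rw [Function.extend_apply' _ _ _ hpe, Function.extend_apply' _ _ _ hpe]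
  refine propext (and_congr_right fun _ => forall₃_congr fun L _ hL => ?_)
  rw [himg L hL]

lemma follows_comp_of_follows_extend (he : Function.Injective e)
    (hdown : ∀ L ⊂ univ.image e, 2 ≤ L.card → L ∈ 𝓛) {w : Fin s → V} {y : Fin j → V}
    (h : F.Follows c ℓ 𝓛 (Function.extend e w y)) :
    F.Follows (c ∘ e) ℓ (labelledSets s (s - 1)) w := by
  refine ⟨fun i => he.extend_apply w y i ▸ h.1 (e i), fun N hN => ?_⟩
  rw [mem_labelledSets] at hN
  have hNc : (N.image e).card = N.card := card_image_of_injective _ he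
  have hss : N.image e ⊂ univ.image e := by
    refine (image_ssubset_image he).2 (ssubset_univ_iff.2 ?_)
    rintro rfl
    rw [card_univ, Fintype.card_fin] at hN
    omega
  have := h.2 _ (hdown _ hss (by omega))
  rwa [image_image_extend he, hNc, Finset.image_image] at this

/-- Besides the conditions on `w` alone, every condition misses some coordinate of `w`, since no
set in `𝓛` contains the range of `e`. -/
lemma follows_extend_iff (hs : s ≠ 0) (he : Function.Injective e) (hL : univ.image e ∉ 𝓛)
    (h𝓛 : ∀ L ∈ 𝓛, 2 ≤ L.card ∧ L.card ≤ s)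
    (hdown : ∀ L ⊂ univ.image e, 2 ≤ L.card → L ∈ 𝓛) {w : Fin s → V} {y : Fin j → V} :
    F.Follows c ℓ 𝓛 (Function.extend e w y) ↔
      F.Follows (c ∘ e) ℓ (labelledSets s (s - 1)) w ∧ ∀ i, F.FollowsOff c ℓ 𝓛 e y i w := by
  refine ⟨fun h => ⟨follows_comp_of_follows_extend he hdown h, fun i =>
    ⟨fun p hp => ?_, fun L hL _ => h.2 L hL⟩⟩, ?_⟩
  · rw [← Function.extend_apply' w y p fun hp' => hp hp']
    exact h.1 p
  rintro ⟨hw, hoff⟩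
  refine ⟨fun p => ?_, fun L' hL' => ?_⟩
  · by_cases hp : p ∈ Set.range e
    · obtain ⟨i, rfl⟩ := hp
      rw [he.extend_apply]
      exact hw.1 i
    · rw [Function.extend_apply' _ _ _ hp]
      exact (hoff ⟨0, by omega⟩).1 p hp
  have hcard : (univ.image e).card = s := by rw [card_image_of_injective _ he]; simp
  by_cases hsub : L' ⊆ univ.image e
  · have hlt := card_lt_card (ssubset_of_subset_of_ne hsub fun h => hL (h ▸ hL'))
    obtain ⟨N, -, rfl⟩ := subset_image_iff.1 hsub
    have hNc : (N.image e).card = N.card := card_image_of_injective _ he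
    have h2 := (h𝓛 _ hL').1
    rw [image_image_extend he, hNc, Finset.image_image]
    exact hw.2 N (mem_labelledSets.2 (by omega))
  · obtain ⟨i, hi⟩ : ∃ i, e i ∉ L' := by
      by_contra! h
      refine hL ((eq_of_subset_of_card_le ?_ ?_ : univ.image e = L') ▸ hL')
      · exact image_subset_iff.2 fun i _ => h i
      · exact (h𝓛 L' hL').2.trans_eq hcard.symm
    exact (hoff i).2 L' hL' hi

/-- With the coordinates outside the range of `e` fixed, the remaining conditions become a test
function for the cut norm. -/
lemma abs_expect_follows_extend_mul_le (hcut : F.LabelsCutNormLE F.gnd k a η) (hs : 2 ≤ s)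
    (hsk : s ≤ k - 1) (hcℓ : IsOrderedAddress a (k - 1) c ℓ) (he : Function.Injective e)
    (hL : univ.image e ∉ 𝓛) (h𝓛 : ∀ L ∈ 𝓛, 2 ≤ L.card ∧ L.card ≤ s)
    (hdown : ∀ L ⊂ univ.image e, 2 ≤ L.card → L ∈ 𝓛) (y : Fin j → V) :
    |𝔼 w ∈ tuples (Fin s) F.gnd,
      (if F.Follows c ℓ 𝓛 (Function.extend e w y) then (1 : ℝ) else 0) *
        ((if F.lbl s (univ.image w) = ℓ (univ.image (c ∘ e)) then 1 else 0) -
          1 / (a s : ℝ))| ≤ η := by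
  have hce := hcℓ.comp he
  have hcard : (univ.image (c ∘ e)).card = s := by
    rw [card_image_of_injective _ hce.injective]; simp
  have hb := hce.one_le_lbl _ subset_rfl (hs.trans_eq hcard.symm) (hcard.trans_le hsk)
  have hba := hce.lbl_le _ subset_rfl (hs.trans_eq hcard.symm) (hcard.trans_le hsk)
  rw [hcard] at hba
  refine le_trans (le_of_eq ?_) (hcut s hs hsk (c ∘ e) ℓ (hce.mono (by omega)) _ hb hba
    (fun i w => if F.FollowsOff c ℓ 𝓛 e y i w then 1 else 0)
    (fun i w w' h => by simp only [dependsOn_followsOff he y i h])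
    (fun i w => by split_ifs <;> simp))
  congr 1
  refine expect_congr rfl fun w _ => ?_
  have hiff := follows_extend_iff (F := F) (c := c) (ℓ := ℓ) (by omega) he hL h𝓛 hdown
    (w := w) (y := y)
  rw [prod_boole, centeredIndicator]
  by_cases hw : F.Follows (c ∘ e) ℓ (labelledSets s (s - 1)) w <;>
    by_cases hoff : ∀ i, F.FollowsOff c ℓ 𝓛 e y i w <;> simp [hiff, hw, hoff]

lemma abs_expect_follows_mul_le (hη : 0 ≤ η) (hcut : F.LabelsCutNormLE F.gnd k a η)
    (hcℓ : IsOrderedAddress a (k - 1) c ℓ) (hL : L ∉ 𝓛) (hL2 : 2 ≤ L.card)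
    (hLk : L.card ≤ k - 1) (h𝓛 : ∀ L' ∈ 𝓛, 2 ≤ L'.card ∧ L'.card ≤ L.card)
    (hdown : ∀ L' ⊂ L, 2 ≤ L'.card → L' ∈ 𝓛) :
    |𝔼 y ∈ tuples (Fin j) F.gnd, (if F.Follows c ℓ 𝓛 y then (1 : ℝ) else 0) *
      ((if F.lbl L.card (L.image y) = ℓ (L.image c) then 1 else 0) -
        1 / (a L.card : ℝ))| ≤ η := by
  obtain ⟨e, he, heL⟩ := exists_injective_image_univ_eq (L := L) rfl
  have hzL : ∀ w y, L.image (Function.extend e w y : Fin j → V) = univ.image w := fun w y =>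
    (congrArg (Finset.image _) heL).symm.trans (image_image_extend he w y univ)
  have hcL : L.image c = univ.image (c ∘ e) := by rw [← Finset.image_image, heL]
  rw [expect_tuples_extend F.gnd he]
  refine (abs_expect_le _ _).trans ?_
  rcases (tuples (Fin j) F.gnd).eq_empty_or_nonempty with hempty | hne
  · rwa [hempty, expect_empty]
  refine expect_le hne fun y _ => ?_
  simp only [hzL, hcL]
  exact abs_expect_follows_extend_mul_le hcut hL2 hLk hcℓ he (heL.symm ▸ hL) h𝓛
    (heL.symm ▸ hdown) y

lemma pow_le_expect_follows_empty (hβ : 0 ≤ β) (hg : F.gnd.Nonempty)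
    (hcls : ∀ i, β ≤ 𝔼 v ∈ F.gnd, if F.vIdx v = c i then (1 : ℝ) else 0) :
    β ^ j ≤ 𝔼 y ∈ tuples (Fin j) F.gnd, if F.Follows c ℓ ∅ y then (1 : ℝ) else 0 := by
  have hgc : (0 : ℝ) < F.gnd.card := by exact_mod_cast hg.card_pos
  have hfilter : (tuples (Fin j) F.gnd).filter (fun y => F.Follows c ℓ ∅ y) =
      Fintype.piFinset fun i => F.gnd.filter fun v => F.vIdx v = c i := by
    ext y
    simp only [mem_filter, mem_tuples, Fintype.mem_piFinset, Follows, notMem_empty,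
      false_imp_iff, implies_true, and_true]
    exact ⟨fun h => h.2, fun h => ⟨fun i => (h i).1, h⟩⟩
  have hcls' : ∀ i, β * F.gnd.card ≤ ((F.gnd.filter fun v => F.vIdx v = c i).card : ℝ) := by
    intro i
    have := hcls i
    rwa [expect_eq_sum_div_card, sum_boole, le_div_iff₀ hgc] at this
  rw [expect_eq_sum_div_card, sum_boole, card_tuples, Fintype.card_fin,
    le_div_iff₀ (by push_cast; positivity), hfilter, Fintype.card_piFinset]
  push_cast
  calc β ^ j * (F.gnd.card : ℝ) ^ j = ∏ _i : Fin j, (β * F.gnd.card) := by simp [mul_pow]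
    _ ≤ _ := prod_le_prod (fun i _ => by positivity) fun i _ => hcls' i

lemma follows_iff_erase (hL : L ∈ 𝓛) {y : Fin j → V} :
    F.Follows c ℓ 𝓛 y ↔
      F.Follows c ℓ (𝓛.erase L) y ∧ F.lbl L.card (L.image y) = ℓ (L.image c) := by
  conv_lhs => rw [← insert_erase hL]
  simp only [Follows, forall_mem_insert]
  tauto

lemma expect_follows_ge_erase (hη : 0 ≤ η) (hcut : F.LabelsCutNormLE F.gnd k a η)
    (hcℓ : IsOrderedAddress a (k - 1) c ℓ) (hL : L ∈ 𝓛) (hLk : L.card ≤ k - 1)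
    (h𝓛 : ∀ L' ∈ 𝓛, 2 ≤ L'.card ∧ L'.card ≤ L.card)
    (hdown : ∀ L' ⊂ L, 2 ≤ L'.card → L' ∈ 𝓛) :
    (𝔼 y ∈ tuples (Fin j) F.gnd, if F.Follows c ℓ (𝓛.erase L) y then (1 : ℝ) else 0) *
        (1 / (a L.card : ℝ)) - η ≤
      𝔼 y ∈ tuples (Fin j) F.gnd, if F.Follows c ℓ 𝓛 y then (1 : ℝ) else 0 := by
  have hstep := (abs_le.1 (abs_expect_follows_mul_le (𝓛 := 𝓛.erase L) hη hcut hcℓ (by simp)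
    (h𝓛 L hL).1 hLk (fun L' h => h𝓛 L' (mem_of_mem_erase h))
    (fun L' h h2 => mem_erase.2 ⟨h.ne, hdown L' h h2⟩))).1
  simp only [mul_sub, ite_zero_mul_ite_zero, one_mul, ← follows_iff_erase hL,
    expect_sub_distrib, ← expect_mul] at hstep
  linarith

/-- Adding the sets of `𝓛` one by one, the larger ones last, the density drops by a factor of at
least `1 / t` up to an error `η` each time. -/
lemma le_expect_follows (hη : 0 ≤ η) (hβ : 0 ≤ β) (ht : 1 ≤ t)
    (hat : ∀ i, 2 ≤ i → i ≤ k - 1 → a i ≤ t) (hg : F.gnd.Nonempty)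
    (hcls : ∀ i, β ≤ 𝔼 v ∈ F.gnd, if F.vIdx v = c i then (1 : ℝ) else 0)
    (hcut : F.LabelsCutNormLE F.gnd k a η) (hcℓ : IsOrderedAddress a (k - 1) c ℓ) (r : ℕ)
    (𝓛 : Finset (Finset (Fin j))) (hr : 𝓛.card = r)
    (h𝓛 : ∀ L ∈ 𝓛, 2 ≤ L.card ∧ L.card ≤ k - 1)
    (hdown : ∀ L ∈ 𝓛, ∀ L' ⊆ L, 2 ≤ L'.card → L' ∈ 𝓛) :
    β ^ j * (1 / (t : ℝ)) ^ r - r * η ≤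
      𝔼 y ∈ tuples (Fin j) F.gnd, if F.Follows c ℓ 𝓛 y then (1 : ℝ) else 0 := by
  induction r generalizing 𝓛 with
  | zero =>
    obtain rfl := card_eq_zero.1 hr
    simpa using pow_le_expect_follows_empty (ℓ := ℓ) hβ hg hcls
  | succ r ih =>
    obtain ⟨L, hL, hmax⟩ := exists_max_image 𝓛 card (card_pos.1 (by omega))
    obtain ⟨hL2, hLk⟩ := h𝓛 L hL
    have hIH := ih (𝓛.erase L) (by rw [card_erase_of_mem hL]; omega)
      (fun L' h => h𝓛 L' (mem_of_mem_erase h)) (fun L₁ h₁ L₂ h₂ hc₂ => by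
        refine mem_erase.2 ⟨?_, hdown L₁ (mem_of_mem_erase h₁) L₂ h₂ hc₂⟩
        rintro rfl
        exact ne_of_mem_erase h₁
          (eq_of_subset_of_card_le h₂ (hmax L₁ (mem_of_mem_erase h₁))).symm)
    have hstep := expect_follows_ge_erase hη hcut hcℓ hL hLk
      (fun L' h => ⟨(h𝓛 L' h).1, hmax L' h⟩) (fun L' h h2 => hdown L hL L' h.subset h2)
    set X := 𝔼 y ∈ tuples (Fin j) F.gnd, if F.Follows c ℓ (𝓛.erase L) y then (1 : ℝ) else 0
    have hX : 0 ≤ X := expect_nonneg fun y _ => by positivity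
    have hLc : (L.image c).card = L.card := card_image_of_injective _ hcℓ.injective
    have ha : 1 ≤ a L.card := by
      have hsub := image_subset_image (f := c) (subset_univ L)
      rw [← hLc] at hL2 hLk ⊢
      exact (hcℓ.one_le_lbl _ hsub hL2 hLk).trans (hcℓ.lbl_le _ hsub hL2 hLk)
    have hinv : 1 / (t : ℝ) ≤ 1 / (a L.card : ℝ) :=
      one_div_le_one_div_of_le (by exact_mod_cast ha) (by exact_mod_cast hat L.card hL2 hLk)
    have ht1 : 1 / (t : ℝ) ≤ 1 := div_le_one_of_le₀ (by exact_mod_cast ht) (by positivity)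
    calc β ^ j * (1 / (t : ℝ)) ^ (r + 1) - (r + 1 : ℕ) * η
        = β ^ j * (1 / (t : ℝ)) ^ r * (1 / t) - r * η - η := by push_cast; ring
      _ ≤ (X + r * η) * (1 / t) - r * η - η := by gcongr; linarith
      _ = X * (1 / t) - r * η * (1 - 1 / t) - η := by ring
      _ ≤ X * (1 / a L.card) - η := by
        have := mul_le_mul_of_nonneg_left hinv hX
        have : 0 ≤ r * η * (1 - 1 / (t : ℝ)) := mul_nonneg (by positivity) (by linarith)
        linarith
      _ ≤ _ := hstep

end LabFam

end CountingPatterns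

section DefinedByLabels

variable {V : Type*} [DecidableEq V] {a : ℕ → ℕ} {j k m t b : ℕ}

lemma IsOrderedAddress.update {c : Fin j → ℕ} {ℓ : Finset ℕ → ℕ} (h : IsOrderedAddress a m c ℓ)
    {M : Finset ℕ} (hb : 1 ≤ b) (hba : b ≤ a M.card) :
    IsOrderedAddress a m c (Function.update ℓ M b) where
  injective := h.injective
  one_le_idx := h.one_le_idx
  idx_le := h.idx_le
  one_le_lbl M' hM' h2 hm := by
    rcases eq_or_ne M' M with rfl | hne
    · simpa using hb
    · simpa [hne] using h.one_le_lbl M' hM' h2 hm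
  lbl_le M' hM' h2 hm := by
    rcases eq_or_ne M' M with rfl | hne
    · simpa using hba
    · simpa [hne] using h.lbl_le M' hM' h2 hm

lemma IsAddress.isOrderedAddress {x : Addr} (hx : IsAddress j m a x) {c : Fin j → ℕ}
    (hc : Function.Injective c) (hcx : univ.image c = x.1) : IsOrderedAddress a m c x.2 where
  injective := hc
  one_le_idx i := (hx.2.1 _ (hcx ▸ mem_image_of_mem c (mem_univ i))).1
  idx_le i := (hx.2.1 _ (hcx ▸ mem_image_of_mem c (mem_univ i))).2
  one_le_lbl M hM h2 hm := (hx.2.2.1 M (hcx ▸ hM) h2 hm).1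
  lbl_le M hM h2 hm := (hx.2.2.1 M (hcx ▸ hM) h2 hm).2

namespace LabFam

/-- The classes and parts of `F` are determined by its indices and labels, which lie in the ranges
prescribed by `a`. Unlike in a labelled family of partitions, some labels may not occur. -/
structure DefinedByLabels (F : LabFam V) (k : ℕ) (a : ℕ → ℕ) : Prop where
  classes : F.ClassesByIndex
  parts : ∀ j, 2 ≤ j → j ≤ k - 1 → F.PartsByLabel j
  idx_mem : ∀ v ∈ F.gnd, 1 ≤ F.vIdx v ∧ F.vIdx v ≤ a 1
  lbl_mem : ∀ j, 2 ≤ j → j ≤ k - 1 → ∀ J ∈ F.cross j, 1 ≤ F.lbl j J ∧ F.lbl j J ≤ a j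

variable {F : LabFam V} {X : Finset ℕ} {c : Fin j → ℕ} {ℓ : Finset ℕ → ℕ} {I J : Finset V}
  {d : Addr → ℝ} {H : Finset (Finset V)} {β ε η γ : ℝ}

lemma IsLabeled.definedByLabels (hF : F.IsLabeled k a) : F.DefinedByLabels k a where
  classes := hF.classesByIndex
  parts _ := hF.partsByLabel
  idx_mem := hF.2.1
  lbl_mem j hj hjk := (hF.2.2.2 j hj hjk).1

lemma ClassesByIndex.mem_cross_of_mem_patternSet (hF : F.ClassesByIndex)
    (hI : I ∈ F.patternSet j m X ℓ) : I ∈ F.cross j := by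
  obtain ⟨hIc, hIp⟩ := mem_patternSet.1 hI
  exact hF.mem_cross.2 ⟨hIp.1, hIc, hIp.2.1⟩

lemma DefinedByLabels.isOrderedAddress (hF : F.DefinedByLabels k a) (hJ : J ∈ F.cross j)
    (hc : Function.Injective c) (hcJ : univ.image c = J.image F.vIdx) :
    IsOrderedAddress a (k - 1) c (F.labelsOf J) := by
  obtain ⟨hJg, -, hJi⟩ := hF.classes.mem_cross.1 hJ
  have idx : ∀ i, 1 ≤ c i ∧ c i ≤ a 1 := fun i => by
    obtain ⟨v, hv, hvi⟩ := mem_image.1 (hcJ ▸ mem_image_of_mem c (mem_univ i))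
    exact hvi ▸ hF.idx_mem v (hJg hv)
  have lbl : ∀ M ⊆ univ.image c, 2 ≤ M.card → M.card ≤ k - 1 →
      1 ≤ F.labelsOf J M ∧ F.labelsOf J M ≤ a M.card := by
    intro M hM h2 hm
    obtain ⟨R, hR, rfl⟩ : ∃ R ⊆ J, R.image F.vIdx = M :=
      ⟨_, filter_subset _ _, image_filter_vIdx_mem (hcJ ▸ hM)⟩
    have hRi : Set.InjOn F.vIdx R := hJi.mono (by exact_mod_cast hR)
    rw [card_image_of_injOn hRi] at h2 hm ⊢
    rw [labelsOf_image hJi hR]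
    exact hF.lbl_mem _ h2 hm R (hF.classes.mem_cross.2 ⟨hR.trans hJg, rfl, hRi⟩)
  exact ⟨hc, fun i => (idx i).1, fun i => (idx i).2, fun M hM h2 hm => (lbl M hM h2 hm).1,
    fun M hM h2 hm => (lbl M hM h2 hm).2⟩

lemma PartsByLabel.mem_cls_iff (hparts : F.PartsByLabel j) (hF : F.ClassesByIndex) (hj : 2 ≤ j)
    (hJ : J ∈ F.cross j) :
    I ∈ F.cls j J ↔
      I ∈ F.patternSet j (j - 1) (J.image F.vIdx) (F.labelsOf J) ∧ F.lbl j I = F.lbl j J := by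
  obtain ⟨-, hJc, hJi⟩ := hF.mem_cross.1 hJ
  rw [hparts J hJ, mem_patternSet, mem_patternSet, and_assoc]
  refine and_congr_right fun hIc => ?_
  rw [hasPattern_iff_of_card_eq hj hIc]
  refine and_congr_right fun hI => ?_
  rw [hI.image_eq (hIc.trans hJc.symm), labelsOf_image hJi subset_rfl, hJc]

lemma PartsByLabel.cls_eq_of_mem (hparts : F.PartsByLabel j) (hF : F.ClassesByIndex)
    (hJ : J ∈ F.cross j) (hI : I ∈ F.cls j J) : F.cls j I = F.cls j J := by
  rw [hparts J hJ] at hI ⊢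
  obtain ⟨hIc, hIp⟩ := mem_patternSet.1 hI
  have himg := hIp.image_eq (hIc.trans (hF.mem_cross.1 hJ).2.1.symm)
  rw [hparts I (hF.mem_cross_of_mem_patternSet hI), himg, hIp.patternSet_labelsOf himg]

lemma ClassesByIndex.card_image_vClass (hF : F.ClassesByIndex) :
    (F.gnd.image F.vClass).card = (F.gnd.image F.vIdx).card :=
  le_antisymm (card_image_le_card_image fun _ hu _ hv => (hF.vClass_eq_iff hu hv).2)
    (card_image_le_card_image fun _ hu _ hv => (hF.vClass_eq_iff hu hv).1)

namespace DefinedByLabels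

variable (hF : F.DefinedByLabels k a)

include hF
lemma polyCliques_eq (hj : 2 ≤ j) (hjk : j ≤ k - 1) (hJ : J ∈ F.cross j) :
    F.polyCliques j J = F.patternSet j (j - 1) (J.image F.vIdx) (F.labelsOf J) :=
  hF.classes.polyCliques_eq hj (fun h => hF.parts _ h (by omega)) hJ

lemma mem_polyCliques_self (hj : 2 ≤ j) (hjk : j ≤ k - 1) (hJ : J ∈ F.cross j) :
    J ∈ F.polyCliques j J := by
  obtain ⟨hJg, hJc, hJi⟩ := hF.classes.mem_cross.1 hJ
  rw [hF.polyCliques_eq hj hjk hJ]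
  exact mem_patternSet.2 ⟨hJc, hasPattern_labelsOf hJg hJi _⟩

lemma mem_cls_self (hj : 2 ≤ j) (hjk : j ≤ k - 1) (hJ : J ∈ F.cross j) : J ∈ F.cls j J := by
  rw [(hF.parts j hj hjk).mem_cls_iff hF.classes hj hJ, ← hF.polyCliques_eq hj hjk hJ]
  exact ⟨hF.mem_polyCliques_self hj hjk hJ, rfl⟩

lemma cls_eq_of_mem_polyCliques (hj : 2 ≤ j) (hjk : j ≤ k - 1) (hJ : J ∈ F.cross j)
    (hI : I ∈ F.polyCliques j J) (hl : F.lbl j I = F.lbl j J) : F.cls j I = F.cls j J := by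
  rw [hF.polyCliques_eq hj hjk hJ] at hI
  exact (hF.parts j hj hjk).cls_eq_of_mem hF.classes hJ
    (((hF.parts j hj hjk).mem_cls_iff hF.classes hj hJ).2 ⟨hI, hl⟩)

lemma polyCliques_subset_cross (hj : 2 ≤ j) (hjk : j ≤ k - 1) (hJ : J ∈ F.cross j) :
    F.polyCliques j J ⊆ F.cross j := fun _ hI =>
  hF.classes.mem_cross_of_mem_patternSet (hF.polyCliques_eq hj hjk hJ ▸ hI)

lemma polyCliques_eq_of_mem (hj : 2 ≤ j) (hjk : j ≤ k - 1) (hJ : J ∈ F.cross j)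
    (hI : I ∈ F.polyCliques j J) : F.polyCliques j I = F.polyCliques j J := by
  rw [hF.polyCliques_eq hj hjk (hF.polyCliques_subset_cross hj hjk hJ hI)]
  rw [hF.polyCliques_eq hj hjk hJ] at hI ⊢
  obtain ⟨hIc, hIp⟩ := mem_patternSet.1 hI
  have himg := hIp.image_eq (hIc.trans (hF.classes.mem_cross.1 hJ).2.1.symm)
  rw [himg, hIp.patternSet_labelsOf himg]

lemma card_image_cls (hj : 2 ≤ j) (hjk : j ≤ k - 1) (hJ : J ∈ F.cross j)
    (exists_lbl : ∀ b, 1 ≤ b → b ≤ a j →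
      ∃ I ∈ F.patternSet j (j - 1) (J.image F.vIdx) (F.labelsOf J), F.lbl j I = b) :
    ((F.polyCliques j J).image (F.cls j)).card = a j := by
  have mem_cross := hF.polyCliques_subset_cross hj hjk hJ
  have image_lbl : (F.polyCliques j J).image (F.lbl j) = Icc 1 (a j) := by
    ext b
    rw [mem_image, mem_Icc]
    constructor
    · rintro ⟨I, hI, rfl⟩
      exact hF.lbl_mem j hj hjk I (mem_cross hI)
    · rintro ⟨h1, h2⟩
      rw [hF.polyCliques_eq hj hjk hJ]
      exact exists_lbl b h1 h2
  rw [show a j = ((F.polyCliques j J).image (F.lbl j)).card by rw [image_lbl]; simp]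
  refine le_antisymm (card_image_le_card_image fun I hI I' hI' hl => ?_)
    (card_image_le_card_image fun I hI I' hI' hcls => ?_)
  · refine hF.cls_eq_of_mem_polyCliques hj hjk (mem_cross hI') ?_ hl
    rwa [hF.polyCliques_eq_of_mem hj hjk hJ hI']
  · have hself := hcls ▸ hF.mem_cls_self hj hjk (mem_cross hI)
    exact (((hF.parts j hj hjk).mem_cls_iff hF.classes hj (mem_cross hI')).1 hself).2

lemma isFamily (hka : k ≤ a 1) (image_vIdx : F.gnd.image F.vIdx = Icc 1 (a 1))
    (exists_lbl : ∀ j, 2 ≤ j → j ≤ k - 1 → ∀ J ∈ F.cross j, ∀ b, 1 ≤ b → b ≤ a j →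
      ∃ I ∈ F.patternSet j (j - 1) (J.image F.vIdx) (F.labelsOf J), F.lbl j I = b) :
    F.IsFamily k a := by
  refine ⟨fun v hv => ?_, fun v hv => ?_, fun u hu v hv huv => ?_, ?_, hka, fun j hj hjk => ?_⟩
  · exact hF.classes v hv ▸ mem_filter.2 ⟨hv, rfl⟩
  · exact hF.classes v hv ▸ filter_subset _ _
  · rw [hF.classes v hv] at huv
    exact (hF.classes.vClass_eq_iff hu hv).2 (mem_filter.1 huv).2
  · rw [hF.classes.card_image_vClass, image_vIdx, Nat.card_Icc, Nat.add_sub_cancel]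
  · have hparts := hF.parts j hj hjk
    refine ⟨fun J => hF.mem_cls_self hj hjk, fun J hJ I => hparts.cls_eq_of_mem hF.classes hJ,
      fun J hJ I hI => ?_, fun J => hF.polyCliques_subset_cross hj hjk,
      fun J hJ => hF.card_image_cls hj hjk hJ (exists_lbl j hj hjk J hJ)⟩
    rw [hF.polyCliques_eq hj hjk hJ]
    exact ((hparts.mem_cls_iff hF.classes hj hJ).1 hI).1

lemma isLabeled (hka : k ≤ a 1) (image_vIdx : F.gnd.image F.vIdx = Icc 1 (a 1))
    (exists_lbl : ∀ j, 2 ≤ j → j ≤ k - 1 → ∀ J ∈ F.cross j, ∀ b, 1 ≤ b → b ≤ a j →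
      ∃ I ∈ F.patternSet j (j - 1) (J.image F.vIdx) (F.labelsOf J), F.lbl j I = b) :
    F.IsLabeled k a := by
  refine ⟨hF.isFamily hka image_vIdx exists_lbl, hF.idx_mem,
    fun u hu v hv => (hF.classes.vClass_eq_iff hu hv).symm, fun j hj hjk =>
    ⟨hF.lbl_mem j hj hjk, fun I hI I' hI' =>
      (((hF.parts j hj hjk).mem_cls_iff hF.classes hj hI).1 hI').2,
    fun I hI I' hI' hp hl => hF.cls_eq_of_mem_polyCliques hj hjk hI' ?_ hl⟩⟩
  rw [PartFam.polyCliques, ← hp]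
  exact hF.mem_polyCliques_self hj hjk hI

lemma exists_lbl_eq (hj : 2 ≤ j) (hJ : J ∈ F.cross j) (hb : 1 ≤ b) (hba : b ≤ a j)
    (exists_follows : ∀ (c : Fin j → ℕ) ℓ, IsOrderedAddress a (k - 1) c ℓ →
      ∃ y, F.Follows c ℓ (labelledSets j j) y) :
    ∃ I ∈ F.patternSet j (j - 1) (J.image F.vIdx) (F.labelsOf J), F.lbl j I = b := by
  obtain ⟨-, hJc, hJi⟩ := hF.classes.mem_cross.1 hJ
  have hXc : (J.image F.vIdx).card = j := (card_image_of_injOn hJi).trans hJc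
  obtain ⟨c, hc, hcJ⟩ := exists_injective_image_univ_eq hXc
  obtain ⟨y, hy⟩ := exists_follows c (Function.update (F.labelsOf J) (J.image F.vIdx) b)
    ((hF.isOrderedAddress hJ hc hcJ).update hb (hXc.symm ▸ hba))
  have hIc : (univ.image y).card = j := by
    rw [card_image_of_injective _ (hy.injective hc), card_univ, Fintype.card_fin]
  have hI := (hasPattern_iff_of_card_eq hj hIc).1 (hcJ ▸ hy.hasPattern hc)
  refine ⟨univ.image y, mem_patternSet.2 ⟨hIc, hI.1.congr fun M _ h2 hm => ?_⟩, ?_⟩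
  · refine Function.update_of_ne ?_ _ _
    rintro rfl
    omega
  · rw [hI.2, hI.1.image_eq (hIc.trans hJc.symm), Function.update_self]

end DefinedByLabels

lemma one_div_two_mul_le_expect_boole {α : Type*} {s : Finset α} {p : α → Prop}
    [DecidablePred p] {m : ℕ}
    (hm : 1 ≤ m) (hmt : m ≤ t) (hts : t ≤ s.card) (hp : s.card / m ≤ (s.filter p).card) :
    1 / (2 * t : ℝ) ≤ 𝔼 x ∈ s, if p x then (1 : ℝ) else 0 := by
  have hsize : s.card ≤ 2 * t * (s.filter p).card := by
    have : 1 ≤ s.card / m := (Nat.one_le_div_iff hm).2 (hmt.trans hts)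
    calc s.card ≤ m * (s.card / m + 1) := (Nat.lt_mul_div_succ _ hm).le
      _ ≤ t * (2 * (s.card / m)) := Nat.mul_le_mul hmt (by omega)
      _ ≤ t * (2 * (s.filter p).card) := by gcongr
      _ = 2 * t * (s.filter p).card := by ring
  have hs : (0 : ℝ) < s.card := by exact_mod_cast (by omega : 0 < s.card)
  have ht : (0 : ℝ) < t := by exact_mod_cast (by omega : 0 < t)
  rw [expect_eq_sum_div_card, sum_boole, div_le_div_iff₀ (by positivity) hs, one_mul, mul_comm]
  exact_mod_cast hsize

lemma le_expect_follows_labelledSets (hη : 0 ≤ η) (hβ : 0 ≤ β) (hβ1 : β ≤ 1) (ht : 1 ≤ t)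
    (hat : ∀ i, 2 ≤ i → i ≤ k - 1 → a i ≤ t) (hg : F.gnd.Nonempty)
    (hcls : ∀ i, 1 ≤ i → i ≤ a 1 → β ≤ 𝔼 v ∈ F.gnd, if F.vIdx v = i then (1 : ℝ) else 0)
    (hcut : F.LabelsCutNormLE F.gnd k a η) (hjk : j ≤ k) (hmk : m ≤ k - 1)
    (hcℓ : IsOrderedAddress a (k - 1) c ℓ) :
    β ^ k * (1 / (t : ℝ)) ^ 2 ^ k - 2 ^ k * η ≤
      𝔼 y ∈ tuples (Fin j) F.gnd, if F.Follows c ℓ (labelledSets j m) y then (1 : ℝ) else 0 := by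
  have hcard : (labelledSets j m).card ≤ 2 ^ k :=
    (card_le_univ _).trans (by simpa using Nat.pow_le_pow_right (by norm_num) hjk)
  have ht1 : 1 / (t : ℝ) ≤ 1 := div_le_one_of_le₀ (by exact_mod_cast ht) (by positivity)
  have hcount := le_expect_follows hη hβ ht hat hg
    (fun i => hcls (c i) (hcℓ.one_le_idx i) (hcℓ.idx_le i)) hcut hcℓ _ (labelledSets j m) rfl
    (fun L hL => by rw [mem_labelledSets] at hL; omega)
    (fun L hL L' hL' h2 => by
      have := card_le_card hL'
      rw [mem_labelledSets] at hL ⊢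
      omega)
  calc β ^ k * (1 / (t : ℝ)) ^ 2 ^ k - 2 ^ k * η
      ≤ β ^ j * (1 / (t : ℝ)) ^ (labelledSets j m).card - (labelledSets j m).card * η := by
        have hpow : (1 / (t : ℝ)) ^ 2 ^ k ≤ (1 / (t : ℝ)) ^ (labelledSets j m).card :=
          pow_le_pow_of_le_one (by positivity) ht1 hcard
        have hpow' : β ^ k ≤ β ^ j := pow_le_pow_of_le_one hβ hβ1 hjk
        have hcard' : ((labelledSets j m).card : ℝ) ≤ 2 ^ k := by exact_mod_cast hcard
        gcongr
    _ ≤ _ := hcount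

namespace DefinedByLabels

variable (hF : F.DefinedByLabels k a)

include hF

/-- Small cut norms of the label indicators make the polyads regular, because each polyad has many
cliques. -/
lemma polyadReg (hε : 0 < ε) (hηγ : η ≤ ε ^ 2 * γ) (hcut : F.LabelsCutNormLE F.gnd k a η)
    (hfol : ∀ j m, j ≤ k → m ≤ k - 1 → ∀ (c : Fin j → ℕ) ℓ, IsOrderedAddress a (k - 1) c ℓ →
      γ ≤ 𝔼 y ∈ tuples (Fin j) F.gnd, if F.Follows c ℓ (labelledSets j m) y then (1 : ℝ) else 0) :
    F.PolyadReg k a ε := by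
  intro K hK j hj hjk J hJ
  obtain ⟨hJK, hJc⟩ := mem_powersetCard.1 hJ
  obtain ⟨hKg, -, hKi⟩ := hF.classes.mem_cross.1 hK
  have hJi : Set.InjOn F.vIdx J := hKi.mono (by exact_mod_cast hJK)
  have hJcr : J ∈ F.cross j := hF.classes.mem_cross.2 ⟨hJK.trans hKg, hJc, hJi⟩
  obtain ⟨c, hc, hcJ⟩ := exists_injective_image_univ_eq ((card_image_of_injOn hJi).trans hJc)
  have hcℓ := hF.isOrderedAddress hJcr hc hcJ
  obtain ⟨h1, h2⟩ := hF.lbl_mem j hj hjk J hJcr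
  rw [hF.classes.regPairC_polyad_iff (fun i hi hij => hF.parts i hi (hij.trans hjk)) hK hj hJK hJc,
    ← hcJ]
  refine regPairC_of_cutNormLE hF.classes hj hc hε hηγ
    (hfol j (j - 1) (by omega) (by omega) c _ hcℓ) ?_
  rw [centeredIndicator_labelSet hc]
  exact hcut j hj hjk c _ (hcℓ.mono (by omega)) _ h1 h2

lemma isDensPartition (hk : 2 ≤ k) (hε : 0 < ε) (hηγ : η ≤ ε ^ 2 * γ)
    (hcut : F.DensityCutNormLE F.gnd k a d H η)
    (hfol : ∀ (c : Fin k → ℕ) ℓ, IsOrderedAddress a (k - 1) c ℓ →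
      γ ≤ 𝔼 y ∈ tuples (Fin k) F.gnd,
        if F.Follows c ℓ (labelledSets k (k - 1)) y then (1 : ℝ) else 0) :
    F.IsDensPartition k a ε d H := by
  intro x hx
  obtain ⟨c, hc, hcx⟩ := exists_injective_image_univ_eq hx.1
  rw [hF.classes.polyAt_eq (by omega), ← hcx]
  exact regPairC_of_cutNormLE hF.classes hk hc hε hηγ (hfol c x.2 (hx.isOrderedAddress hc hcx))
    (hcut x hx c hc hcx)

lemma image_vIdx (hne : ∀ i, 1 ≤ i → i ≤ a 1 → (F.gnd.filter fun v => F.vIdx v = i).Nonempty) :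
    F.gnd.image F.vIdx = Icc 1 (a 1) := by
  ext i
  refine ⟨fun hi => ?_, fun hi => ?_⟩
  · obtain ⟨v, hv, rfl⟩ := mem_image.1 hi
    exact mem_Icc.2 (hF.idx_mem v hv)
  · obtain ⟨v, hv⟩ := hne i (mem_Icc.1 hi).1 (mem_Icc.1 hi).2
    exact mem_image.2 ⟨v, mem_filter.1 hv⟩

lemma isEquitPartition (hk : 2 ≤ k) (hka : k ≤ a 1) (hat : ∀ i, 1 ≤ i → i ≤ k - 1 → a i ≤ t)
    (hsize : ∀ i, 1 ≤ i → i ≤ a 1 →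
      (F.gnd.filter fun v => F.vIdx v = i).card = F.gnd.card / a 1 ∨
      (F.gnd.filter fun v => F.vIdx v = i).card = F.gnd.card / a 1 + 1)
    (hg : t ≤ F.gnd.card) (hη : 0 ≤ η) (hcut : F.LabelsCutNormLE F.gnd k a η)
    (hcutH : F.DensityCutNormLE F.gnd k a d H η)
    (hε : 0 < ε) (hγ0 : 0 < γ) (hηγ : η ≤ ε ^ 2 * γ)
    (hγ : γ ≤ (1 / (2 * t : ℝ)) ^ k * (1 / (t : ℝ)) ^ 2 ^ k - 2 ^ k * η) :
    F.IsEquitPartition k a ε d H := by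
  have hat1 := hat 1 le_rfl (by omega)
  have ht : (1 : ℝ) ≤ t := by exact_mod_cast (by omega : 1 ≤ t)
  have hdiv : 1 ≤ F.gnd.card / a 1 := (Nat.one_le_div_iff (by omega)).2 (by omega)
  have hdiv_le : ∀ i, 1 ≤ i → i ≤ a 1 →
      F.gnd.card / a 1 ≤ (F.gnd.filter fun v => F.vIdx v = i).card := fun i h1 h2 => by
    rcases hsize i h1 h2 with h | h <;> omega
  have hfol : ∀ j m, j ≤ k → m ≤ k - 1 → ∀ (c : Fin j → ℕ) ℓ, IsOrderedAddress a (k - 1) c ℓ →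
      γ ≤ 𝔼 y ∈ tuples (Fin j) F.gnd,
        if F.Follows c ℓ (labelledSets j m) y then (1 : ℝ) else 0 := fun j m hj hm c ℓ hcℓ =>
    hγ.trans (le_expect_follows_labelledSets hη (by positivity)
      (div_le_one_of_le₀ (by linarith) (by positivity)) (by omega)
      (fun i hi => hat i (by omega)) (card_pos.1 (by omega))
      (fun i h1 h2 => one_div_two_mul_le_expect_boole (by omega) hat1 hg
        (hdiv_le i h1 h2)) hcut hj hm hcℓ)
  have exists_follows : ∀ j, j ≤ k - 1 → ∀ (c : Fin j → ℕ) ℓ, IsOrderedAddress a (k - 1) c ℓ →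
      ∃ y, F.Follows c ℓ (labelledSets j j) y := by
    intro j hj c ℓ hcℓ
    by_contra! hnone
    have := hfol j j (by omega) hj c ℓ hcℓ
    simp only [hnone, if_false, expect_const_zero] at this
    linarith
  have image_vIdx := hF.image_vIdx fun i h1 h2 => card_pos.1 (hdiv.trans (hdiv_le i h1 h2))
  refine ⟨hF.isLabeled hka image_vIdx fun j hj hjk J hJ b hb hba =>
      hF.exists_lbl_eq hj hJ hb hba (exists_follows j hjk), ⟨?_, fun v hv => ?_,
    hF.polyadReg hε hηγ hcut hfol⟩,
    hF.isDensPartition hk hε hηγ hcutH (hfol k (k - 1) le_rfl le_rfl)⟩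
  · rw [one_div, inv_mul_cancel₀]
    exact_mod_cast (by omega : a 1 ≠ 0)
  · rw [hF.classes v hv]
    exact hsize _ (hF.idx_mem v hv).1 (hF.idx_mem v hv).2

end DefinedByLabels

end LabFam

end DefinedByLabels

section Recolouring

variable {α ι : Type*}

lemma exists_map_card_fiber [Fintype α] [Fintype ι] [DecidableEq ι] (s : ι → ℕ)
    (hs : Fintype.card α = ∑ i, s i) :
    ∃ g : α → ι, ∀ i, (univ.filter fun x => g x = i).card = s i := by
  obtain ⟨e⟩ : Nonempty (α ≃ Σ i, Fin (s i)) := Fintype.card_eq.1 (by simpa using hs)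
  refine ⟨fun x => (e x).1, fun i => ?_⟩
  rw [← Fintype.card_fin (s i), ← Fintype.card_subtype]
  exact Fintype.card_congr ((e.subtypeEquiv fun _ => Iff.rfl).trans (Equiv.sigmaSubtype i))

variable [DecidableEq ι]

lemma exists_extend_card_fiber (R : Finset α) (S : Finset ι) (s : ι → ℕ) (f : α → ι)
    (hs : R.card = ∑ i ∈ S, s i) :
    ∃ g : α → ι, (∀ v ∈ R, g v ∈ S) ∧ (∀ v ∉ R, g v = f v) ∧
      ∀ i ∈ S, (R.filter fun v => g v = i).card = s i := by
  obtain ⟨g, hg⟩ := exists_map_card_fiber (α := R) (fun i : S => s i)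
    (by rw [Fintype.card_coe, hs, sum_coe_sort])
  refine ⟨fun v => if h : v ∈ R then g ⟨v, h⟩ else f v, fun v hv => ?_, fun v hv => dif_neg hv,
    fun i hi => ?_⟩
  · simp only [dif_pos hv, coe_mem]
  · rw [← hg ⟨i, hi⟩, ← card_map (Function.Embedding.subtype _)]
    congr 1
    ext v
    by_cases hv : v ∈ R <;> simp [hv, Subtype.ext_iff]

/-- Keep as many points of each colour `i` as fit into a class of size `s i` and distribute the
remaining points over the classes that are too small. -/
lemma exists_recolouring (Q : Finset α) (S : Finset ι) (s : ι → ℕ) (f : α → ι)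
    (hs : Q.card = ∑ i ∈ S, s i) :
    ∃ g : α → ι, (∀ v ∈ Q, g v ∈ S) ∧ (∀ i ∈ S, (Q.filter fun v => g v = i).card = s i) ∧
      (Q.filter fun v => g v ≠ f v).card ≤
        ∑ i ∈ S, (s i - (Q.filter fun v => f v = i).card) := by
  choose A hA hAc using fun i => exists_subset_card_eq (s := Q.filter fun v => f v = i)
    (min_le_left _ (s i))
  have mem_A : ∀ {i v}, v ∈ A i → v ∈ Q ∧ f v = i := fun hv => mem_filter.1 (hA _ hv)
  set K := S.biUnion A
  have hKQ : K ⊆ Q := biUnion_subset.2 fun i _ v hv => (mem_A hv).1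
  have hKc : K.card = ∑ i ∈ S, (A i).card := card_biUnion fun i _ i' _ hne =>
    disjoint_left.2 fun v hv hv' => hne ((mem_A hv).2.symm.trans (mem_A hv').2)
  have hAs : ∀ i, (A i).card + (s i - (A i).card) = s i := fun i => by rw [hAc]; omega
  have hR : (Q \ K).card = ∑ i ∈ S, (s i - (A i).card) := by
    rw [card_sdiff_of_subset hKQ, hs, hKc, ← sum_congr rfl fun i _ => hAs i, sum_add_distrib,
      Nat.add_sub_cancel_left]
  obtain ⟨g, hgS, hgf, hgc⟩ := exists_extend_card_fiber (Q \ K) S _ f hR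
  have g_eq_f : ∀ v ∈ K, g v = f v := fun v hv => hgf v fun h => (mem_sdiff.1 h).2 hv
  refine ⟨g, fun v hv => ?_, fun i hi => ?_, ?_⟩
  · by_cases hvK : v ∈ K
    · obtain ⟨i, hi, hvi⟩ := mem_biUnion.1 hvK
      rwa [g_eq_f v hvK, (mem_A hvi).2]
    · exact hgS v (mem_sdiff.2 ⟨hv, hvK⟩)
  · have fiber_inter : (K.filter fun v => g v = i) = A i := by
      ext v
      refine ⟨fun hv => ?_, fun hv => mem_filter.2 ?_⟩
      · obtain ⟨hvK, hvi⟩ := mem_filter.1 hv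
        obtain ⟨i', -, hvi'⟩ := mem_biUnion.1 hvK
        rwa [← hvi, g_eq_f v hvK, (mem_A hvi').2]
      · have hvK : v ∈ K := mem_biUnion.2 ⟨i, hi, hv⟩
        exact ⟨hvK, (g_eq_f v hvK).trans (mem_A hv).2⟩
    rw [← hAs i, ← hgc i hi, ← fiber_inter,
      ← card_union_of_disjoint (disjoint_filter_filter disjoint_sdiff), ← filter_union,
      union_sdiff_of_subset hKQ]
  · refine (card_le_card (t := Q \ K) fun v hv => ?_).trans (hR.le.trans (sum_le_sum fun i _ => ?_))
    · obtain ⟨hvQ, hv⟩ := mem_filter.1 hv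
      exact mem_sdiff.2 ⟨hvQ, fun hvK => hv (g_eq_f v hvK)⟩
    · rw [hAc]
      omega

lemma sum_Icc_div_add_boole (n : ℕ) {m : ℕ} (hm : 1 ≤ m) :
    ∑ i ∈ Icc 1 m, (n / m + if i ≤ n % m then 1 else 0) = n := by
  have hmod : n % m < m := Nat.mod_lt _ hm
  have : (Icc 1 m).filter (fun i => i ≤ n % m) = Icc 1 (n % m) := by
    ext i
    simp only [mem_filter, mem_Icc]
    omega
  rw [sum_add_distrib, sum_const, ← card_filter, this, Nat.card_Icc, Nat.card_Icc, smul_eq_mul,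
    Nat.add_sub_cancel, Nat.add_sub_cancel]
  exact Nat.div_add_mod _ _

lemma exists_balanced_recolouring (Q : Finset α) (f : α → ℕ) {m : ℕ} (hm : 1 ≤ m) {μ : ℝ}
    (hμ : 0 ≤ μ)
    (hf : ∀ i ∈ Icc 1 m, (Q.card : ℝ) / m - μ ≤ ((Q.filter fun v => f v = i).card : ℝ)) :
    ∃ g : α → ℕ, (∀ v ∈ Q, g v ∈ Icc 1 m) ∧
      (∀ i ∈ Icc 1 m, (Q.filter fun v => g v = i).card = Q.card / m ∨
        (Q.filter fun v => g v = i).card = Q.card / m + 1) ∧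
      ((Q.filter fun v => g v ≠ f v).card : ℝ) ≤ m * (μ + 1) := by
  set s : ℕ → ℕ := fun i => Q.card / m + if i ≤ Q.card % m then 1 else 0
  have hs : ∀ i, s i = Q.card / m ∨ s i = Q.card / m + 1 := fun i => by
    simp only [s]
    split_ifs
    exacts [Or.inr rfl, Or.inl rfl]
  obtain ⟨g, hgS, hgc, hgf⟩ :=
    exists_recolouring Q (Icc 1 m) s f (sum_Icc_div_add_boole Q.card hm).symm
  refine ⟨g, hgS, fun i hi => hgc i hi ▸ hs i, ?_⟩
  have deficit : ∀ i ∈ Icc 1 m, ((s i - (Q.filter fun v => f v = i).card : ℕ) : ℝ) ≤ μ + 1 := by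
    intro i hi
    have hsi : (s i : ℝ) ≤ (Q.card / m : ℕ) + 1 := by
      exact_mod_cast (by rcases hs i with h | h <;> omega : s i ≤ Q.card / m + 1)
    have hdiv : ((Q.card / m : ℕ) : ℝ) ≤ (Q.card : ℝ) / m := Nat.cast_div_le
    have := hf i hi
    rcases le_total (Q.filter fun v => f v = i).card (s i) with h | h
    · rw [Nat.cast_sub h]
      linarith
    · rw [Nat.sub_eq_zero_of_le h, Nat.cast_zero]
      positivity
  calc ((Q.filter fun v => g v ≠ f v).card : ℝ)
      ≤ ∑ i ∈ Icc 1 m, ((s i - (Q.filter fun v => f v = i).card : ℕ) : ℝ) := by exact_mod_cast hgf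
    _ ≤ ∑ i ∈ Icc 1 m, (μ + 1) := sum_le_sum deficit
    _ = m * (μ + 1) := by rw [sum_const, Nat.card_Icc, Nat.add_sub_cancel, nsmul_eq_mul]

end Recolouring

section Pullback

variable {V : Type*} {Q : Finset V} {j k t : ℕ} {a : ℕ → ℕ}

lemma CutNormLE.mono {f : (Fin j → V) → ℝ} {η η' : ℝ} (h : CutNormLE f Q η) (hη : η ≤ η') :
    CutNormLE f Q η' :=
  fun u hu hu1 => (h u hu hu1).trans hη

lemma CutNormLE.of_abs_sub_le [DecidableEq V] {f g : (Fin j → V) → ℝ} {A : Finset V} {η : ℝ}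
    (hg : CutNormLE g Q η)
    (h : ∀ y ∈ tuples (Fin j) Q, |f y - g y| ≤ 2 * if ∃ i, y i ∈ A then 1 else 0) :
    CutNormLE f Q (η + 2 * (j * (A.card / Q.card))) := by
  intro u hu hu1
  have hprod : ∀ y, |∏ i, u i y| ≤ 1 := fun y => by
    rw [abs_prod]
    exact prod_le_one (fun i _ => abs_nonneg _) fun i _ => hu1 i y
  have hfg : |𝔼 y ∈ tuples (Fin j) Q, f y * ∏ i, u i y - 𝔼 y ∈ tuples (Fin j) Q, g y * ∏ i, u i y|
      ≤ 2 * (j * (A.card / Q.card)) := by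
    rw [← expect_sub_distrib]
    calc |𝔼 y ∈ tuples (Fin j) Q, (f y * ∏ i, u i y - g y * ∏ i, u i y)|
        ≤ 𝔼 y ∈ tuples (Fin j) Q, |f y * ∏ i, u i y - g y * ∏ i, u i y| := abs_expect_le ..
      _ ≤ 𝔼 y ∈ tuples (Fin j) Q, 2 * (if ∃ i, y i ∈ A then (1 : ℝ) else 0) :=
        expect_le_expect fun y hy => by
          rw [← sub_mul, abs_mul]
          exact (mul_le_of_le_one_right (abs_nonneg _) (hprod y)).trans (h y hy)
      _ ≤ 2 * (j * (A.card / Q.card)) := by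
        have := expect_exists_mem_le (ι := Fin j) Q A
        rw [Fintype.card_fin] at this
        rw [← mul_expect]
        refine mul_le_mul_of_nonneg_left (le_of_eq_of_le ?_ this) zero_le_two
        congr!
  have := abs_sub_abs_le_abs_sub (𝔼 y ∈ tuples (Fin j) Q, f y * ∏ i, u i y)
    (𝔼 y ∈ tuples (Fin j) Q, g y * ∏ i, u i y)
  have := hg u hu hu1
  linarith

namespace LabFam

variable [DecidableEq V]

/-- The family of partitions of `Q` whose vertex classes and parts are determined by the indices
`idx` and the labels `l`. -/
noncomputable def ofLabels (Q : Finset V) (idx : V → ℕ) (l : ℕ → Finset V → ℕ) : LabFam V where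
  gnd := Q
  vClass v := Q.filter fun u => idx u = idx v
  cls j J :=
    patternSet ⟨⟨Q, fun _ => ∅, fun _ _ => ∅⟩, idx, l⟩ j j (J.image idx)
      (labelsOf ⟨⟨Q, fun _ => ∅, fun _ _ => ∅⟩, idx, l⟩ J)
  vIdx := idx
  lbl := l

lemma classesByIndex_ofLabels (Q : Finset V) (idx : V → ℕ) (l : ℕ → Finset V → ℕ) :
    (ofLabels Q idx l).ClassesByIndex :=
  fun _ _ => rfl

lemma partsByLabel_ofLabels (Q : Finset V) (idx : V → ℕ) (l : ℕ → Finset V → ℕ) (j : ℕ) :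
    (ofLabels Q idx l).PartsByLabel j :=
  fun _ _ => rfl

/-- The family of partitions of `Q` in which a set has the index or label of its image under `φ`
in `P`. -/
noncomputable def pullback (P : LabFam V) (Q : Finset V) (φ : V → V) : LabFam V :=
  ofLabels Q (fun v => P.vIdx (φ v)) fun j I => P.lbl j (I.image φ)

variable {P : LabFam V} {φ : V → V}

lemma follows_pullback_iff (hφ : ∀ v ∈ Q, φ v ∈ P.gnd) {c : Fin j → ℕ} {ℓ : Finset ℕ → ℕ}
    {𝓛 : Finset (Finset (Fin j))} {y : Fin j → V} (hy : ∀ i, y i ∈ Q) :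
    (P.pullback Q φ).Follows c ℓ 𝓛 y ↔ P.Follows c ℓ 𝓛 (φ ∘ y) := by
  refine and_congr (forall_congr' fun i => ?_) (forall₂_congr fun L _ => ?_)
  · exact and_congr_left fun _ => iff_of_true (hy i) (hφ _ (hy i))
  · rw [← Finset.image_image]
    rfl

lemma abs_centeredIndicator_pullback_sub_le (hφ : ∀ v ∈ Q, φ v ∈ P.gnd) {c : Fin j → ℕ}
    {ℓ : Finset ℕ → ℕ} {A A' : Finset V → Prop} {d : ℝ} (hd : 0 ≤ d) (hd1 : d ≤ 1)
    {y : Fin j → V} (hy : ∀ i, y i ∈ Q)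
    (hA : φ ∘ y = y → (A (univ.image y) ↔ A' (univ.image y))) :
    |(P.pullback Q φ).centeredIndicator c ℓ A d y - P.centeredIndicator c ℓ A' d y| ≤
      2 * if ∃ i, y i ∈ Q.filter (fun v => φ v ≠ v) then 1 else 0 := by
  split_ifs with h
  · have h1 := abs_centeredIndicator_le (F := P.pullback Q φ) c ℓ A hd hd1 y
    have h2 := abs_centeredIndicator_le (F := P) c ℓ A' hd hd1 y
    rw [abs_le] at *
    constructor <;> linarith
  · have hφy : φ ∘ y = y := by
      funext i
      by_contra hi
      exact h ⟨i, mem_filter.2 ⟨hy i, hi⟩⟩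
    have hfol := follows_pullback_iff hφ (c := c) (ℓ := ℓ) (𝓛 := labelledSets j (j - 1)) hy
    rw [hφy] at hfol
    simp only [centeredIndicator, hfol, hA hφy, sub_self, abs_zero, mul_zero, le_refl]

lemma IsLabeled.pullback_definedByLabels (hP : P.IsLabeled k a) (hφ : ∀ v ∈ Q, φ v ∈ P.gnd) :
    (P.pullback Q φ).DefinedByLabels k a where
  classes := classesByIndex_ofLabels _ _ _
  parts j _ _ := partsByLabel_ofLabels _ _ _ j
  idx_mem v hv := hP.definedByLabels.idx_mem _ (hφ v hv)
  lbl_mem j hj hjk J hJ := by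
    obtain ⟨hJg, hJc, hJi⟩ := (classesByIndex_ofLabels _ _ _).mem_cross.1 hJ
    have hinj : Set.InjOn φ J := fun u hu v hv h => hJi hu hv (congrArg P.vIdx h)
    refine hP.definedByLabels.lbl_mem j hj hjk _ (hP.classesByIndex.mem_cross.2 ⟨?_, ?_, ?_⟩)
    · exact image_subset_iff.2 fun v hv => hφ v (hJg hv)
    · rw [card_image_of_injOn hinj, hJc]
    · rw [coe_image]
      exact (show Set.InjOn (P.vIdx ∘ φ) J from hJi).image_of_comp

variable {ρ η : ℝ}

lemma LabelsCutNormLE.pullback (hcut : P.LabelsCutNormLE Q k a η) (hφ : ∀ v ∈ Q, φ v ∈ P.gnd)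
    (hρ : ((Q.filter fun v => φ v ≠ v).card : ℝ) / Q.card ≤ ρ) :
    (P.pullback Q φ).LabelsCutNormLE Q k a (η + 2 * (k * ρ)) := by
  intro s hs hsk c ℓ hcℓ b hb hba
  have has : (1 : ℝ) ≤ a s := by exact_mod_cast hb.trans hba
  have hsk' : (s : ℝ) ≤ k := by exact_mod_cast hsk.trans (Nat.sub_le _ _)
  refine ((hcut s hs hsk c ℓ hcℓ b hb hba).of_abs_sub_le fun y hy =>
    abs_centeredIndicator_pullback_sub_le hφ (by positivity)
      (div_le_one_of_le₀ has (by positivity)) (mem_tuples.1 hy) fun h => ?_).mono (by gcongr)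
  change P.lbl s ((univ.image y).image φ) = b ↔ _
  rw [Finset.image_image, h]

lemma DensityCutNormLE.pullback {d : Addr → ℝ} {H : Finset (Finset V)}
    (hcut : P.DensityCutNormLE Q k a d H η) (hd : DensityFun k a d) (hφ : ∀ v ∈ Q, φ v ∈ P.gnd)
    (hρ : ((Q.filter fun v => φ v ≠ v).card : ℝ) / Q.card ≤ ρ) :
    (P.pullback Q φ).DensityCutNormLE Q k a d (H.filter fun e => e ⊆ Q) (η + 2 * (k * ρ)) := by
  intro x hx c hc hcx
  refine ((hcut x hx c hc hcx).of_abs_sub_le fun y hy =>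
    abs_centeredIndicator_pullback_sub_le hφ (hd x hx).1 (hd x hx).2 (mem_tuples.1 hy)
      fun _ => ?_).mono (by gcongr)
  simp only [mem_filter]
  refine and_iff_left (image_subset_iff.2 fun i _ => mem_tuples.1 hy i)

lemma IsLabeled.exists_vIdx_eq (hP : P.IsLabeled k a) (hQ : Q ⊆ P.gnd) {g : V → ℕ}
    (hg : ∀ v ∈ Q, g v ∈ Icc 1 (a 1)) :
    ∃ φ : V → V, (∀ v ∈ Q, φ v ∈ P.gnd ∧ P.vIdx (φ v) = g v) ∧
      ∀ v ∈ Q, g v = P.vIdx v → φ v = v := by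
  have (v : V) : ∃ w, v ∈ Q → (w ∈ P.gnd ∧ P.vIdx w = g v) ∧ (g v = P.vIdx v → w = v) := by
    by_cases hv : v ∈ Q
    · by_cases h : g v = P.vIdx v
      · exact ⟨v, fun _ => ⟨⟨hQ hv, h.symm⟩, fun _ => rfl⟩⟩
      · obtain ⟨w, hw⟩ := mem_image.1 (hP.image_vIdx ▸ hg v hv)
        exact ⟨w, fun _ => ⟨hw, fun h' => absurd h' h⟩⟩
    · exact ⟨v, fun h => absurd h hv⟩
  choose φ hφ using this
  exact ⟨φ, fun v hv => (hφ v hv).1, fun v hv => (hφ v hv).2⟩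

/-- None of the `m` vertex classes of `P` contains much less than its fair share of `Q`. -/
def IsNearlyBalanced (P : LabFam V) (Q : Finset V) (m : ℕ) (η : ℝ) : Prop :=
  ∀ i ∈ Icc 1 m, (Q.card : ℝ) / m - η * Q.card ≤ ((Q.filter fun v => P.vIdx v = i).card : ℝ)

/-- The properties of a random set `Q` of vertices that make `P` induce a family of partitions
of `Q`. -/
structure IsTypical (P : LabFam V) (k : ℕ) (a : ℕ → ℕ) (d : Addr → ℝ) (H : Finset (Finset V))
    (η : ℝ) (Q : Finset V) : Prop where
  balanced : P.IsNearlyBalanced Q (a 1) η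
  labels : P.LabelsCutNormLE Q k a η
  density : P.DensityCutNormLE Q k a d H η

lemma IsTypical.exists_isEquitPartition {d : Addr → ℝ} {H : Finset (Finset V)} {ε γ : ℝ}
    (htyp : P.IsTypical k a d H η Q) (hP : P.IsLabeled k a) (hQ : Q ⊆ P.gnd)
    (hd : DensityFun k a d) (hk : 2 ≤ k) (hka : k ≤ a 1)
    (hat : ∀ i, 1 ≤ i → i ≤ k - 1 → a i ≤ t) (hq : t ≤ Q.card) (hqη : 1 / (Q.card : ℝ) ≤ η)
    (hη : 0 ≤ η) (hε : 0 < ε) (hγ0 : 0 < γ) (hηγ : η + 2 * (k * (t * (2 * η))) ≤ ε ^ 2 * γ)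
    (hγ : γ ≤ (1 / (2 * t : ℝ)) ^ k * (1 / (t : ℝ)) ^ 2 ^ k -
      2 ^ k * (η + 2 * (k * (t * (2 * η))))) :
    ∃ F : LabFam V, F.gnd = Q ∧ F.IsEquitPartition k a ε d (H.filter fun e => e ⊆ Q) := by
  have hat1 := hat 1 le_rfl (by omega)
  have hQ0 : (0 : ℝ) < Q.card := by exact_mod_cast (by omega : 0 < Q.card)
  obtain ⟨g, hg, hgsize, hgmoved⟩ :=
    exists_balanced_recolouring Q P.vIdx (by omega : 1 ≤ a 1) (by positivity) htyp.balanced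
  obtain ⟨φ, hφ, hφg⟩ := hP.exists_vIdx_eq hQ hg
  have hφP : ∀ v ∈ Q, φ v ∈ P.gnd := fun v hv => (hφ v hv).1
  have hmoved : ((Q.filter fun v => φ v ≠ v).card : ℝ) / Q.card ≤ t * (2 * η) := by
    rw [div_le_iff₀ hQ0]
    calc ((Q.filter fun v => φ v ≠ v).card : ℝ)
        ≤ (Q.filter fun v => g v ≠ P.vIdx v).card := by
          exact_mod_cast card_le_card fun v hv => by
            rw [mem_filter] at hv ⊢
            exact ⟨hv.1, fun h => hv.2 (hφg v hv.1 h)⟩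
      _ ≤ a 1 * (η * Q.card + 1) := hgmoved
      _ ≤ t * (η * Q.card + η * Q.card) := by
          gcongr
          exact (div_le_iff₀ hQ0).1 hqη
      _ = t * (2 * η) * Q.card := by ring
  refine ⟨P.pullback Q φ, rfl, (hP.pullback_definedByLabels hφP).isEquitPartition hk hka hat
    (fun i h1 h2 => ?_) hq (by positivity) (htyp.labels.pullback hφP hmoved)
    (htyp.density.pullback hd hφP hmoved) hε hγ0 hηγ hγ⟩
  have fibre_eq : (Q.filter fun v => P.vIdx (φ v) = i) = Q.filter fun v => g v = i :=
    filter_congr fun v hv => by rw [(hφ v hv).2]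
  change (Q.filter fun v => P.vIdx (φ v) = i).card = _ ∨
    (Q.filter fun v => P.vIdx (φ v) = i).card = _
  rw [fibre_eq]
  exact hgsize i (mem_Icc.2 ⟨h1, h2⟩)

end LabFam

end Pullback

section Typical

lemma one_sub_mul_card_le {α : Type*} {S : Finset α} {p : α → Prop} {θ : ℝ}
    (h : ((S.filter fun x => ¬ p x).card : ℝ) ≤ θ * S.card) :
    (1 - θ) * S.card ≤ (S.filter p).card := by
  have : ((S.filter p).card : ℝ) + (S.filter fun x => ¬ p x).card = S.card := by
    exact_mod_cast card_filter_add_card_filter_not p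
  linarith

variable {V : Type*}

lemma CutNormLE.abs_expect_le {f : V → ℝ} {U : Finset V} {η : ℝ}
    (h : CutNormLE (fun y : Fin 1 → V => f (y 0)) U η) : |𝔼 v ∈ U, f v| ≤ η := by
  simpa [expect_tuples_unique] using
    h (fun _ _ => 1) (fun _ _ _ _ => rfl) fun _ _ => abs_one.le

lemma setCutNormLE_of_abs_expect_le {f : V → ℝ} {U : Finset V} {ε : ℝ} (h : |𝔼 v ∈ U, f v| ≤ ε) :
    SetCutNormLE (fun y : Fin 1 → V => f (y 0)) U ε := by
  intro u hu hu1
  rcases isEmpty_or_nonempty V with _ | ⟨⟨v⟩⟩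
  · simpa [expect_tuples_unique, Finset.eq_empty_of_isEmpty U] using (abs_nonneg _).trans h
  · have hconst : ∀ y, ∏ i, u i y = u 0 fun _ => v := fun y => by
      rw [Fin.prod_univ_one]
      exact hu 0 fun i hi => absurd (Subsingleton.elim i 0) hi
    simp only [hconst, ← expect_mul, expect_tuples_unique, abs_mul]
    rcases hu1 0 fun _ => v with h0 | h0 <;> rw [h0]
    · simpa using (abs_nonneg _).trans h
    · simpa using h

/-- Codes for the labellings of the sets of indices at most `t` by labels at most `t`. -/
abbrev LabellingCode (t : ℕ) : Type :=
  (range (t + 1)).powerset → Fin (t + 1)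

/-- The labelling with code `l`; it takes the value `0` outside the range of the code, as the
labels of an `Addr` do. -/
def LabellingCode.labelling {t : ℕ} (l : LabellingCode t) (M : Finset ℕ) : ℕ :=
  if h : M ∈ (range (t + 1)).powerset then l ⟨M, h⟩ else 0

/-- Codes for the test functions at the levels below `k`: a level, an index pattern, a labelling
and a label. -/
abbrev LabelCode (k t : ℕ) : Type :=
  Σ s : Fin k, (Fin s → Fin (t + 1)) × LabellingCode t × Fin (t + 1)

/-- Codes for the addresses of level `k` with an enumeration of their indices. -/
abbrev PolyadCode (k t : ℕ) : Type :=
  (Fin k → Fin (t + 1)) × LabellingCode t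

lemma exists_labelling_eq (t : ℕ) (ℓ : Finset ℕ → ℕ) :
    ∃ l : LabellingCode t, ∀ M, (M ⊆ range (t + 1) → ℓ M ≤ t) →
      (¬ M ⊆ range (t + 1) → ℓ M = 0) → l.labelling M = ℓ M := by
  refine ⟨fun M => ⟨min (ℓ M) t, by omega⟩, fun M hM hM0 => ?_⟩
  by_cases h : M ⊆ range (t + 1)
  · rw [LabellingCode.labelling, dif_pos (mem_powerset.2 h)]
    exact min_eq_left (hM h)
  · rw [LabellingCode.labelling, dif_neg (mt mem_powerset.1 h), hM0 h]

lemma exists_fin_lift {j t : ℕ} {c : Fin j → ℕ} (h : ∀ i, c i ≤ t) :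
    ∃ c' : Fin j → Fin (t + 1), (fun i => (c' i : ℕ)) = c :=
  ⟨fun i => ⟨c i, Nat.lt_succ_of_le (h i)⟩, rfl⟩

lemma image_subset_range {j t : ℕ} {c : Fin j → ℕ} (h : ∀ i, c i ≤ t) :
    univ.image c ⊆ range (t + 1) :=
  image_subset_iff.2 fun i _ => mem_range.2 (Nat.lt_succ_of_le (h i))

variable [DecidableEq V]

namespace LabFam

variable {F P : LabFam V} {k t q : ℕ} {a : ℕ → ℕ} {d : Addr → ℝ} {H : Finset (Finset V)}
  {ε η : ℝ}

lemma centeredIndicator_congr_labelling {j : ℕ} {c : Fin j → ℕ} {ℓ ℓ' : Finset ℕ → ℕ}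
    {A : Finset V → Prop} {δ : ℝ} (hc : Function.Injective c)
    (h : ∀ M ⊆ univ.image c, 2 ≤ M.card → M.card ≤ j - 1 → ℓ M = ℓ' M) :
    F.centeredIndicator c ℓ A δ = F.centeredIndicator c ℓ' A δ := by
  funext y
  have : F.Follows c ℓ (labelledSets j (j - 1)) y ↔ F.Follows c ℓ' (labelledSets j (j - 1)) y := by
    refine and_congr_right fun _ => forall₂_congr fun L hL => ?_
    rw [mem_labelledSets, ← card_image_of_injective L hc] at hL
    rw [h _ (image_subset_image (subset_univ L)) hL.1 hL.2]
  simp only [centeredIndicator, this]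

lemma expect_vIdx_sub {U : Finset V} (hU : U.Nonempty) (b : ℕ) (δ : ℝ) :
    𝔼 v ∈ U, ((if F.vIdx v = b then (1 : ℝ) else 0) - δ) =
      ((U.filter fun v => F.vIdx v = b).card : ℝ) / U.card - δ := by
  rw [expect_sub_distrib, expect_const hU, expect_eq_sum_div_card, sum_boole]

lemma isNearlyBalanced_of_abs_expect_le {Q : Finset V} {m : ℕ} (h : ∀ i ∈ Icc 1 m,
    |𝔼 v ∈ Q, ((if F.vIdx v = i then (1 : ℝ) else 0) - 1 / m)| ≤ η) :
    F.IsNearlyBalanced Q m η := by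
  intro i hi
  rcases Q.eq_empty_or_nonempty with rfl | hQ
  · simp
  · have hQ' : (0 : ℝ) < Q.card := by exact_mod_cast hQ.card_pos
    have hlow := (abs_le.1 (h i hi)).1
    rw [expect_vIdx_sub hQ, neg_le_sub_iff_le_add, ← sub_le_iff_le_add, le_div_iff₀ hQ'] at hlow
    exact (by ring : (Q.card : ℝ) / m - η * Q.card = (1 / m - η) * Q.card).trans_le hlow

lemma IsLabeled.abs_expect_vIdx_le (hP : P.IsLabeled k a)
    (hE : P.toPartFam.IsEquitableE k a (1 / (a 1 : ℝ)) ε) {b : ℕ} (hb : b ∈ Icc 1 (a 1)) :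
    |𝔼 v ∈ P.gnd, ((if P.vIdx v = b then (1 : ℝ) else 0) - 1 / a 1)| ≤ 1 / P.gnd.card := by
  obtain ⟨v, hv, rfl⟩ := mem_image.1 (hP.image_vIdx ▸ hb)
  have ha : 0 < a 1 := (mem_Icc.1 hb).1.trans (mem_Icc.1 hb).2
  have ha' : (0 : ℝ) < a 1 := by exact_mod_cast ha
  have hn : (0 : ℝ) < P.gnd.card := by exact_mod_cast card_pos.2 ⟨v, hv⟩
  have hfloor : ((P.gnd.card / a 1 : ℕ) : ℝ) ≤ P.gnd.card / a 1 := Nat.cast_div_le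
  have hceil : (P.gnd.card : ℝ) / a 1 < ((P.gnd.card / a 1 : ℕ) : ℝ) + 1 := by
    rw [div_lt_iff₀ ha']
    exact_mod_cast (Nat.div_lt_iff_lt_mul ha).1 (Nat.lt_succ_self _)
  rw [expect_vIdx_sub ⟨v, hv⟩, ← hP.classesByIndex v hv,
    show ((P.vClass v).card : ℝ) / P.gnd.card - 1 / a 1 =
      ((P.vClass v).card - P.gnd.card / a 1) / P.gnd.card by field_simp, abs_div, abs_of_pos hn]
  gcongr
  rcases hE.2.1 v hv with h | h <;> rw [h, abs_le] <;> push_cast <;> constructor <;> linarith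

lemma card_not_isNearlyBalanced_le (hP : P.IsEquitPartition k a ε d H) (hk : k ≠ 0) (hat : a 1 ≤ t)
    (hη : 0 < η) (hη1 : η ≤ 1) (hn : 1 / (P.gnd.card : ℝ) ≤ ε) (hq : q ≤ P.gnd.card)
    (hεη : 2 ^ k * ε ≤ η ^ 2 ^ k / 8)
    (hq0 : 16 * (2 * (k : ℝ) + 1) ^ 2 / η ^ 2 ^ k ≤ q) :
    (((P.gnd.powersetCard q).filter fun Q => ¬ P.IsNearlyBalanced Q (a 1) η).card : ℝ) ≤
      Fintype.card (Fin (t + 1)) *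
        (Real.exp (-(tailRate (2 * k) (η ^ 2 ^ k) * q)) * (P.gnd.powersetCard q).card) := by
  refine card_filter_not_le_of_cutNormLE (p := fun b : Fin (t + 1) => (b : ℕ) ∈ Icc 1 (a 1))
    (f := fun b (y : Fin 1 → V) => (if P.vIdx (y 0) = b then (1 : ℝ) else 0) - 1 / a 1)
    (fun Q hQ => isNearlyBalanced_of_abs_expect_le fun i hi =>
      (hQ ⟨i, Nat.lt_succ_of_le ((mem_Icc.1 hi).2.trans hat)⟩ hi).abs_expect_le
        (f := fun v => (if P.vIdx v = i then (1 : ℝ) else 0) - 1 / a 1))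
    (fun _ _ => ⟨one_ne_zero, Nat.one_le_iff_ne_zero.2 hk⟩) (fun b hb y => ?_)
    (fun b hb => setCutNormLE_of_abs_expect_le
      (f := fun v => (if P.vIdx v = b then (1 : ℝ) else 0) - 1 / a 1)
      ((hP.1.abs_expect_vIdx_le hP.2.1 hb).trans hn)) hη hη1 hq hεη hq0
  have ha : (1 : ℝ) ≤ a 1 := by exact_mod_cast (mem_Icc.1 hb).1.trans (mem_Icc.1 hb).2
  have := (div_le_one (by linarith)).2 ha
  have : (0 : ℝ) ≤ 1 / a 1 := by positivity
  rw [abs_le]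
  split_ifs <;> constructor <;> linarith

lemma card_not_labelsCutNormLE_le (hP : P.IsEquitPartition k a ε d H)
    (hat : ∀ i, 1 ≤ i → i ≤ k - 1 → a i ≤ t) (hη : 0 < η) (hη1 : η ≤ 1) (hε : 0 ≤ ε)
    (hq : q ≤ P.gnd.card) (hεη : 2 ^ k * ε ≤ η ^ 2 ^ k / 8)
    (hq0 : 16 * (2 * (k : ℝ) + 1) ^ 2 / η ^ 2 ^ k ≤ q) :
    (((P.gnd.powersetCard q).filter fun Q => ¬ P.LabelsCutNormLE Q k a η).card : ℝ) ≤
      Fintype.card (LabelCode k t) *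
        (Real.exp (-(tailRate (2 * k) (η ^ 2 ^ k) * q)) * (P.gnd.powersetCard q).card) := by
  refine card_filter_not_le_of_cutNormLE
    (p := fun τ : LabelCode k t => 2 ≤ (τ.1 : ℕ) ∧ Function.Injective (fun i => (τ.2.1 i : ℕ)) ∧
      1 ≤ (τ.2.2.2 : ℕ) ∧ (τ.2.2.2 : ℕ) ≤ a τ.1)
    (f := fun τ => P.centeredIndicator (fun i => (τ.2.1 i : ℕ)) τ.2.2.1.labelling
      (fun I => P.lbl τ.1 I = τ.2.2.2) (1 / (a τ.1 : ℝ)))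
    (fun Q hQ s hs hsk c ℓ hcℓ b hb hba => ?_) (fun τ hτ => ⟨by omega, by omega⟩)
    (fun τ hτ => ?_) (fun τ hτ => ?_) hη hη1 hq hεη hq0
  · have hct (i) : c i ≤ t := (hcℓ.idx_le i).trans (hat 1 le_rfl (by omega))
    obtain ⟨c', rfl⟩ := exists_fin_lift hct
    obtain ⟨l, hl⟩ := exists_labelling_eq t ℓ
    have := hQ ⟨⟨s, by omega⟩, c', l, b, Nat.lt_succ_of_le (hba.trans (hat s (by omega) hsk))⟩
      ⟨hs, hcℓ.injective, hb, hba⟩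
    dsimp only at this
    rwa [centeredIndicator_congr_labelling hcℓ.injective fun M hM hM2 hMs => hl M
      (fun _ => (hcℓ.lbl_le M hM hM2 hMs).trans (hat _ (by omega) (by omega)))
      fun h => absurd (hM.trans (image_subset_range hct)) h] at this
  · have : (1 : ℝ) ≤ a τ.1 := by exact_mod_cast hτ.2.2.1.trans hτ.2.2.2
    exact abs_centeredIndicator_le _ _ _ (by positivity) ((div_le_one (by linarith)).2 this)
  · rw [← centeredIndicator_labelSet hτ.2.1]
    exact hP.1.setCutNormLE_labelSet hε hP.2.1.2.2 hτ.1 (by omega) hτ.2.1 hτ.2.2.1 hτ.2.2.2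

lemma card_not_densityCutNormLE_le (hP : P.IsEquitPartition k a ε d H) (hd : DensityFun k a d)
    (hk : 2 ≤ k) (hat : ∀ i, 1 ≤ i → i ≤ k - 1 → a i ≤ t) (hη : 0 < η) (hη1 : η ≤ 1) (hε : 0 ≤ ε)
    (hq : q ≤ P.gnd.card) (hεη : 2 ^ k * ε ≤ η ^ 2 ^ k / 8)
    (hq0 : 16 * (2 * (k : ℝ) + 1) ^ 2 / η ^ 2 ^ k ≤ q) :
    (((P.gnd.powersetCard q).filter fun Q => ¬ P.DensityCutNormLE Q k a d H η).card : ℝ) ≤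
      Fintype.card (PolyadCode k t) *
        (Real.exp (-(tailRate (2 * k) (η ^ 2 ^ k) * q)) * (P.gnd.powersetCard q).card) := by
  have hF := hP.1.classesByIndex
  let addr (τ : PolyadCode k t) : Addr := (univ.image fun i => (τ.1 i : ℕ), τ.2.labelling)
  refine card_filter_not_le_of_cutNormLE (j := fun _ => k)
    (p := fun τ : PolyadCode k t => Function.Injective (fun i => (τ.1 i : ℕ)) ∧
      IsAddress k (k - 1) a (addr τ))
    (f := fun τ => P.centeredIndicator (fun i => (τ.1 i : ℕ)) τ.2.labelling (· ∈ H) (d (addr τ)))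
    (fun Q hQ => ?_) (fun _ _ => ⟨by omega, le_rfl⟩) (fun τ hτ => ?_) (fun τ hτ => ?_)
    hη hη1 hq hεη hq0
  · rintro ⟨X, ℓ⟩ hx c hc rfl
    have hct (i) : c i ≤ t :=
      (hx.2.1 _ (mem_image_of_mem c (mem_univ i))).2.trans (hat 1 le_rfl (by omega))
    obtain ⟨c', rfl⟩ := exists_fin_lift hct
    obtain ⟨l, hl⟩ := exists_labelling_eq t ℓ
    obtain rfl : l.labelling = ℓ := funext fun M => hl M
      (fun _ => by
        by_cases hM : M ⊆ univ.image (fun i => (c' i : ℕ)) ∧ 2 ≤ M.card ∧ M.card ≤ k - 1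
        · exact (hx.2.2.1 M hM.1 hM.2.1 hM.2.2).2.trans (hat _ (by omega) hM.2.2)
        · exact (hx.2.2.2 M hM).trans_le (Nat.zero_le t))
      fun h => hx.2.2.2 M fun hM => h (hM.1.trans (image_subset_range hct))
    exact hQ (c', l) ⟨hc, hx⟩
  · exact abs_centeredIndicator_le _ _ _ (hd _ hτ.2).1 (hd _ hτ.2).2
  · have hreg := hP.2.2 _ hτ.2
    rw [hF.polyAt_eq (by omega)] at hreg
    exact setCutNormLE_centeredIndicator hF hk hτ.1 hε (hd _ hτ.2).1 (hd _ hτ.2).2 hreg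

/-- The number of test functions that decide whether a set is typical. -/
def numTests (k t : ℕ) : ℕ :=
  Fintype.card (Fin (t + 1)) + Fintype.card (LabelCode k t) + Fintype.card (PolyadCode k t)

lemma card_not_isTypical_le (hP : P.IsEquitPartition k a ε d H) (hd : DensityFun k a d)
    (hk : 2 ≤ k) (hat : ∀ i, 1 ≤ i → i ≤ k - 1 → a i ≤ t) (hη : 0 < η) (hη1 : η ≤ 1)
    (hn : 1 / (P.gnd.card : ℝ) ≤ ε) (hq : q ≤ P.gnd.card) (hεη : 2 ^ k * ε ≤ η ^ 2 ^ k / 8)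
    (hq0 : 16 * (2 * (k : ℝ) + 1) ^ 2 / η ^ 2 ^ k ≤ q) :
    (((P.gnd.powersetCard q).filter fun Q => ¬ P.IsTypical k a d H η Q).card : ℝ) ≤
      numTests k t *
        (Real.exp (-(tailRate (2 * k) (η ^ 2 ^ k) * q)) * (P.gnd.powersetCard q).card) := by
  have hε : 0 ≤ ε := le_trans (by positivity) hn
  have hbalanced :=
    card_not_isNearlyBalanced_le hP (by omega) (hat 1 le_rfl (by omega)) hη hη1 hn hq hεη hq0
  have hlabels := card_not_labelsCutNormLE_le hP hat hη hη1 hε hq hεη hq0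
  have hdensity := card_not_densityCutNormLE_le hP hd hk hat hη hη1 hε hq hεη hq0
  rw [numTests, Nat.cast_add, Nat.cast_add, add_mul, add_mul]
  refine le_trans ?_ (add_le_add (add_le_add hbalanced hlabels) hdensity)
  norm_cast
  refine (card_le_card fun Q hQ => ?_).trans
    ((card_union_le _ _).trans (Nat.add_le_add_right (card_union_le _ _) _))
  obtain ⟨hQ, hbad⟩ := mem_filter.1 hQ
  simp only [mem_union, mem_filter, hQ, true_and]
  by_contra! hcon
  exact hbad ⟨hcon.1.1, hcon.1.2, hcon.2⟩

end LabFam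

end Typical

section Constants

lemma exists_cutNorm_threshold {k t : ℕ} (ht : 1 ≤ t) {ε : ℝ} (hε : 0 < ε) :
    ∃ η γ : ℝ, 0 < η ∧ η ≤ 1 ∧ 0 < γ ∧ η + 2 * (k * (t * (2 * η))) ≤ ε ^ 2 * γ ∧
      γ ≤ (1 / (2 * t : ℝ)) ^ k * (1 / (t : ℝ)) ^ 2 ^ k -
        2 ^ k * (η + 2 * (k * (t * (2 * η)))) := by
  have : (0 : ℝ) < t := by exact_mod_cast ht
  set β : ℝ := (1 / (2 * t : ℝ)) ^ k * (1 / (t : ℝ)) ^ 2 ^ k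
  have hβ0 : 0 < β := by positivity
  have hlim (C : ℝ) : Filter.Tendsto (fun η : ℝ => C * (η + 2 * (k * (t * (2 * η)))))
      (nhdsWithin 0 (Set.Ioi 0)) (nhds 0) := by
    refine tendsto_nhdsWithin_of_tendsto_nhds (Continuous.tendsto' (by fun_prop) _ _ ?_)
    simp
  have hsmall := (hlim 1).eventually_le_const (show 0 < ε ^ 2 * (β / 2) by positivity)
  have hcliques := (hlim (2 ^ k)).eventually_le_const (half_pos hβ0)
  have hunit : ∀ᶠ η : ℝ in nhdsWithin 0 (Set.Ioi 0), η ∈ Set.Ioc 0 1 :=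
    Ioc_mem_nhdsGT zero_lt_one
  obtain ⟨η, hη, h1, h2⟩ := (hunit.and (hsmall.and hcliques)).exists
  exact ⟨η, β / 2, hη.1, hη.2, half_pos hβ0, by rwa [one_mul] at h1, by linarith⟩

lemma mul_exp_neg_le_exp_neg {N c q x : ℝ} (hc : 0 < c) (hq : 0 ≤ q) (hN : 2 * N / c ≤ q)
    (hx : x ≤ c / 2) : N * Real.exp (-(c * q)) ≤ Real.exp (-(x * q)) := by
  have hNexp : N ≤ Real.exp (c / 2 * q) := by
    rw [div_le_iff₀ hc] at hN
    linarith [Real.add_one_le_exp (c / 2 * q)]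
  calc N * Real.exp (-(c * q)) ≤ Real.exp (c / 2 * q) * Real.exp (-(c * q)) := by gcongr
    _ = Real.exp (-(c / 2 * q)) := by rw [← Real.exp_add]; ring_nf
    _ ≤ Real.exp (-(x * q)) := by gcongr

lemma exists_sampling_threshold (k : ℕ) (N : ℝ) {δ : ℝ} (hδ : 0 < δ) :
    ∃ ε₁ : ℝ, 0 < ε₁ ∧ ∀ ε : ℝ, 0 < ε → ε ≤ ε₁ → 2 ^ k * ε ≤ δ / 8 ∧ ∀ m : ℝ, ∃ q₀ : ℕ, ∀ q : ℕ,
      q₀ ≤ q → m ≤ q ∧ 1 / ε ≤ q ∧ 16 * (2 * (k : ℝ) + 1) ^ 2 / δ ≤ q ∧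
        N * Real.exp (-(tailRate (2 * k) δ * q)) ≤ Real.exp (-(ε ^ 3 * q)) := by
  have hc : 0 < tailRate (2 * k) δ := by unfold tailRate; positivity
  refine ⟨min (δ / 8 / 2 ^ k) (min 1 (tailRate (2 * k) δ / 2)), by positivity,
    fun ε hε hε₁ => ⟨?_, fun m => ?_⟩⟩
  · rw [mul_comm, ← le_div_iff₀ (by positivity)]
    exact hε₁.trans (min_le_left _ _)
  · have hε1 : ε ≤ 1 := hε₁.trans ((min_le_right _ _).trans (min_le_left _ _))
    have hεc : ε ^ 3 ≤ tailRate (2 * k) δ / 2 := (pow_le_of_le_one hε.le hε1 three_ne_zero).trans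
      (hε₁.trans ((min_le_right _ _).trans (min_le_right _ _)))
    obtain ⟨q₀, hq₀⟩ := exists_nat_ge (max (max m (1 / ε))
      (max (16 * (2 * (k : ℝ) + 1) ^ 2 / δ) (2 * N / tailRate (2 * k) δ)))
    refine ⟨q₀, fun q hq => ?_⟩
    have hq' := hq₀.trans (Nat.cast_le.2 hq)
    simp only [max_le_iff] at hq'
    exact ⟨hq'.1.1, hq'.1.2, hq'.2.1, mul_exp_neg_le_exp_neg hc (by positivity) hq'.2.2 hεc⟩

end Constants

theorem random_sample_equitable_partition_general {k t : ℕ} (hk : 2 ≤ k) (ht : 1 ≤ t) {ε' : ℝ}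
    (hε' : 0 < ε') :
    ∃ ε₁ : ℝ, 0 < ε₁ ∧ ∀ ε : ℝ, 0 < ε → ε ≤ ε₁ → ∃ q₀ : ℕ, ∀ q : ℕ, q₀ ≤ q →
    ∀ (V : Type*) [DecidableEq V] (a : ℕ → ℕ), (∀ i, 1 ≤ i → i ≤ k - 1 → a i ≤ t) →
    ∀ d : Addr → ℝ, DensityFun k a d → ∀ (H : Finset (Finset V)) (P : LabFam V),
    P.IsEquitPartition k a ε d H → q ≤ P.gnd.card →
    (1 - Real.exp (-(ε ^ 3 * q))) * ((P.gnd.powersetCard q).card : ℝ) ≤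
      (((P.gnd.powersetCard q).filter fun Q =>
        ∃ F : LabFam V, F.gnd = Q ∧
          F.IsEquitPartition k a ε' d (H.filter fun e => e ⊆ Q)).card : ℝ) := by
  obtain ⟨η, γ, hη, hη1, hγ0, hηγ, hγ⟩ := exists_cutNorm_threshold (k := k) ht hε'
  obtain ⟨ε₁, hε₁, hthr⟩ :=
    exists_sampling_threshold k (LabFam.numTests k t) (show 0 < η ^ 2 ^ k by positivity)
  refine ⟨ε₁, hε₁, fun ε hε hεε₁ => ?_⟩
  obtain ⟨hεη, hlarge⟩ := hthr ε hε hεε₁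
  obtain ⟨q₀, hq₀⟩ := hlarge (max t (1 / η))
  refine ⟨q₀, fun q hq V _ a hat d hd H P hP hqn => ?_⟩
  obtain ⟨hqtη, hqε, hqδ, htail⟩ := hq₀ q hq
  obtain ⟨hqt, hqη⟩ := max_le_iff.1 hqtη
  have one_div_le_of {x y : ℝ} (hy : 0 < y) (h : 1 / y ≤ x) : 1 / x ≤ y :=
    (one_div_le ((one_div_pos.2 hy).trans_le h) hy).2 h
  have hgnd : 1 / (P.gnd.card : ℝ) ≤ ε := one_div_le_of hε (hqε.trans (by exact_mod_cast hqn))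
  have hbad := LabFam.card_not_isTypical_le (t := t) hP hd hk hat hη hη1 hgnd hqn hεη hqδ
  rw [← mul_assoc] at hbad
  refine (one_sub_mul_card_le (hbad.trans (by gcongr))).trans (Nat.cast_le.2 (card_le_card ?_))
  intro Q hQ
  obtain ⟨hQ, htyp⟩ := mem_filter.1 hQ
  obtain ⟨hQP, rfl⟩ := mem_powersetCard.1 hQ
  exact mem_filter.2 ⟨hQ, htyp.exists_isEquitPartition hP.1 hQP hd hk hP.1.1.2.2.2.2.1 hat
    (by exact_mod_cast hqt) (one_div_le_of hη hqη) hη.le hε' hγ0 hηγ hγ⟩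

/-- Lemma: with high probability, a uniformly random q-subset of the vertex set of a
hypergraph admitting an (ε, a, d)-equitable partition admits an (ε', a, d)-equitable
partition of the induced hypergraph. -/
theorem random_sample_equitable_partition :
    ∀ k t : ℕ, 2 ≤ k → 1 ≤ t →
    ∃ ε'₀ : ℝ, 0 < ε'₀ ∧ ∀ ε' : ℝ, 0 < ε' → ε' ≤ ε'₀ →
    ∃ ε₁ : ℝ, 0 < ε₁ ∧ ∀ ε : ℝ, 0 < ε → ε ≤ ε₁ →
    ∃ q₀ : ℕ, ∀ q n : ℕ, q₀ ≤ q → q < n →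
    ∀ (V : Type) [DecidableEq V], ∀ W : Finset V, W.card = n →
    ∀ a : ℕ → ℕ, (∀ i, 1 ≤ i → i ≤ k - 1 → 1 ≤ a i ∧ a i ≤ t) →
    ∀ d : Addr → ℝ, DensityFun k a d →
    ∀ H : Finset (Finset V), IsKGraph W k H →
    ∀ P : LabFam V, P.gnd = W → P.IsEquitPartition k a ε d H →
    (1 - Real.exp (-(ε ^ 3 * q))) * ((W.powersetCard q).card : ℝ) ≤
      (((W.powersetCard q).filter fun Q =>
        ∃ Ff : LabFam V, Ff.gnd = Q ∧
          Ff.IsEquitPartition k a ε' d (H.filter fun e => e ⊆ Q)).card : ℝ) := by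
  intro k t hk ht
  refine ⟨1, one_pos, fun ε' hε' _ => ?_⟩
  obtain ⟨ε₁, hε₁, h⟩ := random_sample_equitable_partition_general hk ht hε'
  refine ⟨ε₁, hε₁, fun ε hε hεε₁ => ?_⟩
  obtain ⟨q₀, hq₀⟩ := h ε hε hεε₁
  refine ⟨q₀, ?_⟩
  rintro q _ hq hqn V _ _ rfl a hat d hd H _ P rfl hP
  exact hq₀ q hq V a (fun i h1 hi => (hat i h1 hi).2) d hd H P hP hqn.le

end HypReg
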